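/- arXiv:0909.2388 — 2 statements merged into one kernel-verified Lean document; each statement's English description precedes it below -/
import Mathlib

section
/- For any nonempty finite set A of integers and any positive integer n, E_A(n) = D_A(n) + n − 1. -/
open Finset

theorem scherk {G : Type*} [AddCommGroup G] [DecidableEq G] (m : ℕ) :
    ∀ (A B : Finset G), B.card ≤ m → (0:G) ∈ A → (0:G) ∈ B →
      (∀ a ∈ A, ∀ b ∈ B, a + b = 0 → b = 0) →
      ∃ C : Finset G, (∀ c ∈ C, ∃ a ∈ A, ∃ b ∈ B, a + b = c) ∧ A.card + B.card ≤ C.card + 1 := by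
  induction m with
  | zero =>
    intro A B hB _ h0
    have : B = ∅ := by simpa using hB
    simp [this] at h0
  | succ m ih =>
    intro A B hB hA0 hB0 htriv
    by_cases hb : ∃ b ∈ B, b ≠ 0
    · obtain ⟨b, hbB, hb0⟩ := hb
      -- exists a ∈ A with a + b ∉ A
      have hex : ∃ a ∈ A, a + b ∉ A := by
        by_contra hcon
        push Not at hcon
        have himg : A.image (fun a => a + b) = A := by
          apply Finset.eq_of_subset_of_card_le
          · intro z hz
            obtain ⟨a, ha, rfl⟩ := Finset.mem_image.1 hz
            exact hcon a ha
          · rw [Finset.card_image_of_injective _ (add_left_injective b)]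
        have : (0:G) ∈ A.image (fun a => a + b) := by rw [himg]; exact hA0
        obtain ⟨a, ha, hab⟩ := Finset.mem_image.1 this
        exact hb0 (htriv a ha b hbB hab)
      obtain ⟨a, haA, hab⟩ := hex
      set B1 := B.filter (fun b => a + b ∉ A) with hB1
      set B' := B.filter (fun b => a + b ∈ A) with hB'
      set A' := A ∪ B1.image (fun b => a + b) with hA'
      have hcards : B'.card + B1.card = B.card := by
        rw [hB1, hB']; exact Finset.card_filter_add_card_filter_not (fun b => a + b ∈ A)
      have hB1pos : 0 < B1.card := Finset.card_pos.2 ⟨b, by simp [hB1, hbB, hab]⟩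
      have hA'card : A'.card = A.card + B1.card := by
        rw [hA', Finset.card_union_of_disjoint, Finset.card_image_of_injective _ (add_right_injective a)]
        rw [Finset.disjoint_left]
        intro z hz hz'
        obtain ⟨c, hc, rfl⟩ := Finset.mem_image.1 hz'
        exact (Finset.mem_filter.1 hc).2 hz
      have h0B1 : ∀ b ∈ B1, b ≠ 0 := by
        rintro b hb rfl
        have := (Finset.mem_filter.1 hb).2
        simp at this; exact this haA
      obtain ⟨C, hC, hCc⟩ := ih A' B' (by omega) (by simp [hA', hA0]) (by simp [hB', hB0, haA]) (by
        intro p hp q hq hpq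
        have hq' := Finset.mem_filter.1 hq
        rcases Finset.mem_union.1 hp with hp | hp
        · exact htriv p hp q hq'.1 hpq
        · obtain ⟨c, hc, rfl⟩ := Finset.mem_image.1 hp
          exfalso
          apply h0B1 c hc
          refine htriv (a + q) hq'.2 c (Finset.mem_filter.1 hc).1 ?_
          rw [← hpq]; abel)
      refine ⟨C, ?_, by omega⟩
      intro c hc
      obtain ⟨p, hp, q, hq, rfl⟩ := hC c hc
      have hq' := Finset.mem_filter.1 hq
      rcases Finset.mem_union.1 hp with hp | hp
      · exact ⟨p, hp, q, hq'.1, rfl⟩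
      · obtain ⟨c', hc', rfl⟩ := Finset.mem_image.1 hp
        exact ⟨a + q, hq'.2, c', (Finset.mem_filter.1 hc').1, by abel⟩
    · push Not at hb
      have : B = {0} := by
        ext z; simp; exact ⟨hb z, fun h => h ▸ hB0⟩
      exact ⟨A, fun c hc => ⟨c, hc, 0, hB0, by simp⟩, by simp [this]⟩

/-- sorted enumeration -/
theorem sorted_enum (I : Finset ℕ) (f : ℕ → ℕ) (h : ℕ)
    (hf : ∀ v, (I.filter (fun i => f i = v)).card ≤ h) :
    ∃ e : ℕ → ℕ, Set.InjOn e (Set.Iio I.card) ∧ (∀ p < I.card, e p ∈ I) ∧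
      (∀ i ∈ I, ∃ p < I.card, e p = i) ∧
      ∀ p q, q < I.card → p + h ≤ q → f (e p) ≠ f (e q) := by
  classical
  let g : Fin I.card → ℕ := fun p => (I.equivFin.symm p : ℕ)
  have gI : ∀ p, g p ∈ I := fun p => (I.equivFin.symm p).2
  have ginj : Function.Injective g := fun p q hpq => by
    have := Subtype.ext hpq
    simpa using this
  let σ := Tuple.sort (f ∘ g)
  have hmono : Monotone ((f ∘ g) ∘ σ) := Tuple.monotone_sort _
  let e : ℕ → ℕ := fun p => if hp : p < I.card then g (σ ⟨p, hp⟩) else 0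
  have he : ∀ p (hp : p < I.card), e p = g (σ ⟨p, hp⟩) := fun p hp => by simp [e, hp]
  have einj : Set.InjOn e (Set.Iio I.card) := by
    intro p hp q hq hpq
    rw [he p hp, he q hq] at hpq
    have := σ.injective (ginj hpq)
    exact congrArg Fin.val this
  refine ⟨e, einj, ?_, ?_, ?_⟩
  · intro p hp; rw [he p hp]; exact gI _
  · intro i hi
    refine ⟨(σ.symm (I.equivFin ⟨i, hi⟩)).1, (σ.symm (I.equivFin ⟨i, hi⟩)).2, ?_⟩
    rw [he _ (σ.symm (I.equivFin ⟨i, hi⟩)).2]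
    simp [g]
  · intro p q hq hpq heq
    have hp : p < I.card := by omega
    have hsub : (Finset.Icc p q).image e ⊆ I.filter (fun i => f i = f (e q)) := by
      intro z hz
      obtain ⟨u, hu, rfl⟩ := Finset.mem_image.1 hz
      have hu' := Finset.mem_Icc.1 hu
      have huc : u < I.card := by omega
      rw [Finset.mem_filter]
      refine ⟨by rw [he u huc]; exact gI _, ?_⟩
      have h1 : f (e p) ≤ f (e u) := by
        rw [he p hp, he u huc]; exact hmono (by simpa using hu'.1)
      have h2 : f (e u) ≤ f (e q) := by
        rw [he q hq, he u huc]; exact hmono (by simpa using hu'.2)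
      omega
    have hc := (Finset.card_le_card hsub).trans (hf _)
    rw [Finset.card_image_of_injOn, Nat.card_Icc] at hc
    · omega
    · intro a ha b hb hab
      simp at ha hb
      exact einj (by simp; omega) (by simp; omega) hab

theorem davenport (k : ℕ) (hk : 0 < k) (I : Finset ℕ) (u : ℕ → ℤ) (hI : k ≤ I.card) :
    ∃ s ⊆ I, s.Nonempty ∧ (k:ℤ) ∣ ∑ i ∈ s, u i := by
  classical
  obtain ⟨e, einj, eI, -, -⟩ := sorted_enum I (fun _ => 0) I.card (fun v => Finset.card_filter_le _ _)
  have : NeZero k := ⟨hk.ne'⟩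
  have hcard : (Finset.univ : Finset (ZMod k)).card < (Finset.range (k+1)).card := by
    simp [ZMod.card]
  obtain ⟨p, hp, q, hq, hne, hpq⟩ := Finset.exists_ne_map_eq_of_card_lt_of_maps_to hcard
    (f := fun p => ((∑ j ∈ Finset.range p, u (e j) : ℤ) : ZMod k)) (fun _ _ => Finset.mem_univ _)
  have key : ∀ p q : ℕ, p < q → q < k + 1 →
      ((∑ j ∈ Finset.range p, u (e j) : ℤ) : ZMod k) = ((∑ j ∈ Finset.range q, u (e j) : ℤ) : ZMod k) →
      ∃ s ⊆ I, s.Nonempty ∧ (k:ℤ) ∣ ∑ i ∈ s, u i := by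
    intro p q hlt hq hpq
    refine ⟨(Finset.Ico p q).image e, ?_, ?_, ?_⟩
    · intro z hz
      obtain ⟨j, hj, rfl⟩ := Finset.mem_image.1 hz
      simp at hj
      exact eI _ (by omega)
    · simpa using hlt
    · rw [Finset.sum_image]
      · rw [← ZMod.intCast_zmod_eq_zero_iff_dvd, Finset.sum_Ico_eq_sub _ hlt.le]
        push_cast at hpq ⊢
        rw [hpq, sub_self]
      · intro a ha b hb hab
        simp at ha hb
        exact einj (by simp; omega) (by simp; omega) hab
  simp at hp hq
  rcases lt_or_gt_of_ne hne with h | h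
  · exact key p q h (by omega) hpq
  · exact key q p h (by omega) hpq.symm

theorem short_block (k h : ℕ) (hk : 0 < k) (hh : 0 < h) (N : Finset ℕ) (u : ℕ → ℤ)
    (hu : ∀ i ∈ N, ¬ (k:ℤ) ∣ u i)
    (hm : ∀ v : ℤ, (N.filter (fun i => (k:ℤ) ∣ u i - v)).card ≤ h) (hN : k ≤ N.card) :
    ∃ B ⊆ N, B.Nonempty ∧ B.card ≤ h ∧ (k:ℤ) ∣ ∑ i ∈ B, u i := by
  classical
  have : NeZero k := ⟨hk.ne'⟩
  by_contra hcon
  push Not at hcon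
  obtain ⟨e, einj, eI, -, hsep⟩ := sorted_enum N (fun i => ((u i : ℤ) : ZMod k).val) h (by
    intro v
    refine le_trans (Finset.card_le_card ?_) (hm (v:ℤ))
    intro i hi
    rw [Finset.mem_filter] at hi ⊢
    refine ⟨hi.1, ?_⟩
    rw [← ZMod.intCast_zmod_eq_zero_iff_dvd]
    push_cast
    rw [← hi.2]
    simp)
  -- no zero-sum position set
  have hP : ∀ P : Finset ℕ, P ⊆ Finset.range N.card → P.Nonempty → P.card ≤ h →
      ((∑ p ∈ P, u (e p) : ℤ) : ZMod k) ≠ 0 := by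
    intro P hP hne hc h0
    have hinj : Set.InjOn e (P : Set ℕ) := by
      intro a ha b hb hab
      exact einj (by simpa using hP ha) (by simpa using hP hb) hab
    apply hcon (P.image e)
    · intro z hz
      obtain ⟨p, hp, rfl⟩ := Finset.mem_image.1 hz
      exact eI _ (by simpa using hP hp)
    · simpa using hne
    · rw [Finset.card_image_of_injOn hinj]; exact hc
    · rw [Finset.sum_image hinj]
      exact (ZMod.intCast_zmod_eq_zero_iff_dvd _ _).1 h0
  have main : ∀ j ≤ h, ∃ C : Finset (ZMod k), (0:ZMod k) ∈ C ∧
      (∀ c ∈ C, ∃ P ⊆ (Finset.range N.card).filter (fun p => p % h < j), P.card ≤ j ∧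
        ((∑ p ∈ P, u (e p) : ℤ) : ZMod k) = c) ∧
      1 + ((Finset.range N.card).filter (fun p => p % h < j)).card ≤ C.card := by
    intro j
    induction j with
    | zero =>
      intro _
      exact ⟨{0}, by simp, fun c hc => ⟨∅, by simp, by simp, by simpa using (Finset.mem_singleton.1 hc).symm⟩, by simp⟩
    | succ j ih =>
      intro hj
      obtain ⟨C, hC0, hC, hCc⟩ := ih (by omega)
      set L := (Finset.range N.card).filter (fun p => p % h = j) with hL
      have hLinj : Set.InjOn (fun p => ((u (e p) : ℤ) : ZMod k)) (L : Set ℕ) := by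
        have hlt : ∀ p ∈ L, ∀ q ∈ L, p < q → ((u (e p) : ℤ) : ZMod k) ≠ ((u (e q) : ℤ) : ZMod k) := by
          intro p hp q hq hpq heq
          rw [hL, Finset.mem_filter, Finset.mem_range] at hp hq
          refine hsep p q hq.1 ?_ (by simp only [heq])
          have h1 := Nat.div_add_mod p h
          have h2 := Nat.div_add_mod q h
          have h3 : p / h < q / h := by
            by_contra h4
            have := Nat.mul_le_mul_left h (not_lt.1 h4)
            omega
          have := Nat.mul_le_mul_left h (Nat.succ_le_of_lt h3)
          rw [Nat.mul_succ] at this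
          omega
        intro p hp q hq hpq
        rcases lt_trichotomy p q with h1 | h1 | h1
        · exact absurd hpq (hlt p hp q hq h1)
        · exact h1
        · exact absurd hpq.symm (hlt q hq p hp h1)
      set Bj := insert (0:ZMod k) (L.image (fun p => ((u (e p) : ℤ) : ZMod k))) with hBj
      have hBc : Bj.card = L.card + 1 := by
        rw [hBj, Finset.card_insert_of_notMem, Finset.card_image_of_injOn hLinj]
        intro h0
        obtain ⟨p, hp, hp0⟩ := Finset.mem_image.1 h0
        have hp' := Finset.mem_range.1 (Finset.mem_filter.1 hp).1
        exact hu _ (eI p hp') ((ZMod.intCast_zmod_eq_zero_iff_dvd _ _).1 hp0)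
      have hcomb : ∀ c ∈ C, ∀ p ∈ L, ∃ P ⊆ (Finset.range N.card).filter (fun p => p % h < j + 1),
          P.card ≤ j + 1 ∧ P.Nonempty ∧ ((∑ p ∈ P, u (e p) : ℤ) : ZMod k) = c + ((u (e p) : ℤ) : ZMod k) := by
        intro c hc p hp
        obtain ⟨P, hPs, hPc, hPsum⟩ := hC c hc
        rw [hL, Finset.mem_filter, Finset.mem_range] at hp
        have hpP : p ∉ P := fun h' => by
          have := (Finset.mem_filter.1 (hPs h')).2
          omega
        refine ⟨insert p P, ?_, ?_, by simp, ?_⟩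
        · intro q hq
          rcases Finset.mem_insert.1 hq with rfl | hq
          · simp; omega
          · have := Finset.mem_filter.1 (hPs hq)
            simp at this ⊢; omega
        · rw [Finset.card_insert_of_notMem hpP]; omega
        · rw [Finset.sum_insert hpP, Int.cast_add, hPsum, add_comm]
      have hmono : (Finset.range N.card).filter (fun p => p % h < j) ⊆ (Finset.range N.card).filter (fun p => p % h < j + 1) := by
        intro q hq
        simp at hq ⊢; omega
      have hrep : ∀ a ∈ C, ∀ b ∈ Bj, ∃ P ⊆ (Finset.range N.card).filter (fun p => p % h < j + 1),
          P.card ≤ j + 1 ∧ ((∑ p ∈ P, u (e p) : ℤ) : ZMod k) = a + b := by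
        intro a ha b hb
        rcases Finset.mem_insert.1 hb with rfl | hb
        · obtain ⟨P, h1, h2, h3⟩ := hC a ha
          exact ⟨P, h1.trans hmono, by omega, by rw [h3, add_zero]⟩
        · obtain ⟨p, hp, rfl⟩ := Finset.mem_image.1 hb
          obtain ⟨P, h1, h2, -, h3⟩ := hcomb a ha p hp
          exact ⟨P, h1, h2, h3⟩
      obtain ⟨C', hC', hC'c⟩ := scherk Bj.card C Bj le_rfl hC0 (by simp [hBj]) (by
        intro a ha b hb hab
        rcases Finset.mem_insert.1 hb with rfl | hb
        · rfl
        · exfalso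
          obtain ⟨p, hp, rfl⟩ := Finset.mem_image.1 hb
          obtain ⟨P, h1, h2, h2', h3⟩ := hcomb a ha p hp
          exact hP P (h1.trans (Finset.filter_subset _ _)) h2' (by omega) (h3.trans hab))
      refine ⟨insert 0 C', by simp, ?_, ?_⟩
      · intro c hc
        rcases Finset.mem_insert.1 hc with rfl | hc
        · exact ⟨∅, by simp, by simp, by simp⟩
        · obtain ⟨a, ha, b, hb, rfl⟩ := hC' c hc
          exact hrep a ha b hb
      · have h1 := Finset.card_le_card (Finset.subset_insert 0 C')
        have h2 : ((Finset.range N.card).filter (fun p => p % h < j + 1)).card ≤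
            ((Finset.range N.card).filter (fun p => p % h < j)).card + L.card := by
          refine le_trans (Finset.card_le_card ?_) (Finset.card_union_le _ _)
          intro q hq
          simp [hL] at hq ⊢; omega
        omega
  obtain ⟨C, -, -, hC⟩ := main h le_rfl
  have h1 : (Finset.range N.card).filter (fun p => p % h < h) = Finset.range N.card := by
    apply Finset.filter_true_of_mem
    intro p _
    exact Nat.mod_lt _ hh
  rw [h1, Finset.card_range] at hC
  have h2 := Finset.card_le_univ C
  rw [ZMod.card] at h2
  omega

theorem growth {G : Type*} [AddCommGroup G] [DecidableEq G] [Fintype G] (B : ℕ → Finset G)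
    (J : Finset ℕ) (S : Finset ℕ → Finset G)
    (hS : ∀ J z, z ∈ S J ↔ ∃ b : ℕ → G, (∀ j ∈ J, b j ∈ B j) ∧ ∑ j ∈ J, b j = z)
    (hB : ∀ j ∈ J, (B j).Nonempty) :
    (∃ g : G, g ≠ 0 ∧ ∀ z ∈ S J, z + g ∈ S J) ∨
      1 + (J.filter (fun j => ∃ a ∈ B j, ∃ b ∈ B j, a ≠ b)).card ≤ (S J).card := by
  classical
  induction J using Finset.induction_on with
  | empty =>
    right
    simp only [Finset.filter_empty, Finset.card_empty]
    exact Finset.card_pos.2 ⟨0, by rw [hS]; exact ⟨0, by simp, by simp⟩⟩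
  | insert j J hj ih =>
    have hins : ∀ z, z ∈ S (insert j J) ↔ ∃ y ∈ S J, ∃ a ∈ B j, y + a = z := by
      intro z
      rw [hS]
      constructor
      · rintro ⟨b, hb, rfl⟩
        refine ⟨∑ i ∈ J, b i, (hS _ _).2 ⟨b, fun i hi => hb i (Finset.mem_insert_of_mem hi), rfl⟩,
          b j, hb j (Finset.mem_insert_self _ _), ?_⟩
        rw [Finset.sum_insert hj, add_comm]
      · rintro ⟨y, hy, a, ha, rfl⟩
        obtain ⟨b, hb, rfl⟩ := (hS _ _).1 hy
        refine ⟨fun i => if i = j then a else b i, ?_, ?_⟩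
        · intro i hi
          rcases Finset.mem_insert.1 hi with rfl | hi
          · simpa using ha
          · have : i ≠ j := fun h => hj (h ▸ hi)
            simpa [this] using hb i hi
        · rw [Finset.sum_insert hj]
          simp only [if_true]
          rw [add_comm]
          congr 1
          apply Finset.sum_congr rfl
          intro i hi
          have : i ≠ j := fun h => hj (h ▸ hi)
          simp [this]
    have hper : (∃ g : G, g ≠ 0 ∧ ∀ z ∈ S J, z + g ∈ S J) →
        (∃ g : G, g ≠ 0 ∧ ∀ z ∈ S (insert j J), z + g ∈ S (insert j J)) := by
      rintro ⟨g, hg, h⟩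
      refine ⟨g, hg, fun z hz => ?_⟩
      obtain ⟨y, hy, a, ha, rfl⟩ := (hins z).1 hz
      exact (hins _).2 ⟨y + g, h y hy, a, ha, by abel⟩
    rcases ih (fun i hi => hB i (Finset.mem_insert_of_mem hi)) with h | h
    · exact Or.inl (hper h)
    · obtain ⟨a, ha⟩ := hB j (Finset.mem_insert_self _ _)
      have hsub : ∀ a ∈ B j, (S J).image (fun y => y + a) ⊆ S (insert j J) := by
        intro a ha z hz
        obtain ⟨y, hy, rfl⟩ := Finset.mem_image.1 hz
        exact (hins _).2 ⟨y, hy, a, ha, rfl⟩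
      have hcard : ∀ a, ((S J).image (fun y => y + a)).card = (S J).card := fun a =>
        Finset.card_image_of_injective _ (add_left_injective a)
      have hle := Finset.card_le_card (hsub a ha)
      rw [hcard] at hle
      by_cases hne : ∃ a ∈ B j, ∃ b ∈ B j, a ≠ b
      · obtain ⟨a, ha, b, hb, hab⟩ := hne
        by_cases hlt : (S J).card < (S (insert j J)).card
        · right
          rw [Finset.filter_insert]
          have := Finset.card_insert_le j (J.filter (fun j => ∃ a ∈ B j, ∃ b ∈ B j, a ≠ b))
          split_ifs <;> omega
        · left
          apply hper
          have e1 := Finset.eq_of_subset_of_card_le (hsub a ha) (by rw [hcard]; omega)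
          have e2 := Finset.eq_of_subset_of_card_le (hsub b hb) (by rw [hcard]; omega)
          refine ⟨a - b, sub_ne_zero.2 hab, fun z hz => ?_⟩
          have : z + a ∈ (S J).image (fun y => y + b) := by
            rw [e2, ← e1]; exact Finset.mem_image_of_mem _ hz
          obtain ⟨y, hy, hyz⟩ := Finset.mem_image.1 this
          have : z + (a - b) = y := by
            have : y = z + a - b := eq_sub_of_add_eq hyz
            rw [this]; abel
          rw [this]; exact hy
      · right
        rw [Finset.filter_insert, if_neg hne]
        omega

theorem fill (n r : ℕ) (hn : 0 < n) (hrn : r ∣ n) (J : Finset ℕ) (B : ℕ → Finset ℤ)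
    (hr : ∀ j ∈ J, ∀ a ∈ B j, ∀ b ∈ B j, (r:ℤ) ∣ a - b)
    (hs : ∀ s, 2 ≤ s → r * s ∣ n →
      s - 1 ≤ (J.filter (fun j => ∃ a ∈ B j, ∃ b ∈ B j, ¬ ((r * s : ℕ):ℤ) ∣ a - b)).card)
    (b0 : ℕ → ℤ) (hb0 : ∀ j ∈ J, b0 j ∈ B j) (z : ℤ) (hz : (r:ℤ) ∣ z - ∑ j ∈ J, b0 j) :
    ∃ b : ℕ → ℤ, (∀ j ∈ J, b j ∈ B j) ∧ (n:ℤ) ∣ z - ∑ j ∈ J, b j := by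
  classical
  have hr0 : 0 < r := Nat.pos_of_dvd_of_pos hrn hn
  let Y : Set ℤ := {z | ∃ b : ℕ → ℤ, (∀ j ∈ J, b j ∈ B j) ∧ (n:ℤ) ∣ z - ∑ j ∈ J, b j}
  have hYn : ∀ z ∈ Y, ∀ m : ℤ, z + n * m ∈ Y := by
    rintro z ⟨b, hb, hd⟩ m
    refine ⟨b, hb, ?_⟩
    have : z + n * m - ∑ j ∈ J, b j = (z - ∑ j ∈ J, b j) + n * m := by ring
    rw [this]
    exact dvd_add hd (dvd_mul_right _ _)
  have hYr : ∀ z ∈ Y, (r:ℤ) ∣ z - ∑ j ∈ J, b0 j := by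
    rintro z ⟨b, hb, hd⟩
    have h1 : (r:ℤ) ∣ z - ∑ j ∈ J, b j := dvd_trans (by exact_mod_cast hrn) hd
    have h2 : (r:ℤ) ∣ ∑ j ∈ J, (b j - b0 j) :=
      Finset.dvd_sum fun j hj => hr j hj _ (hb j hj) _ (hb0 j hj)
    have : z - ∑ j ∈ J, b0 j = (z - ∑ j ∈ J, b j) + ∑ j ∈ J, (b j - b0 j) := by
      rw [Finset.sum_sub_distrib]; ring
    rw [this]; exact dvd_add h1 h2
  have h0Y : ∑ j ∈ J, b0 j ∈ Y := ⟨b0, hb0, by simp⟩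
  let H : AddSubgroup ℤ :=
    { carrier := {g | ∀ z ∈ Y, z + g ∈ Y}
      zero_mem' := fun z hz => by simpa using hz
      add_mem' := fun {a b} ha hb z hz => by
        have := hb _ (ha z hz)
        rwa [add_assoc] at this
      neg_mem' := fun {g} hg z hz => by
        have hm : ∀ m : ℕ, z + m * g ∈ Y := by
          intro m
          induction m with
          | zero => simpa using hz
          | succ m ih =>
            have := hg _ ih
            convert this using 1
            push_cast; ring
        have := hYn _ (hm (n - 1)) (-g)
        convert this using 1
        rw [Nat.cast_sub (by omega)]
        push_cast; ring }
  have hHmem : ∀ g, g ∈ H ↔ ∀ z ∈ Y, z + g ∈ Y := fun g => Iff.rfl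
  obtain ⟨q0, hq0⟩ := Int.subgroup_cyclic H
  have hHq : ∀ g, g ∈ H ↔ q0 ∣ g := by
    intro g; rw [hq0, ← AddSubgroup.zmultiples_eq_closure, Int.mem_zmultiples_iff]
  set q := q0.natAbs with hq
  have hHq' : ∀ g, g ∈ H ↔ (q:ℤ) ∣ g := by
    intro g; rw [hHq, hq, Int.natAbs_dvd]
  have hqn : q ∣ n := by
    have : (n:ℤ) ∈ H := (hHmem _).2 fun z hz => by simpa using hYn z hz 1
    exact_mod_cast (hHq' _).1 this
  have hrq : r ∣ q := by
    have h1 : (q:ℤ) ∈ H := (hHq' _).2 dvd_rfl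
    have h2 := hYr _ ((hHmem _).1 h1 _ h0Y)
    have : (r:ℤ) ∣ q := by simpa using h2
    exact_mod_cast this
  have hq0' : 0 < q := Nat.pos_of_dvd_of_pos hqn hn
  have hfin : (r:ℤ) ∈ H → z ∈ Y := by
    intro h
    obtain ⟨m, hm⟩ := hz
    have h1 : (r:ℤ) * m ∈ H := by
      rw [hHq'] at h ⊢
      exact dvd_mul_of_dvd_left h _
    have h2 := (hHmem _).1 h1 _ h0Y
    rw [← hm] at h2
    simpa using h2
  apply hfin
  obtain ⟨s, hqs⟩ := hrq
  by_cases hs2 : 2 ≤ s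
  swap
  · have : s = 1 := by
      rcases Nat.eq_zero_or_pos s with rfl | h
      · simp at hqs; omega
      · omega
    rw [hHq', hqs, this]; simp
  -- use growth in ZMod q
  have : NeZero q := ⟨hq0'.ne'⟩
  let Bb : ℕ → Finset (ZMod q) := fun j => (B j).image (fun a : ℤ => (a : ZMod q))
  let S : Finset ℕ → Finset (ZMod q) := fun J =>
    Finset.univ.filter (fun z => ∃ b : ℕ → ZMod q, (∀ j ∈ J, b j ∈ Bb j) ∧ ∑ j ∈ J, b j = z)
  have hS : ∀ J z, z ∈ S J ↔ ∃ b : ℕ → ZMod q, (∀ j ∈ J, b j ∈ Bb j) ∧ ∑ j ∈ J, b j = z := by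
    intro J z; simp [S]
  have hSY : ∀ z : ℤ, (z : ZMod q) ∈ S J ↔ z ∈ Y := by
    intro z
    rw [hS]
    constructor
    · rintro ⟨b, hb, hsum⟩
      have : ∀ j, ∃ a : ℤ, j ∈ J → a ∈ B j ∧ (a : ZMod q) = b j := by
        intro j
        by_cases hj : j ∈ J
        · obtain ⟨a, ha, hab⟩ := Finset.mem_image.1 (hb j hj)
          exact ⟨a, fun _ => ⟨ha, hab⟩⟩
        · exact ⟨0, fun h => absurd h hj⟩
      choose a ha using this
      have hd : (q:ℤ) ∣ z - ∑ j ∈ J, a j := by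
        rw [← ZMod.intCast_zmod_eq_zero_iff_dvd]
        push_cast
        rw [← hsum, sub_eq_zero]
        exact Finset.sum_congr rfl fun j hj => ((ha j hj).2).symm
      have := (hHmem _).1 ((hHq' _).2 hd) (∑ j ∈ J, a j) ⟨a, fun j hj => (ha j hj).1, by simp⟩
      simpa using this
    · rintro ⟨b, hb, hd⟩
      refine ⟨fun j => (b j : ZMod q), fun j hj => Finset.mem_image_of_mem _ (hb j hj), ?_⟩
      have : (q:ℤ) ∣ z - ∑ j ∈ J, b j := dvd_trans (by exact_mod_cast hqn) hd
      rw [← ZMod.intCast_zmod_eq_zero_iff_dvd] at this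
      push_cast at this
      exact (sub_eq_zero.1 this).symm
  rcases growth Bb J S hS (fun j hj => ⟨_, Finset.mem_image_of_mem _ (hb0 j hj)⟩) with h | h
  · exfalso
    obtain ⟨g, hg, hper⟩ := h
    obtain ⟨g', rfl⟩ := ZMod.intCast_surjective g
    apply hg
    rw [ZMod.intCast_zmod_eq_zero_iff_dvd, ← hHq', hHmem]
    intro z hz
    rw [← hSY] at hz ⊢
    simpa using hper _ hz
  · have hcnt : s ≤ (S J).card := by
      have h1 := hs s hs2 (hqs ▸ hqn)
      have h2 : (J.filter (fun j => ∃ a ∈ B j, ∃ b ∈ B j, ¬ ((r * s : ℕ):ℤ) ∣ a - b)).card ≤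
          (J.filter (fun j => ∃ a ∈ Bb j, ∃ b ∈ Bb j, a ≠ b)).card := by
        apply Finset.card_le_card
        intro j hj
        rw [Finset.mem_filter] at hj ⊢
        obtain ⟨hj, a, ha, b, hb, hab⟩ := hj
        refine ⟨hj, _, Finset.mem_image_of_mem _ ha, _, Finset.mem_image_of_mem _ hb, ?_⟩
        intro heq
        apply hab
        rw [← hqs, ← ZMod.intCast_zmod_eq_zero_iff_dvd]
        push_cast; rw [heq, sub_self]
      omega
    let Cos : Finset (ZMod q) := (Finset.range s).image
      (fun t : ℕ => ((∑ j ∈ J, b0 j + r * t : ℤ) : ZMod q))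
    have hCos : ∀ z : ℤ, (r:ℤ) ∣ z - ∑ j ∈ J, b0 j → (z : ZMod q) ∈ Cos := by
      rintro z ⟨m, hm⟩
      have hs0 : (0:ℤ) < s := by omega
      refine Finset.mem_image.2 ⟨(m % s).toNat, ?_, ?_⟩
      · rw [Finset.mem_range]
        have := Int.emod_lt_of_pos m hs0
        have := Int.emod_nonneg m hs0.ne'
        omega
      · rw [← sub_eq_zero, ← Int.cast_sub, ZMod.intCast_zmod_eq_zero_iff_dvd]
        rw [Int.toNat_of_nonneg (Int.emod_nonneg m hs0.ne')]
        have h1 := Int.emod_add_mul_ediv m s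
        refine ⟨-(m / s), ?_⟩
        rw [hqs]
        push_cast
        have : z = ∑ j ∈ J, b0 j + r * m := by linarith
        rw [this]
        linear_combination (r:ℤ) * h1
    have hsub : S J ⊆ Cos := by
      intro z hz
      obtain ⟨z', rfl⟩ := ZMod.intCast_surjective z
      exact hCos z' (hYr _ ((hSY _).1 hz))
    have heq : S J = Cos := Finset.eq_of_subset_of_card_le hsub (by
      refine le_trans Finset.card_image_le ?_
      rw [Finset.card_range]; exact hcnt)
    rw [hHmem]
    intro z hz
    rw [← hSY, heq]
    apply hCos
    have : z + r - ∑ j ∈ J, b0 j = (z - ∑ j ∈ J, b0 j) + r := by ring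
    rw [this]
    exact dvd_add (hYr _ hz) dvd_rfl

/-- `s` carries an `A`-weighted zero-sum modulo `n`. -/
def ZS (A : Finset ℤ) (n : ℕ) (x : ℕ → ℤ) (s : Finset ℕ) : Prop :=
  ∃ w : ℕ → ℤ, (∀ i, w i ∈ A) ∧ (n:ℤ) ∣ ∑ i ∈ s, w i * x i

/-- every sequence of length `D` has a nonempty weighted zero-sum subsequence. -/
def HD (A : Finset ℤ) (n D : ℕ) : Prop :=
  ∀ (x : ℕ → ℤ) (I : Finset ℕ), I.card = D → ∃ s ⊆ I, s.Nonempty ∧ ZS A n x s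

/-- multiplication of `x` by weights of `A` is constant modulo `r`. -/
def Cst (A : Finset ℤ) (r : ℕ) (x : ℤ) : Prop :=
  ∀ a ∈ A, ∀ b ∈ A, (r:ℤ) ∣ (a - b) * x

/-- gcd of differences. -/
def dA (A : Finset ℤ) : ℕ := (A ×ˢ A).gcd (fun p => (p.1 - p.2).natAbs)

theorem ZS.union {A : Finset ℤ} {n : ℕ} {x : ℕ → ℤ} {s t : Finset ℕ} (hs : ZS A n x s)
    (ht : ZS A n x t) (hd : Disjoint s t) : ZS A n x (s ∪ t) := by
  classical
  obtain ⟨w, hw, h1⟩ := hs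
  obtain ⟨v, hv, h2⟩ := ht
  refine ⟨fun i => if i ∈ s then w i else v i, fun i => by dsimp only; split_ifs <;> simp [hw, hv], ?_⟩
  rw [Finset.sum_union hd]
  have e1 : ∑ i ∈ s, (if i ∈ s then w i else v i) * x i = ∑ i ∈ s, w i * x i :=
    Finset.sum_congr rfl fun i hi => by simp [hi]
  have e2 : ∑ i ∈ t, (if i ∈ s then w i else v i) * x i = ∑ i ∈ t, v i * x i :=
    Finset.sum_congr rfl fun i hi => by
      have : i ∉ s := fun h => Finset.disjoint_left.1 hd h hi
      simp [this]
  rw [e1, e2]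
  exact dvd_add h1 h2

theorem ZS.of_const {A : Finset ℤ} {n : ℕ} {x : ℕ → ℤ} {s : Finset ℕ} {a : ℤ} (ha : a ∈ A)
    (h : (n:ℤ) ∣ ∑ i ∈ s, x i) : ZS A n x s :=
  ⟨fun _ => a, fun _ => ha, by rw [← Finset.mul_sum]; exact dvd_mul_of_dvd_right h _⟩

theorem HD.pos {A : Finset ℤ} {n D : ℕ} (h : HD A n D) : 0 < D := by
  rcases Nat.eq_zero_or_pos D with rfl | h'
  · obtain ⟨s, hs, hne, -⟩ := h 0 ∅ (by simp)
    rw [Finset.subset_empty.1 hs] at hne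
    simp at hne
  · exact h'

theorem HD.exists {A : Finset ℤ} {n D : ℕ} (h : HD A n D) (x : ℕ → ℤ) (I : Finset ℕ)
    (hI : D ≤ I.card) : ∃ s ⊆ I, s.Nonempty ∧ s.card ≤ D ∧ ZS A n x s := by
  obtain ⟨I', hI', hc⟩ := Finset.exists_subset_card_eq hI
  obtain ⟨s, hs, hne, hz⟩ := h x I' hc
  exact ⟨s, hs.trans hI', hne, hc ▸ Finset.card_le_card hs, hz⟩

theorem cst_iff (A : Finset ℤ) (r : ℕ) (x : ℤ) : Cst A r x ↔ (r:ℤ) ∣ (dA A : ℤ) * x := by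
  constructor
  · intro h
    have h1 : r ∣ (A ×ˢ A).gcd (fun p => (p.1 - p.2).natAbs * x.natAbs) := by
      apply Finset.dvd_gcd
      rintro ⟨a, b⟩ hp
      rw [Finset.mem_product] at hp
      have := h a hp.1 b hp.2
      rw [← Int.natAbs_mul]
      exact Int.natCast_dvd.1 this
    rw [Finset.gcd_mul_right] at h1
    rw [Int.natCast_dvd, Int.natAbs_mul]
    simpa [dA] using h1
  · intro h a ha b hb
    have h1 : dA A ∣ (a - b).natAbs :=
      Finset.gcd_dvd (f := fun p : ℤ × ℤ => (p.1 - p.2).natAbs) (b := (a, b)) (by simp [ha, hb])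
    have h2 : (dA A : ℤ) ∣ a - b := Int.natCast_dvd.2 h1
    exact dvd_trans h (mul_dvd_mul_right h2 x)

theorem cst_iff' (A : Finset ℤ) (r : ℕ) (hr : 0 < r) (x : ℤ) :
    Cst A r x ↔ ((r / Nat.gcd (dA A) r : ℕ):ℤ) ∣ x := by
  rw [cst_iff]
  have hg : 0 < Nat.gcd (dA A) r := Nat.gcd_pos_of_pos_right _ hr
  obtain ⟨d', hd'⟩ := Nat.gcd_dvd_left (dA A) r
  obtain ⟨r', hr'⟩ := Nat.gcd_dvd_right (dA A) r
  have hcop : Nat.Coprime d' r' := by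
    have := Nat.coprime_div_gcd_div_gcd hg
    rwa [Nat.div_eq_of_eq_mul_right hg hd', Nat.div_eq_of_eq_mul_right hg hr'] at this
  rw [Nat.div_eq_of_eq_mul_right hg hr']
  have e1 : (r:ℤ) = (Nat.gcd (dA A) r : ℤ) * r' := by exact_mod_cast hr'
  have e2 : (dA A : ℤ) = (Nat.gcd (dA A) r : ℤ) * d' := by exact_mod_cast hd'
  have hgz : (Nat.gcd (dA A) r : ℤ) ≠ 0 := by exact_mod_cast hg.ne'
  have : (r:ℤ) ∣ (dA A : ℤ) * x ↔ (r':ℤ) ∣ d' * x := by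
    constructor
    · rintro ⟨m, hm⟩
      refine ⟨m, mul_left_cancel₀ hgz ?_⟩
      calc (Nat.gcd (dA A) r : ℤ) * (d' * x) = (dA A : ℤ) * x := by rw [← mul_assoc, ← e2]
        _ = r * m := hm
        _ = (Nat.gcd (dA A) r : ℤ) * (r' * m) := by rw [← mul_assoc, ← e1]
    · rintro ⟨m, hm⟩
      refine ⟨m, ?_⟩
      calc (dA A : ℤ) * x = (Nat.gcd (dA A) r : ℤ) * (d' * x) := by rw [← mul_assoc, ← e2]
        _ = (Nat.gcd (dA A) r : ℤ) * (r' * m) := by rw [hm]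
        _ = r * m := by rw [← mul_assoc, ← e1]
  rw [this]
  constructor
  · intro h
    have hc : IsCoprime (r':ℤ) (d':ℤ) := Nat.isCoprime_iff_coprime.2 hcop.symm
    exact hc.dvd_of_dvd_mul_left h
  · intro h; exact dvd_mul_of_dvd_right h _

theorem Cst.sub {A : Finset ℤ} {r : ℕ} {x y : ℤ} (hx : Cst A r x) (hy : Cst A r y) :
    Cst A r (x - y) := fun a ha b hb => by
  rw [mul_sub]; exact dvd_sub (hx a ha b hb) (hy a ha b hb)

theorem Cst.mono {A : Finset ℤ} {r q : ℕ} {x : ℤ} (hx : Cst A q x) (h : r ∣ q) : Cst A r x :=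
  fun a ha b hb => dvd_trans (by exact_mod_cast h) (hx a ha b hb)

theorem gao {A : Finset ℤ} {n N D h : ℕ} (hHD : HD A n D) {a0 : ℤ} (ha0 : a0 ∈ A)
    (y : ℕ → ℤ) (I Z U0 : Finset ℕ) (hI : I.card = N + D - 1) (hZI : Z ⊆ I) (hUI : U0 ⊆ I)
    (hdis : Disjoint Z U0) (hZ : ∀ i ∈ Z, (n:ℤ) ∣ y i) (hZc : Z.card = h)
    (hdiv : ∀ s ≤ U0.card, ∃ U' ⊆ U0, ZS A n y U' ∧ s ≤ U'.card ∧ U'.card ≤ s + h)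
    (hsize : D ≤ U0.card + h + 1) : ∃ S ⊆ I, S.card = N ∧ ZS A n y S := by
  classical
  have hD := hHD.pos
  let F := ((I \ Z) \ U0).powerset.filter (fun V => V.card ≤ N ∧ ZS A n y V)
  have hF : F.Nonempty := ⟨∅, by
    rw [Finset.mem_filter]
    exact ⟨by simp, by simp, ZS.of_const ha0 (by simp)⟩⟩
  obtain ⟨V, hVF, hmax⟩ := Finset.exists_max_image F Finset.card hF
  rw [Finset.mem_filter, Finset.mem_powerset] at hVF
  obtain ⟨hVs, hVN, hVz⟩ := hVF
  have hVZ : Disjoint V Z := by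
    rw [Finset.disjoint_left]; intro i hi
    have := hVs hi
    simp at this; tauto
  have hVU : Disjoint V U0 := by
    rw [Finset.disjoint_left]; intro i hi
    have := hVs hi
    simp at this; tauto
  have hVI : V ⊆ I := fun i hi => by have := hVs hi; simp at this; tauto
  have hbig : N ≤ V.card + U0.card + h := by
    by_contra hlt
    have hc : (((I \ Z) \ U0) \ V).card + V.card + U0.card + Z.card = I.card := by
      have h1 := Finset.card_sdiff_add_card_eq_card hVs
      have h2 : ((I \ Z) \ U0).card + U0.card = (I \ Z).card :=
        Finset.card_sdiff_add_card_eq_card (by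
          intro i hi
          rw [Finset.mem_sdiff]
          exact ⟨hUI hi, fun h => Finset.disjoint_left.1 hdis h hi⟩)
      have h3 := Finset.card_sdiff_add_card_eq_card hZI
      omega
    obtain ⟨V', hV's, hV'ne, hV'c, hV'z⟩ := hHD.exists y (((I \ Z) \ U0) \ V) (by omega)
    have hd : Disjoint V V' := by
      rw [Finset.disjoint_right]; intro i hi
      exact (Finset.mem_sdiff.1 (hV's hi)).2
    have hcu := Finset.card_union_of_disjoint hd
    have hpos := Finset.card_pos.2 hV'ne
    have := hmax (V ∪ V') (by
      rw [Finset.mem_filter, Finset.mem_powerset]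
      refine ⟨Finset.union_subset hVs (hV's.trans Finset.sdiff_subset), by omega, hVz.union hV'z hd⟩)
    omega
  have hpad : ∀ W ⊆ I, Disjoint W Z → ZS A n y W → W.card ≤ N → N ≤ W.card + h →
      ∃ S ⊆ I, S.card = N ∧ ZS A n y S := by
    intro W hWI hWZ hWz h1 h2
    obtain ⟨P, hPZ, hPc⟩ := Finset.exists_subset_card_eq (s := Z) (n := N - W.card) (by omega)
    have hd : Disjoint W P := Finset.disjoint_of_subset_right hPZ hWZ
    refine ⟨W ∪ P, Finset.union_subset hWI (hPZ.trans hZI), ?_, hWz.union (ZS.of_const ha0 ?_) hd⟩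
    · rw [Finset.card_union_of_disjoint hd]; omega
    · exact Finset.dvd_sum fun i hi => hZ i (hPZ hi)
  by_cases hc : N ≤ V.card + h
  · exact hpad V hVI hVZ hVz hVN hc
  · obtain ⟨U', hU's, hU'z, h1, h2⟩ := hdiv (N - h - V.card) (by omega)
    have hd : Disjoint V U' := Finset.disjoint_of_subset_right hU's hVU
    have hcu := Finset.card_union_of_disjoint hd
    apply hpad (V ∪ U') (Finset.union_subset hVI (hU's.trans hUI)) _ (hVz.union hU'z hd) (by omega) (by omega)
    rw [Finset.disjoint_union_left]
    exact ⟨hVZ, (Finset.disjoint_of_subset_right hU's hdis).symm⟩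

theorem hdiv_build {A : Finset ℤ} {n k h : ℕ} (hk : 0 < k) (hh : 0 < h) {a0 : ℤ} (ha0 : a0 ∈ A)
    (y u : ℕ → ℤ) (M0 : Finset ℕ)
    (hy : ∀ B ⊆ M0, (k:ℤ) ∣ ∑ i ∈ B, u i → (n:ℤ) ∣ ∑ i ∈ B, y i)
    (hu : ∀ i ∈ M0, ¬ (k:ℤ) ∣ u i)
    (hm : ∀ v : ℤ, (M0.filter (fun i => (k:ℤ) ∣ u i - v)).card ≤ h) (c : ℕ) :
    ∀ M ⊆ M0, M.card ≤ c → ∃ U0 ⊆ M, M.card < U0.card + k ∧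
      ∀ s ≤ U0.card, ∃ U' ⊆ U0, ZS A n y U' ∧ s ≤ U'.card ∧ U'.card ≤ s + h := by
  classical
  induction c with
  | zero =>
    intro M hM hc
    refine ⟨∅, by simp, by simp; omega, fun s hs => ⟨∅, by simp, ZS.of_const ha0 (by simp), by simpa using hs, by simp⟩⟩
  | succ c ih =>
    intro M hM hc
    by_cases hMk : M.card < k
    · refine ⟨∅, by simp, by simpa using hMk, fun s hs => ⟨∅, by simp, ZS.of_const ha0 (by simp), by simpa using hs, by simp⟩⟩
    · obtain ⟨B, hBM, hBne, hBh, hBz⟩ := short_block k h hk hh M u (fun i hi => hu i (hM hi))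
        (fun v => le_trans (Finset.card_le_card (Finset.filter_subset_filter _ hM)) (hm v)) (by omega)
      have hcs := Finset.card_sdiff_add_card_eq_card hBM
      have hpos := Finset.card_pos.2 hBne
      obtain ⟨U, hUs, hUc, hUd⟩ := ih (M \ B) (Finset.sdiff_subset.trans hM) (by omega)
      have hd : Disjoint B U := by
        rw [Finset.disjoint_right]; intro i hi
        exact (Finset.mem_sdiff.1 (hUs hi)).2
      have hBZ : ZS A n y B := ZS.of_const ha0 (hy B (hBM.trans hM) hBz)
      have hcu := Finset.card_union_of_disjoint hd
      refine ⟨B ∪ U, Finset.union_subset hBM (hUs.trans Finset.sdiff_subset), by omega, ?_⟩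
      intro s hs
      by_cases h1 : s ≤ U.card
      · obtain ⟨U', h2, h3⟩ := hUd s h1
        exact ⟨U', h2.trans Finset.subset_union_right, h3⟩
      · by_cases h2 : s ≤ B.card
        · exact ⟨B, Finset.subset_union_left, hBZ, h2, by omega⟩
        · obtain ⟨U', h3, h4, h5, h6⟩ := hUd (s - B.card) (by omega)
          have hd' : Disjoint B U' := Finset.disjoint_of_subset_right h3 hd
          have hcu' := Finset.card_union_of_disjoint hd'
          exact ⟨B ∪ U', Finset.union_subset_union_right h3, hBZ.union h4 hd', by omega, by omega⟩

theorem caseA {A : Finset ℤ} {n N D : ℕ} (hn : 0 < n) (hnN : n ∣ N) (hHD : HD A n D) {a0 : ℤ}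
    (ha0 : a0 ∈ A) (x : ℕ → ℤ) (I I1 : Finset ℕ) (hI : I.card = N + D - 1)
    (hI1 : ∀ i, i ∈ I1 ↔ i ∈ I ∧ Cst A n (x i))
    (hcase : (∃ g, Cst A n g ∧ D ≤ (I1.filter (fun i => (n:ℤ) ∣ x i - g)).card + 1) ∨
      D + Nat.gcd (dA A) n ≤ I1.card + 2) : ∃ S ⊆ I, S.card = N ∧ ZS A n x S := by
  classical
  have hD := hHD.pos
  have hI1s : I1 ⊆ I := fun i hi => ((hI1 i).1 hi).1
  -- shift back
  have hshift : ∀ g, Cst A n g → (∃ S ⊆ I, S.card = N ∧ ZS A n (fun i => x i - g) S) →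
      ∃ S ⊆ I, S.card = N ∧ ZS A n x S := by
    rintro g hg ⟨S, hS, hc, w, hw, hd⟩
    refine ⟨S, hS, hc, w, hw, ?_⟩
    have h1 : (n:ℤ) ∣ ∑ i ∈ S, (w i - a0) * g := Finset.dvd_sum fun i _ => hg _ (hw i) _ ha0
    have h2 : (n:ℤ) ∣ (N:ℤ) * (a0 * g) := dvd_mul_of_dvd_left (by exact_mod_cast hnN) _
    have : ∑ i ∈ S, w i * x i = ∑ i ∈ S, w i * (x i - g) + ∑ i ∈ S, (w i - a0) * g + N * (a0 * g) := by
      rw [← hc, ← Finset.sum_add_distrib, ← nsmul_eq_mul, ← Finset.sum_const, ← Finset.sum_add_distrib]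
      exact Finset.sum_congr rfl fun i _ => by ring
    rw [this]
    exact dvd_add (dvd_add hd h1) h2
  have halt1 : (∃ g, Cst A n g ∧ D ≤ (I1.filter (fun i => (n:ℤ) ∣ x i - g)).card + 1) →
      ∃ S ⊆ I, S.card = N ∧ ZS A n x S := by
    rintro ⟨g, hg, hgD⟩
    apply hshift g hg
    refine gao hHD ha0 (fun i => x i - g) I (I1.filter (fun i => (n:ℤ) ∣ x i - g)) ∅ hI
      ((Finset.filter_subset _ _).trans hI1s) (by simp) (by simp)
      (fun i hi => (Finset.mem_filter.1 hi).2) rfl ?_ (by simpa using hgD)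
    intro s hs
    exact ⟨∅, by simp, ZS.of_const ha0 (by simp), by simpa using hs, by simp⟩
  rcases hcase with h | hcase
  · exact halt1 h
  have hk : 0 < Nat.gcd (dA A) n := Nat.gcd_pos_of_pos_right _ hn
  rcases I1.eq_empty_or_nonempty with hemp | hne
  · apply halt1
    refine ⟨0, fun a _ b _ => by simp, ?_⟩
    rw [hemp] at hcase
    simp at hcase
    omega
  obtain ⟨i0, hi0, hmax⟩ := Finset.exists_max_image I1
    (fun i => (I1.filter (fun j => (n:ℤ) ∣ x j - x i)).card) hne
  have hg := ((hI1 i0).1 hi0).2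
  apply hshift (x i0) hg
  set Z := I1.filter (fun j => (n:ℤ) ∣ x j - x i0) with hZ
  set k := Nat.gcd (dA A) n with hkdef
  have hkn : k ∣ n := Nat.gcd_dvd_right _ _
  obtain ⟨m, hm⟩ := hkn
  have hmk : n / k = m := Nat.div_eq_of_eq_mul_right hk hm
  have hm0 : (m:ℤ) ≠ 0 := by
    have : m ≠ 0 := by rintro rfl; simp at hm; omega
    exact_mod_cast this
  have hnz : (n:ℤ) = k * m := by exact_mod_cast hm
  have hex : ∀ i, ∃ u : ℤ, i ∈ I1 → x i - x i0 = m * u := by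
    intro i
    by_cases hi : i ∈ I1
    · have h1 := (((hI1 i).1 hi).2).sub hg
      rw [cst_iff' A n hn, ← hkdef, hmk] at h1
      obtain ⟨u, hu⟩ := h1
      exact ⟨u, fun _ => hu⟩
    · exact ⟨0, fun h => absurd h hi⟩
  choose u hu using hex
  have hkey : ∀ t : ℤ, (k:ℤ) ∣ t ↔ (n:ℤ) ∣ m * t := by
    intro t
    rw [hnz, mul_comm (k:ℤ) (m:ℤ)]
    exact (mul_dvd_mul_iff_left hm0).symm
  have hZpos : 0 < Z.card := Finset.card_pos.2 ⟨i0, by simp [hZ, hi0]⟩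
  obtain ⟨U0, hU0s, hU0c, hU0d⟩ := hdiv_build (A := A) (n := n) hk hZpos ha0 (fun i => x i - x i0) u (I1 \ Z)
    (by
      intro B hB hd
      rw [hkey, Finset.mul_sum] at hd
      convert hd using 1
      exact Finset.sum_congr rfl fun i hi => hu i (Finset.mem_sdiff.1 (hB hi)).1)
    (by
      intro i hi hd
      rw [Finset.mem_sdiff] at hi
      rw [hkey, ← hu i hi.1] at hd
      exact hi.2 (by rw [hZ, Finset.mem_filter]; exact ⟨hi.1, hd⟩))
    (by
      intro v
      rcases ((I1 \ Z).filter (fun i => (k:ℤ) ∣ u i - v)).eq_empty_or_nonempty with h0 | ⟨j, hj⟩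
      · rw [h0]; simp
      · rw [Finset.mem_filter, Finset.mem_sdiff] at hj
        refine le_trans (Finset.card_le_card ?_) (hmax j hj.1.1)
        intro i hi
        rw [Finset.mem_filter, Finset.mem_sdiff] at hi
        rw [Finset.mem_filter]
        refine ⟨hi.1.1, ?_⟩
        have h1 : (k:ℤ) ∣ u i - u j := by
          have := dvd_sub hi.2 hj.2
          simpa using this
        rw [hkey, mul_sub, ← hu i hi.1.1, ← hu j hj.1.1] at h1
        simpa using h1) _ (I1 \ Z) (Finset.Subset.refl _) le_rfl
  have hZs : Z ⊆ I1 := Finset.filter_subset _ _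
  have hcs := Finset.card_sdiff_add_card_eq_card hZs
  refine gao hHD ha0 (fun i => x i - x i0) I Z U0 hI (hZs.trans hI1s)
    ((hU0s.trans Finset.sdiff_subset).trans hI1s) ?_ (fun i hi => (Finset.mem_filter.1 hi).2) rfl hU0d (by omega)
  rw [Finset.disjoint_right]; intro i hi
  exact (Finset.mem_sdiff.1 (hU0s hi)).2

open Classical in
/-- indices of `S` non-constant modulo `r` -/
noncomputable def NC (A : Finset ℤ) (r : ℕ) (x : ℕ → ℤ) (S : Finset ℕ) : Finset ℕ :=
  S.filter (fun i => ¬ Cst A r (x i))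

open Classical in
/-- indices of `S` constant modulo `r` -/
noncomputable def CC (A : Finset ℤ) (r : ℕ) (x : ℕ → ℤ) (S : Finset ℕ) : Finset ℕ :=
  S.filter (fun i => Cst A r (x i))

theorem mem_NC {A : Finset ℤ} {r : ℕ} {x : ℕ → ℤ} {S : Finset ℕ} {i : ℕ} :
    i ∈ NC A r x S ↔ i ∈ S ∧ ¬ Cst A r (x i) := by simp [NC]

theorem mem_CC {A : Finset ℤ} {r : ℕ} {x : ℕ → ℤ} {S : Finset ℕ} {i : ℕ} :
    i ∈ CC A r x S ↔ i ∈ S ∧ Cst A r (x i) := by simp [CC]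

theorem card_CC_add_NC (A : Finset ℤ) (r : ℕ) (x : ℕ → ℤ) (S : Finset ℕ) :
    (CC A r x S).card + (NC A r x S).card = S.card := by
  classical
  exact Finset.card_filter_add_card_filter_not _

theorem cst_one (A : Finset ℤ) (x : ℤ) : Cst A 1 x := fun _ _ _ _ => by simp

theorem NC_mono {A : Finset ℤ} {r : ℕ} {x : ℕ → ℤ} {S T : Finset ℕ} (h : S ⊆ T) :
    NC A r x S ⊆ NC A r x T := fun i hi => by
  rw [mem_NC] at hi ⊢; exact ⟨h hi.1, hi.2⟩

theorem fill_apply {A : Finset ℤ} {n r : ℕ} (hn : 0 < n) (hrn : r ∣ n) {a0 : ℤ} (ha0 : a0 ∈ A)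
    (x : ℕ → ℤ) (S : Finset ℕ) (hz : ZS A r x S)
    (hs : ∀ s, 2 ≤ s → r * s ∣ n → s - 1 ≤ (NC A (r * s) x (CC A r x S)).card) : ZS A n x S := by
  classical
  obtain ⟨w, hw, hd⟩ := hz
  set J := CC A r x S with hJ
  have hJS : J ⊆ S := fun i hi => (mem_CC.1 hi).1
  obtain ⟨b, hb, hbd⟩ := fill n r hn hrn J (fun j => A.image (fun a => a * x j)) (by
      intro j hj p hp q hq
      obtain ⟨a, ha, rfl⟩ := Finset.mem_image.1 hp
      obtain ⟨b, hb, rfl⟩ := Finset.mem_image.1 hq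
      rw [← sub_mul]
      exact (mem_CC.1 hj).2 a ha b hb) (by
      intro s h2 hsn
      refine le_trans (hs s h2 hsn) (Finset.card_le_card ?_)
      intro j hj
      rw [mem_NC] at hj
      rw [Finset.mem_filter]
      refine ⟨hj.1, ?_⟩
      have h3 := hj.2
      unfold Cst at h3
      push Not at h3
      obtain ⟨a, ha, b, hb, hab⟩ := h3
      refine ⟨a * x j, Finset.mem_image_of_mem _ ha, b * x j, Finset.mem_image_of_mem _ hb, ?_⟩
      rw [← sub_mul]; exact hab)
    (fun j => w j * x j) (fun j _ => Finset.mem_image_of_mem _ (hw j))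
    (-∑ i ∈ S \ J, w i * x i) (by
      have := Finset.sum_sdiff (f := fun i => w i * x i) hJS
      rw [← this] at hd
      rw [neg_sub_left, dvd_neg, add_comm]
      exact hd)
  have : ∀ j, ∃ a, a ∈ A ∧ (j ∈ J → a * x j = b j) := by
    intro j
    by_cases hj : j ∈ J
    · obtain ⟨a, ha, hab⟩ := Finset.mem_image.1 (hb j hj)
      exact ⟨a, ha, fun _ => hab⟩
    · exact ⟨a0, ha0, fun h => absurd h hj⟩
  choose v hvA hv using this
  refine ⟨fun i => if i ∈ J then v i else w i, fun i => by dsimp only; split_ifs <;> simp [hw, hvA], ?_⟩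
  rw [← Finset.sum_sdiff hJS]
  have e1 : ∑ i ∈ S \ J, (if i ∈ J then v i else w i) * x i = ∑ i ∈ S \ J, w i * x i :=
    Finset.sum_congr rfl fun i hi => by simp [(Finset.mem_sdiff.1 hi).2]
  have e2 : ∑ i ∈ J, (if i ∈ J then v i else w i) * x i = ∑ i ∈ J, b i :=
    Finset.sum_congr rfl fun i hi => by simp [hi, hv i hi]
  rw [e1, e2]
  rw [neg_sub_left, dvd_neg, add_comm] at hbd
  exact hbd

theorem cst_lcm {A : Finset ℤ} {p q : ℕ} {x : ℤ} (h1 : Cst A p x) (h2 : Cst A q x) :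
    Cst A (Nat.lcm p q) x := fun a ha b hb => by
  rw [Int.natCast_dvd]
  exact Nat.lcm_dvd (Int.natCast_dvd.1 (h1 a ha b hb)) (Int.natCast_dvd.1 (h2 a ha b hb))

theorem removal {A : Finset ℤ} {n m : ℕ} (x : ℕ → ℤ) (Q : Finset ℕ) (hQn : ∀ q ∈ Q, q ≤ n)
    (hQ0 : ∀ q ∈ Q, 0 < q)
    (hQl : ∀ p ∈ Q, ∀ q ∈ Q, Nat.lcm p q ∈ Q) (hm : n ≤ m) (c : ℕ) :
    ∀ R0 : Finset ℕ, R0.card = m + c → (∀ q ∈ Q, q ≤ (NC A q x R0).card + 1) →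
      ∃ R ⊆ R0, R.card = m ∧ ∀ q ∈ Q, q ≤ (NC A q x R).card + 1 := by
  classical
  induction c with
  | zero => intro R0 h1 h2; exact ⟨R0, Finset.Subset.refl _, h1, h2⟩
  | succ c ih =>
    intro R0 hc hR
    have hex : ∃ i ∈ R0, ∀ q ∈ Q, q = (NC A q x R0).card + 1 → Cst A q (x i) := by
      set T := Q.filter (fun q => q = (NC A q x R0).card + 1) with hT
      rcases T.eq_empty_or_nonempty with h0 | hne
      · obtain ⟨i, hi⟩ : R0.Nonempty := Finset.card_pos.1 (by omega)
        refine ⟨i, hi, fun q hq hqt => ?_⟩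
        have : q ∈ T := by rw [hT, Finset.mem_filter]; exact ⟨hq, hqt⟩
        rw [h0] at this; simp at this
      · obtain ⟨q, hqT, hmax⟩ := Finset.exists_max_image T id hne
        rw [hT, Finset.mem_filter] at hqT
        have hlt : (NC A q x R0).card < R0.card := by
          have := hQn q hqT.1
          omega
        have hex : ∃ i ∈ R0, i ∉ NC A q x R0 := by
          by_contra hcon
          push Not at hcon
          have := Finset.card_le_card (show R0 ⊆ NC A q x R0 from hcon)
          omega
        obtain ⟨i, hi, hiN⟩ := hex
        have hiC : Cst A q (x i) := by
          rw [mem_NC] at hiN; tauto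
        refine ⟨i, hi, fun p hp hpt => ?_⟩
        have hpq : p ≤ q := hmax p (by rw [hT, Finset.mem_filter]; exact ⟨hp, hpt⟩)
        have hL := hR _ (hQl p hp q hqT.1)
        have hsub : NC A (Nat.lcm p q) x R0 ⊆ NC A p x R0 ∪ NC A q x R0 := by
          intro j hj
          rw [Finset.mem_union, mem_NC, mem_NC]
          rw [mem_NC] at hj
          by_contra hcon
          push Not at hcon
          exact hj.2 (cst_lcm (hcon.1 hj.1) (hcon.2 hj.1))
        have h1 := (Finset.card_le_card hsub).trans (Finset.card_union_le _ _)
        obtain ⟨e, he⟩ := Nat.dvd_lcm_right p q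
        have h2 : q * e < q * 2 := by rw [← he]; omega
        have h3 : e < 2 := lt_of_mul_lt_mul_left h2 (Nat.zero_le _)
        have h4 : 0 < Nat.lcm p q := hQ0 _ (hQl p hp q hqT.1)
        have h5 : e = 1 := by
          rcases Nat.eq_zero_or_pos e with rfl | h
          · simp at he; omega
          · omega
        rw [h5, mul_one] at he
        exact hiC.mono (he ▸ Nat.dvd_lcm_left p q)
    obtain ⟨i, hi, hiq⟩ := hex
    obtain ⟨R, hRs, hRc, hRq⟩ := ih (R0.erase i) (by rw [Finset.card_erase_of_mem hi]; omega) (by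
      intro q hq
      have h1 : NC A q x R0 ⊆ insert i (NC A q x (R0.erase i)) := by
        intro j hj
        rw [mem_NC] at hj
        rw [Finset.mem_insert, mem_NC, Finset.mem_erase]
        tauto
      by_cases ht : q = (NC A q x R0).card + 1
      · have hc := hiq q hq ht
        have h1 : NC A q x R0 ⊆ NC A q x (R0.erase i) := by
          intro j hj
          rw [mem_NC] at hj
          rw [mem_NC, Finset.mem_erase]
          refine ⟨⟨?_, hj.1⟩, hj.2⟩
          rintro rfl
          exact hj.2 hc
        have := Finset.card_le_card h1
        omega
      · have h2 := (Finset.card_le_card h1).trans (Finset.card_insert_le _ _)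
        have := hR q hq
        omega)
    exact ⟨R, hRs.trans (Finset.erase_subset _ _), hRc, hRq⟩

theorem exists_max_poor {A : Finset ℤ} {n : ℕ} (hn : 1 < n) (x : ℕ → ℤ) (I : Finset ℕ) :
    ∃ r, r ∣ n ∧ r < n ∧ (r = 1 ∨ (NC A r x I).card + 2 ≤ r) ∧
      ∀ q, r ∣ q → q ∣ n → r < q → q < n → q ≤ (NC A q x I).card + 1 := by
  classical
  obtain ⟨r, hr, hmax⟩ := Finset.exists_max_image
    (n.properDivisors.filter (fun r => r = 1 ∨ (NC A r x I).card + 2 ≤ r)) id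
    ⟨1, by simp [hn]⟩
  rw [Finset.mem_filter, Nat.mem_properDivisors] at hr
  refine ⟨r, hr.1.1, hr.1.2, hr.2, fun q _ hqn hrq hq => ?_⟩
  by_contra hcon
  have := hmax q (by
    rw [Finset.mem_filter, Nat.mem_properDivisors]
    exact ⟨⟨hqn, hq⟩, Or.inr (by omega)⟩)
  simp at this
  omega

theorem HD.of_dvd {A : Finset ℤ} {n r D : ℕ} (h : HD A n D) (hr : r ∣ n) : HD A r D := by
  intro x I hI
  obtain ⟨s, h1, h2, w, hw, hd⟩ := h x I hI
  exact ⟨s, h1, h2, w, hw, dvd_trans (by exact_mod_cast hr) hd⟩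

theorem HD.self {A : Finset ℤ} {r : ℕ} (hr : 0 < r) {a0 : ℤ} (ha0 : a0 ∈ A) : HD A r r := by
  intro x I hI
  obtain ⟨s, h1, h2, h3⟩ := davenport r hr I x hI.ge
  exact ⟨s, h1, h2, ZS.of_const ha0 h3⟩

theorem count_le {A : Finset ℤ} {r q : ℕ} (x : ℕ → ℤ) (R S : Finset ℕ) :
    (NC A q x R).card ≤ (NC A q x (CC A r x S)).card + (R \ S).card + (NC A r x R).card := by
  classical
  have : NC A q x R ⊆ (NC A q x (CC A r x S) ∪ (R \ S)) ∪ NC A r x R := by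
    intro i hi
    rw [mem_NC] at hi
    simp only [Finset.mem_union, mem_NC, mem_CC, Finset.mem_sdiff]
    tauto
  have h1 := Finset.card_le_card this
  have h2 := Finset.card_union_le (NC A q x (CC A r x S) ∪ (R \ S)) (NC A r x R)
  have h3 := Finset.card_union_le (NC A q x (CC A r x S)) (R \ S)
  omega

theorem NC_one (A : Finset ℤ) (x : ℕ → ℤ) (S : Finset ℕ) : (NC A 1 x S).card = 0 := by
  rw [Finset.card_eq_zero, Finset.eq_empty_iff_forall_notMem]
  intro i hi
  exact (mem_NC.1 hi).2 (cst_one A _)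

theorem count_arith {r s t e : ℕ} (hs : 2 ≤ s) (hr : 2 ≤ r) (ht : t + 2 ≤ r) (he : e + 1 ≤ r) {c u : ℕ}
    (hu : r * s ≤ u + 1) (hc : u ≤ c + e + t) : s - 1 ≤ c := by
  obtain ⟨s', rfl⟩ := Nat.exists_eq_add_of_le hs
  obtain ⟨r', rfl⟩ := Nat.exists_eq_add_of_le hr
  have : (2 + r') * (2 + s') = 4 + 2 * r' + 2 * s' + r' * s' := by ring
  have := Nat.zero_le (r' * s')
  omega

theorem caseB {A : Finset ℤ} {n N D : ℕ} (hn : 1 < n) (hnN : n ∣ N) (hN : 0 < N) (hHD : HD A n D)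
    {a0 : ℤ} (ha0 : a0 ∈ A)
    (IH : ∀ r < n, r ∣ n → ∀ D', HD A r D' → ∀ (x : ℕ → ℤ) (I : Finset ℕ), I.card = N + D' - 1 →
      ∃ S ⊆ I, S.card = N ∧ ZS A r x S)
    (x : ℕ → ℤ) (I : Finset ℕ) (hI : I.card = N + D - 1) (hrich : n ≤ (NC A n x I).card + 1) :
    ∃ S ⊆ I, S.card = N ∧ ZS A n x S := by
  classical
  have hD := hHD.pos
  obtain ⟨r, hrn, hrlt, hpoor, hrichq⟩ := exists_max_poor (A := A) hn x I
  have hr0 : 0 < r := Nat.pos_of_dvd_of_pos hrn (by omega)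
  have hnN' := Nat.le_of_dvd hN hnN
  set D' := min D r with hD'
  have hHD' : HD A r D' := by
    rcases min_choice D r with h | h
    · rw [hD', h]; exact hHD.of_dvd hrn
    · rw [hD', h]; exact HD.self hr0 ha0
  have hD'pos := hHD'.pos
  have hD'1 : D' ≤ D := min_le_left _ _
  have hD'2 : D' ≤ r := min_le_right _ _
  obtain ⟨R, hRI, hRc, hRq⟩ := removal (A := A) (n := n) (m := N + D' - 1) x
    (n.divisors.filter (fun q => r ∣ q ∧ r < q))
    (by
      intro q hq
      rw [Finset.mem_filter, Nat.mem_divisors] at hq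
      exact Nat.le_of_dvd (by omega) hq.1.1)
    (by
      intro q hq
      rw [Finset.mem_filter] at hq
      omega)
    (by
      intro p hp q hq
      rw [Finset.mem_filter, Nat.mem_divisors] at hp hq ⊢
      have hl := Nat.lcm_dvd hp.1.1 hq.1.1
      refine ⟨⟨hl, by omega⟩, dvd_trans hp.2.1 (Nat.dvd_lcm_left p q), ?_⟩
      have := Nat.le_of_dvd (Nat.pos_of_dvd_of_pos hl (by omega)) (Nat.dvd_lcm_left p q)
      omega)
    (by omega) (D - D') I (by omega)
    (by
      intro q hq
      rw [Finset.mem_filter, Nat.mem_divisors] at hq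
      rcases lt_or_eq_of_le (Nat.le_of_dvd (by omega) hq.1.1) with h | h
      · exact hrichq q hq.2.1 hq.1.1 hq.2.2 h
      · rw [h]; exact hrich)
  obtain ⟨S, hSR, hSc, hSz⟩ := IH r hrlt hrn D' hHD' x R hRc
  refine ⟨S, hSR.trans hRI, hSc, fill_apply (by omega) hrn ha0 x S hSz ?_⟩
  intro s hs hsn
  have hrs : r < r * s := by nlinarith
  have h1 := hRq (r * s) (by
    rw [Finset.mem_filter, Nat.mem_divisors]
    exact ⟨⟨hsn, by omega⟩, dvd_mul_right _ _, hrs⟩)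
  have h2 := count_le (A := A) (r := r) (q := r * s) x R S
  have h3 := Finset.card_sdiff_add_card_eq_card hSR
  have h4 := Finset.card_le_card (NC_mono (A := A) (r := r) (x := x) hRI)
  rcases hpoor with h | h
  · subst h
    rw [NC_one] at h2
    simp only [one_mul] at *
    omega
  · exact count_arith hs (by omega) (t := (NC A r x R).card) (e := (R \ S).card) (by omega) (by omega) h1 h2

theorem faithful_cancel {A : Finset ℤ} {n : ℕ} (hn : 0 < n) {a0 : ℤ} (ha0 : a0 ∈ A)
    (hf : ∀ e : ℕ, e ∣ n → (∀ a ∈ A, (e:ℤ) ∣ a) → e = 1) {z : ℤ} (hz : Cst A n z)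
    (hd : (n:ℤ) ∣ a0 * z) : (n:ℤ) ∣ z := by
  have hc := hz
  rw [cst_iff' A n hn] at hz
  set k := Nat.gcd (dA A) n with hk
  have hk0 : 0 < k := Nat.gcd_pos_of_pos_right _ hn
  obtain ⟨m, hm⟩ := Nat.gcd_dvd_right (dA A) n
  rw [← hk] at hm
  rw [Nat.div_eq_of_eq_mul_right hk0 hm] at hz
  obtain ⟨u, rfl⟩ := hz
  have hm0 : (m:ℤ) ≠ 0 := by
    have : m ≠ 0 := by rintro rfl; simp at hm; omega
    exact_mod_cast this
  have hnz : (n:ℤ) = m * k := by rw [mul_comm]; exact_mod_cast hm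
  rw [hnz, mul_left_comm, mul_dvd_mul_iff_left hm0] at hd
  rw [hnz, mul_dvd_mul_iff_left hm0]
  have hcop : Nat.gcd a0.natAbs k = 1 := by
    apply hf
    · exact (Nat.gcd_dvd_right _ _).trans (Nat.gcd_dvd_right _ _)
    · intro a ha
      have h1 : ((Nat.gcd a0.natAbs k : ℕ):ℤ) ∣ a0 := Int.natCast_dvd.2 (Nat.gcd_dvd_left _ _)
      have h2 : Nat.gcd a0.natAbs k ∣ dA A := (Nat.gcd_dvd_right _ _).trans (Nat.gcd_dvd_left _ _)
      have h3 : dA A ∣ (a - a0).natAbs :=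
        Finset.gcd_dvd (f := fun p : ℤ × ℤ => (p.1 - p.2).natAbs) (b := (a, a0)) (by simp [ha, ha0])
      have h4 : ((Nat.gcd a0.natAbs k : ℕ):ℤ) ∣ a - a0 := Int.natCast_dvd.2 (h2.trans h3)
      have := dvd_add h4 h1
      simpa using this
  have hc : IsCoprime (k:ℤ) a0 := by
    rw [Int.isCoprime_iff_gcd_eq_one, Int.gcd_comm]
    simpa [Int.gcd] using hcop
  exact hc.dvd_of_dvd_mul_left hd

theorem k_le_D {A : Finset ℤ} {n D : ℕ} (hn : 0 < n) {a0 : ℤ} (ha0 : a0 ∈ A)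
    (hf : ∀ e : ℕ, e ∣ n → (∀ a ∈ A, (e:ℤ) ∣ a) → e = 1) (hHD : HD A n D) :
    Nat.gcd (dA A) n ≤ D := by
  set k := Nat.gcd (dA A) n with hk
  have hk0 : 0 < k := Nat.gcd_pos_of_pos_right _ hn
  obtain ⟨m, hm⟩ := Nat.gcd_dvd_right (dA A) n
  rw [← hk] at hm
  have hdiv := Nat.div_eq_of_eq_mul_right hk0 hm
  have hm0 : (m:ℤ) ≠ 0 := by
    have : m ≠ 0 := by rintro rfl; simp at hm; omega
    exact_mod_cast this
  have hnz : (n:ℤ) = m * k := by rw [mul_comm]; exact_mod_cast hm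
  have hcm : ∀ l : ℤ, Cst A n (m * l) := fun l => by
    rw [cst_iff' A n hn, ← hk, hdiv]; exact dvd_mul_right _ _
  obtain ⟨s, hs, hne, w, hw, hd⟩ := hHD (fun _ => (m:ℤ)) (Finset.range D) (by simp)
  have h1 : (n:ℤ) ∣ ∑ i ∈ s, (w i - a0) * (m:ℤ) := Finset.dvd_sum fun i _ => by
    have := hcm 1 (w i) (hw i) a0 ha0
    simpa using this
  have h2 : (n:ℤ) ∣ a0 * (m * (s.card:ℤ)) := by
    have := dvd_sub hd h1
    rw [← Finset.sum_sub_distrib] at this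
    have e : ∑ i ∈ s, (w i * (m:ℤ) - (w i - a0) * m) = a0 * (m * (s.card:ℤ)) := by
      rw [Finset.sum_congr rfl (g := fun _ => a0 * (m:ℤ)) (fun i _ => by ring), Finset.sum_const, nsmul_eq_mul]
      ring
    rwa [e] at this
  have h3 := faithful_cancel hn ha0 hf (hcm _) h2
  rw [hnz, mul_dvd_mul_iff_left hm0] at h3
  have h4 : k ∣ s.card := by exact_mod_cast h3
  have h5 := Nat.le_of_dvd (Finset.card_pos.2 hne) h4
  have h6 := Finset.card_le_card hs
  rw [Finset.card_range] at h6
  omega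

theorem caseC1 {A : Finset ℤ} {n D : ℕ} (hn : 1 < n) (hHD : HD A n D)
    {a0 : ℤ} (ha0 : a0 ∈ A) (hf : ∀ e : ℕ, e ∣ n → (∀ a ∈ A, (e:ℤ) ∣ a) → e = 1)
    (x : ℕ → ℤ) (I : Finset ℕ) (hI : I.card = n + D - 1)
    (hmult : ∀ g, Cst A n g → ((CC A n x I).filter (fun i => (n:ℤ) ∣ x i - g)).card + 2 ≤ D)
    (hsmall : (CC A n x I).card + 3 ≤ D + Nat.gcd (dA A) n)
    (hpoor : (NC A n x I).card + 2 ≤ n)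
    (hrich : ∀ q, q ∣ n → 1 < q → q < n → q ≤ (NC A q x I).card + 1) :
    ∃ S ⊆ I, S.card = n ∧ ZS A n x S := by
  classical
  have : NeZero n := ⟨by omega⟩
  have hkD := k_le_D (by omega) ha0 hf hHD
  have hcc := card_CC_add_NC A n x I
  set I1 := CC A n x I with hI1
  set T := NC A n x I with hT
  set j := n - T.card with hj
  obtain ⟨e, einj, eI, -, hsep⟩ := sorted_enum I1 (fun i => ((x i : ℤ) : ZMod n).val) (D - 1) (by
    intro v
    rcases (I1.filter (fun i => ((x i : ℤ) : ZMod n).val = v)).eq_empty_or_nonempty with h0 | ⟨i, hi⟩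
    · rw [h0]; simp
    · rw [Finset.mem_filter] at hi
      have := hmult (x i) (mem_CC.1 hi.1).2
      refine le_trans (Finset.card_le_card (t := I1.filter (fun j => (n:ℤ) ∣ x j - x i)) ?_) (by omega)
      intro i' hi'
      rw [Finset.mem_filter] at hi' ⊢
      refine ⟨hi'.1, ?_⟩
      rw [← ZMod.intCast_zmod_eq_zero_iff_dvd, Int.cast_sub, sub_eq_zero]
      exact ZMod.val_injective n (hi'.2.trans hi.2.symm))
  have hjc : j + (D - 1) = I1.card := by omega
  have hjD : j ≤ D - 1 := by omega
  have einj' : ∀ p q, p < I1.card → q < I1.card → e p = e q → p = q := fun p q hp hq h =>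
    einj hp hq h
  -- partner function
  let P := (Finset.range j).image e
  have hπ : ∃ pos : ℕ → ℕ, ∀ i ∈ P, pos i < j ∧ e (pos i) = i := by
    have : ∀ i, ∃ p, i ∈ P → p < j ∧ e p = i := by
      intro i
      by_cases hi : i ∈ P
      · obtain ⟨p, hp, hpi⟩ := Finset.mem_image.1 hi
        exact ⟨p, fun _ => ⟨by simpa using hp, hpi⟩⟩
      · exact ⟨0, fun h => absurd h hi⟩
    choose pos hpos using this
    exact ⟨pos, hpos⟩
  obtain ⟨pos, hpos⟩ := hπ
  have hPc : P.card = j := by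
    rw [Finset.card_image_of_injOn, Finset.card_range]
    intro p hp q hq h
    simp at hp hq
    exact einj' p q (by omega) (by omega) h
  have hPI : ∀ i ∈ P, i ∈ I1 := fun i hi => by
    have := hpos i hi
    rw [← this.2]; exact eI _ (by omega)
  have hPI' : ∀ i ∈ P, e (pos i + (D - 1)) ∈ I1 := fun i hi => by
    have := hpos i hi
    exact eI _ (by omega)
  have hTP : Disjoint T P := by
    rw [Finset.disjoint_left]
    intro i hi hi'
    exact (mem_NC.1 hi).2 (mem_CC.1 (hPI i hi')).2
  let B : ℕ → Finset ℤ := fun i =>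
    if i ∈ P then {a0 * x i, a0 * x (e (pos i + (D - 1)))} else A.image (fun a => a * x i)
  have hBT : ∀ q, ∀ i ∈ T, ¬ Cst A q (x i) → ∃ a ∈ B i, ∃ b ∈ B i, ¬ (q:ℤ) ∣ a - b := by
    intro q i hi hc
    have hiP : i ∉ P := Finset.disjoint_left.1 hTP hi
    unfold Cst at hc
    push Not at hc
    obtain ⟨a, ha, b, hb, hab⟩ := hc
    refine ⟨a * x i, ?_, b * x i, ?_, ?_⟩
    · simp only [B, hiP, if_false]; exact Finset.mem_image_of_mem _ ha
    · simp only [B, hiP, if_false]; exact Finset.mem_image_of_mem _ hb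
    · rw [← sub_mul]; exact hab
  obtain ⟨b, hb, hbd⟩ := fill n 1 (by omega) (one_dvd _) (T ∪ P) B (by simp) (by
      intro s hs hsn
      rw [one_mul] at hsn ⊢
      rcases lt_or_eq_of_le (Nat.le_of_dvd (by omega) hsn) with hlt | rfl
      · have h1 := hrich s hsn (by omega) hlt
        have h2 : (NC A s x I).card ≤ ((T ∪ P).filter (fun j => ∃ a ∈ B j, ∃ b ∈ B j, ¬ (s:ℤ) ∣ a - b)).card := by
          apply Finset.card_le_card
          intro i hi
          rw [mem_NC] at hi
          have hiT : i ∈ T := mem_NC.2 ⟨hi.1, fun h => hi.2 (h.mono hsn)⟩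
          rw [Finset.mem_filter]
          exact ⟨Finset.mem_union_left _ hiT, hBT s i hiT hi.2⟩
        omega
      · have h2 : (T ∪ P).card ≤ ((T ∪ P).filter (fun j => ∃ a ∈ B j, ∃ b ∈ B j, ¬ (s:ℤ) ∣ a - b)).card := by
          apply Finset.card_le_card
          intro i hi
          rw [Finset.mem_filter]
          refine ⟨hi, ?_⟩
          rcases Finset.mem_union.1 hi with hiT | hiP
          · exact hBT s i hiT (mem_NC.1 hiT).2
          · refine ⟨a0 * x i, by simp [B, hiP], a0 * x (e (pos i + (D - 1))), by simp [B, hiP], ?_⟩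
            intro hd
            rw [← mul_sub] at hd
            have h3 := faithful_cancel (by omega) ha0 hf
              ((mem_CC.1 (hPI i hiP)).2.sub (mem_CC.1 (hPI' i hiP)).2) hd
            have h4 := hpos i hiP
            apply hsep (pos i) (pos i + (D - 1)) (by omega) le_rfl
            rw [← ZMod.intCast_zmod_eq_zero_iff_dvd, Int.cast_sub, sub_eq_zero] at h3
            rw [h4.2, h3]
        rw [Finset.card_union_of_disjoint hTP, hPc] at h2
        omega)
    (fun i => a0 * x i) (by
      intro i hi
      by_cases hiP : i ∈ P
      · simp [B, hiP]
      · simp only [B, hiP, if_false]; exact Finset.mem_image_of_mem _ ha0) 0 (by simp)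
  have hv : ∀ i, ∃ a ∈ A, i ∈ T → a * x i = b i := by
    intro i
    by_cases hi : i ∈ T
    · have h1 := hb i (Finset.mem_union_left _ hi)
      have hiP : i ∉ P := Finset.disjoint_left.1 hTP hi
      simp only [B, hiP, if_false] at h1
      obtain ⟨a, ha, hab⟩ := Finset.mem_image.1 h1
      exact ⟨a, ha, fun _ => hab⟩
    · exact ⟨a0, ha0, fun h => absurd h hi⟩
  choose v hvA hv using hv
  have hc : ∀ i, ∃ c, i ∈ P → (c = e (pos i) ∨ c = e (pos i + (D - 1))) ∧ a0 * x c = b i := by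
    intro i
    by_cases hi : i ∈ P
    · have h1 := hb i (Finset.mem_union_right _ hi)
      simp only [B, hi, if_true, Finset.mem_insert, Finset.mem_singleton] at h1
      rcases h1 with h1 | h1
      · exact ⟨i, fun _ => ⟨Or.inl (hpos i hi).2.symm, h1.symm⟩⟩
      · exact ⟨_, fun _ => ⟨Or.inr rfl, h1.symm⟩⟩
    · exact ⟨0, fun h => absurd h hi⟩
  choose c hc using hc
  have hcI : ∀ i ∈ P, c i ∈ I1 := by
    intro i hi
    rcases (hc i hi).1 with h | h
    · rw [h, (hpos i hi).2]; exact hPI i hi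
    · rw [h]; exact hPI' i hi
  have hcinj : Set.InjOn c (P : Set ℕ) := by
    intro i hi i' hi' hcc'
    have hi : i ∈ P := hi
    have hi' : i' ∈ P := hi'
    have h1 := hpos i hi
    have h2 := hpos i' hi'
    have key : pos i = pos i' := by
      rcases (hc i hi).1 with h3 | h3 <;> rcases (hc i' hi').1 with h4 | h4
      · rw [h3, h4] at hcc'
        have := einj' _ _ (by omega) (by omega) hcc'
        omega
      · rw [h3, h4] at hcc'
        have := einj' _ _ (by omega) (by omega) hcc'
        omega
      · rw [h3, h4] at hcc'
        have := einj' _ _ (by omega) (by omega) hcc'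
        omega
      · rw [h3, h4] at hcc'
        have := einj' _ _ (by omega) (by omega) hcc'
        omega
    rw [← h1.2, ← h2.2, key]
  have hdis : Disjoint T (P.image c) := by
    rw [Finset.disjoint_left]
    intro i hi hi'
    obtain ⟨p, hp, rfl⟩ := Finset.mem_image.1 hi'
    exact (mem_NC.1 hi).2 (mem_CC.1 (hcI p hp)).2
  refine ⟨T ∪ P.image c, ?_, ?_, fun i => if i ∈ T then v i else a0, ?_, ?_⟩
  · intro i hi
    rcases Finset.mem_union.1 hi with h | h
    · exact (mem_NC.1 h).1
    · obtain ⟨p, hp, rfl⟩ := Finset.mem_image.1 h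
      exact (mem_CC.1 (hcI p hp)).1
  · rw [Finset.card_union_of_disjoint hdis, Finset.card_image_of_injOn hcinj, hPc]
    omega
  · intro i; dsimp only; split_ifs
    · exact hvA i
    · exact ha0
  · rw [Finset.sum_union hdis, Finset.sum_image hcinj]
    rw [Finset.sum_union hTP, zero_sub, dvd_neg] at hbd
    have e1 : ∑ i ∈ T, (if i ∈ T then v i else a0) * x i = ∑ i ∈ T, b i :=
      Finset.sum_congr rfl fun i hi => by simp [hi, hv i hi]
    have e2 : ∑ i ∈ P, (if c i ∈ T then v (c i) else a0) * x (c i) = ∑ i ∈ P, b i :=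
      Finset.sum_congr rfl fun i hi => by
        have : c i ∉ T := Finset.disjoint_right.1 hdis (Finset.mem_image_of_mem _ hi)
        simp [this, (hc i hi).2]
    rw [e1, e2]
    exact hbd

theorem arith_C2 (d r μ t : ℕ) (hr : 2 ≤ r) (hμ : 2 ≤ μ) (ht : t + 2 ≤ r)
    (h0 : Nat.gcd d r = r → t = 0) (hk : 2 * Nat.gcd d (r * μ) ≤ r * μ) :
    Nat.gcd d (r * μ) + μ + t + Nat.gcd d r ≤ r * μ + 4 := by
  set c := Nat.gcd d r with hc
  set k := Nat.gcd d (r * μ) with hkdef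
  have hc0 : 0 < c := Nat.gcd_pos_of_pos_right _ (by omega)
  obtain ⟨e, he⟩ := Nat.gcd_dvd_right d r
  rw [← hc] at he
  have hkc : k ∣ c * μ := (Nat.gcd_mul_right_dvd_mul_gcd d r μ).trans
    (mul_dvd_mul_left _ (Nat.gcd_dvd_right _ _))
  have hkle := Nat.le_of_dvd (Nat.mul_pos hc0 (by omega)) hkc
  rcases Nat.lt_or_ge e 2 with h | h
  · have he1 : e = 1 := by
      rcases Nat.eq_zero_or_pos e with rfl | h'
      · simp at he; omega
      · omega
    have hcr : c = r := by rw [he, he1, mul_one]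
    have := h0 hcr
    rw [hcr]
    obtain ⟨a, rfl⟩ := Nat.exists_eq_add_of_le hr
    obtain ⟨b, rfl⟩ := Nat.exists_eq_add_of_le hμ
    have e1 : (2 + a) * (2 + b) = 4 + 2 * a + 2 * b + a * b := by ring
    omega
  · rcases Nat.lt_or_ge e 3 with h3 | h3
    · have he2 : e = 2 := by omega
      have hr2 : r = 2 * c := by rw [he, he2, mul_comm]
      rcases Nat.lt_or_ge μ 3 with h4 | h4
      · have hμ2 : μ = 2 := by omega
        have : k ∣ c := by
          rw [hc]
          apply Nat.dvd_gcd
          · exact Nat.gcd_dvd_left _ _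
          · rw [hr2, mul_comm 2 c, ← hμ2]; exact hkc
        have := Nat.le_of_dvd hc0 this
        rw [hμ2]
        omega
      · obtain ⟨b, rfl⟩ := Nat.exists_eq_add_of_le h4
        obtain ⟨c', hc'⟩ := Nat.exists_eq_add_of_le (show 1 ≤ c from hc0)
        rw [hr2]
        have e1 : 2 * c * (3 + b) = c * (3 + b) + c * (3 + b) := by ring
        have e2 : c * (3 + b) = 3 * c + b + c' * b := by rw [hc']; ring
        omega
    · obtain ⟨f, rfl⟩ := Nat.exists_eq_add_of_le h3
      obtain ⟨b, rfl⟩ := Nat.exists_eq_add_of_le hμ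
      have e1 : r = 3 * c + c * f := by rw [he]; ring
      have e2 : r * (2 + b) = 6 * c + 2 * (c * f) + 3 * (c * b) + c * f * b := by rw [e1]; ring
      have e3 : c * (2 + b) = 2 * c + c * b := by ring
      have e4 : b ≤ c * b := Nat.le_mul_of_pos_left _ hc0
      have := Nat.zero_le (c * f * b)
      omega

theorem caseC2 {A : Finset ℤ} {n D r : ℕ} (hn : 1 < n) (hHD : HD A n D)
    {a0 : ℤ} (ha0 : a0 ∈ A)
    (IH : ∀ r < n, r ∣ n → ∀ D', HD A r D' → ∀ (x : ℕ → ℤ) (I : Finset ℕ), I.card = n + D' - 1 →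
      ∃ S ⊆ I, S.card = n ∧ ZS A r x S)
    (x : ℕ → ℤ) (I : Finset ℕ) (hI : I.card = n + D - 1)
    (hsmall : (CC A n x I).card + 3 ≤ D + Nat.gcd (dA A) n)
    (hpoor : (NC A n x I).card + 2 ≤ n)
    (hrn : r ∣ n) (hr2 : 2 ≤ r) (hrlt : r < n) (hpoorr : (NC A r x I).card + 2 ≤ r)
    (hrich : ∀ q, r ∣ q → q ∣ n → r < q → q < n → q ≤ (NC A q x I).card + 1) :
    ∃ S ⊆ I, S.card = n ∧ ZS A n x S := by
  classical
  have hD := hHD.pos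
  have hcc := card_CC_add_NC A n x I
  set D' := min D r with hD'
  have hHD' : HD A r D' := by
    rcases min_choice D r with h | h
    · rw [hD', h]; exact hHD.of_dvd hrn
    · rw [hD', h]; exact HD.self (by omega) ha0
  have hD'pos := hHD'.pos
  have hD'1 : D' ≤ D := min_le_left _ _
  have hD'2 : D' ≤ r := min_le_right _ _
  obtain ⟨X, hXs, hXc⟩ := Finset.exists_subset_card_eq (s := CC A n x I) (n := D - D') (by omega)
  have hXI : X ⊆ I := fun i hi => (mem_CC.1 (hXs hi)).1
  set R := I \ X with hR
  have hRI : R ⊆ I := Finset.sdiff_subset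
  have hRc : R.card = n + D' - 1 := by
    have := Finset.card_sdiff_add_card_eq_card hXI
    rw [← hR] at this
    omega
  have hRN : ∀ q, q ∣ n → (NC A q x R).card = (NC A q x I).card := by
    intro q hq
    congr 1
    ext i
    rw [mem_NC, mem_NC, hR, Finset.mem_sdiff]
    constructor
    · rintro ⟨h1, h2⟩; exact ⟨h1.1, h2⟩
    · rintro ⟨h1, h2⟩
      exact ⟨⟨h1, fun h3 => h2 ((mem_CC.1 (hXs h3)).2.mono hq)⟩, h2⟩
  let F := R.powerset.filter (fun S => S.card = n ∧ ZS A r x S)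
  have hF : F.Nonempty := by
    obtain ⟨S, h1, h2, h3⟩ := IH r hrlt hrn D' hHD' x R hRc
    exact ⟨S, by rw [Finset.mem_filter, Finset.mem_powerset]; exact ⟨h1, h2, h3⟩⟩
  obtain ⟨S, hSF, hmax⟩ := Finset.exists_max_image F (fun S => (NC A n x S).card) hF
  rw [Finset.mem_filter, Finset.mem_powerset] at hSF
  obtain ⟨hSR, hSc, hSz⟩ := hSF
  refine ⟨S, hSR.trans hRI, hSc, fill_apply (by omega) hrn ha0 x S hSz ?_⟩
  intro s hs hsn
  have hrs : r < r * s := by nlinarith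
  have hRS := Finset.card_sdiff_add_card_eq_card hSR
  rcases lt_or_eq_of_le (Nat.le_of_dvd (by omega) hsn) with hlt | heq
  · have h1 := hrich (r * s) (dvd_mul_right _ _) hsn hrs hlt
    have h2 := count_le (A := A) (r := r) (q := r * s) x R S
    rw [hRN _ hsn, hRN _ hrn] at h2
    exact count_arith hs hr2 (t := (NC A r x I).card) (e := (R \ S).card) (by omega) (by omega) h1 h2
  · by_contra hcon
    rw [heq] at hcon
    set s0 := (NC A n x (CC A r x S)).card with hs0
    set c := Nat.gcd (dA A) r with hc
    have hc0 : 0 < c := Nat.gcd_pos_of_pos_right _ (by omega)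
    set k := Nat.gcd (dA A) n with hk
    have hk0 : 0 < k := Nat.gcd_pos_of_pos_right _ (by omega)
    -- k is a proper divisor
    have hk2 : 2 * k ≤ n := by
      obtain ⟨m, hm⟩ := Nat.gcd_dvd_right (dA A) n
      rw [← hk] at hm
      have hm1 : m ≠ 1 := by
        rintro rfl
        have hz : (NC A n x I).card = 0 := by
          rw [Finset.card_eq_zero, Finset.eq_empty_iff_forall_notMem]
          intro i hi
          apply (mem_NC.1 hi).2
          rw [cst_iff' A n (by omega), ← hk, Nat.div_eq_of_eq_mul_right hk0 hm]
          simp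
        omega
      have hm0 : m ≠ 0 := by rintro rfl; simp at hm; omega
      have : 2 ≤ m := by omega
      calc 2 * k = k * 2 := mul_comm _ _
        _ ≤ k * m := Nat.mul_le_mul_left _ this
        _ = n := hm.symm
    have harith : k + s + (NC A r x I).card + c ≤ n + 4 := by
      have := arith_C2 (dA A) r s (NC A r x I).card hr2 hs hpoorr (by
        intro hcr
        rw [Finset.card_eq_zero, Finset.eq_empty_iff_forall_notMem]
        intro i hi
        apply (mem_NC.1 hi).2
        rw [cst_iff' A r (by omega), hcr, Nat.div_self (by omega)]
        simp) (by rw [heq]; exact hk2)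
      rw [heq] at this
      exact this
    set Fo := NC A n x (CC A r x (R \ S)) with hFo
    set Ka := CC A n x S with hKa
    have hf : (NC A n x R).card ≤ s0 + Fo.card + (NC A r x R).card := by
      have : NC A n x R ⊆ (NC A n x (CC A r x S) ∪ Fo) ∪ NC A r x R := by
        intro i hi
        rw [mem_NC] at hi
        simp only [hFo, Finset.mem_union, mem_NC, mem_CC, Finset.mem_sdiff]
        tauto
      have h1 := Finset.card_le_card this
      have h2 := Finset.card_union_le (NC A n x (CC A r x S) ∪ Fo) (NC A r x R)
      have h3 := Finset.card_union_le (NC A n x (CC A r x S)) Fo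
      omega
    rw [hRN _ dvd_rfl, hRN _ hrn] at hf
    have ha : (NC A n x S).card ≤ s0 + (NC A r x R).card := by
      have : NC A n x S ⊆ NC A n x (CC A r x S) ∪ NC A r x R := by
        intro i hi
        rw [mem_NC] at hi
        have := hSR hi.1
        simp only [Finset.mem_union, mem_NC, mem_CC]
        tauto
      exact (Finset.card_le_card this).trans (Finset.card_union_le _ _)
    rw [hRN _ hrn] at ha
    have hccS := card_CC_add_NC A n x S
    rw [← hKa] at hccS
    have hcf : c ≤ Fo.card := by omega
    have hca : c ≤ Ka.card := by omega
    -- enumerations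
    obtain ⟨α, αinj, αI, -, -⟩ := sorted_enum Fo (fun _ => 0) Fo.card (fun v => Finset.card_filter_le _ _)
    obtain ⟨β, βinj, βI, -, -⟩ := sorted_enum Ka (fun _ => 0) Ka.card (fun v => Finset.card_filter_le _ _)
    obtain ⟨m, hm⟩ := Nat.gcd_dvd_right (dA A) r
    rw [← hc] at hm
    have hdiv := Nat.div_eq_of_eq_mul_right hc0 hm
    have hex : ∀ p, ∃ u : ℤ, p < c → x (α p) - x (β p) = m * u := by
      intro p
      by_cases hp : p < c
      · have h1 := (mem_CC.1 (mem_NC.1 (αI p (by omega))).1).2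
        have h2 := (mem_CC.1 (βI p (by omega))).2.mono hrn
        have h3 := h1.sub h2
        rw [cst_iff' A r (by omega), ← hc, hdiv] at h3
        obtain ⟨u, hu⟩ := h3
        exact ⟨u, fun _ => hu⟩
      · exact ⟨0, fun h => absurd h hp⟩
    choose u hu using hex
    obtain ⟨P, hPs, hPne, hPd⟩ := davenport c hc0 (Finset.range c) u (by simp)
    have hPlt : ∀ p ∈ P, p < c := fun p hp => by simpa using hPs hp
    have αinjP : Set.InjOn α (P : Set ℕ) := by
      intro p hp q hq h
      have := hPlt p hp
      have := hPlt q hq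
      exact αinj (by simp; omega) (by simp; omega) h
    have βinjP : Set.InjOn β (P : Set ℕ) := by
      intro p hp q hq h
      have := hPlt p hp
      have := hPlt q hq
      exact βinj (by simp; omega) (by simp; omega) h
    have hdd : (r:ℤ) ∣ ∑ p ∈ P, x (α p) - ∑ p ∈ P, x (β p) := by
      rw [← Finset.sum_sub_distrib, Finset.sum_congr rfl (fun p hp => hu p (hPlt p hp)), ← Finset.mul_sum]
      have : (r:ℤ) = m * c := by rw [mul_comm]; exact_mod_cast hm
      rw [this]
      exact mul_dvd_mul_left _ hPd
    have hβS : P.image β ⊆ S := by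
      intro i hi
      obtain ⟨p, hp, rfl⟩ := Finset.mem_image.1 hi
      have := hPlt p hp
      exact (mem_CC.1 (βI p (by omega))).1
    have hβC : ∀ i ∈ P.image β, Cst A n (x i) := by
      intro i hi
      obtain ⟨p, hp, rfl⟩ := Finset.mem_image.1 hi
      have := hPlt p hp
      exact (mem_CC.1 (βI p (by omega))).2
    have hαF : ∀ i ∈ P.image α, i ∈ Fo := by
      intro i hi
      obtain ⟨p, hp, rfl⟩ := Finset.mem_image.1 hi
      have := hPlt p hp
      exact αI p (by omega)
    have hαS : ∀ i ∈ P.image α, i ∈ R ∧ i ∉ S := fun i hi => by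
      have := (mem_CC.1 (mem_NC.1 (hαF i hi)).1).1
      exact Finset.mem_sdiff.1 this
    have hdis : Disjoint (S \ P.image β) (P.image α) := by
      rw [Finset.disjoint_right]
      intro i hi hi'
      exact (hαS i hi).2 (Finset.mem_sdiff.1 hi').1
    have hmem : (S \ P.image β) ∪ P.image α ∈ F := by
      rw [Finset.mem_filter, Finset.mem_powerset]
      refine ⟨?_, ?_, ?_⟩
      · apply Finset.union_subset (Finset.sdiff_subset.trans hSR)
        intro i hi; exact (hαS i hi).1
      · rw [Finset.card_union_of_disjoint hdis, Finset.card_image_of_injOn αinjP]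
        have := Finset.card_sdiff_add_card_eq_card hβS
        rw [Finset.card_image_of_injOn βinjP] at this
        omega
      · obtain ⟨w, hw, hwd⟩ := hSz
        refine ⟨fun i => if i ∈ S then w i else a0, fun i => by dsimp only; split_ifs <;> simp [hw, ha0], ?_⟩
        rw [Finset.sum_union hdis]
        have e1 : ∑ i ∈ S \ P.image β, (if i ∈ S then w i else a0) * x i = ∑ i ∈ S \ P.image β, w i * x i :=
          Finset.sum_congr rfl fun i hi => by simp [(Finset.mem_sdiff.1 hi).1]
        have e2 : ∑ i ∈ P.image α, (if i ∈ S then w i else a0) * x i = a0 * ∑ p ∈ P, x (α p) := by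
          rw [Finset.sum_congr rfl (g := fun i => a0 * x i) (fun i hi => by simp [(hαS i hi).2]),
            ← Finset.mul_sum, Finset.sum_image αinjP]
        rw [e1, e2]
        have e3 := Finset.sum_sdiff (f := fun i => w i * x i) hβS
        have h1 : (r:ℤ) ∣ ∑ i ∈ P.image β, (w i - a0) * x i :=
          Finset.dvd_sum fun i hi => (hβC i hi).mono hrn _ (hw i) _ ha0
        have e4 : ∑ i ∈ P.image β, (w i - a0) * x i = ∑ i ∈ P.image β, w i * x i - a0 * ∑ p ∈ P, x (β p) := by
          rw [← Finset.sum_image βinjP (f := x), Finset.mul_sum, ← Finset.sum_sub_distrib]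
          exact Finset.sum_congr rfl fun i _ => by ring
        have h2 := dvd_add (dvd_sub hwd h1) (dvd_mul_of_dvd_right hdd a0)
        have e5 : ∑ i ∈ S \ P.image β, w i * x i + a0 * ∑ p ∈ P, x (α p) =
            ∑ i ∈ S, w i * x i - ∑ i ∈ P.image β, (w i - a0) * x i +
              a0 * (∑ p ∈ P, x (α p) - ∑ p ∈ P, x (β p)) := by
          rw [e4, ← e3]; ring
        rw [e5]; exact h2
    have hle := hmax _ hmem
    have hsub : NC A n x S ∪ P.image α ⊆ NC A n x ((S \ P.image β) ∪ P.image α) := by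
      intro i hi
      rw [mem_NC, Finset.mem_union, Finset.mem_sdiff]
      rcases Finset.mem_union.1 hi with h | h
      · rw [mem_NC] at h
        exact ⟨Or.inl ⟨h.1, fun h' => h.2 (hβC i h')⟩, h.2⟩
      · exact ⟨Or.inr h, (mem_NC.1 (hαF i h)).2⟩
    have h1 := Finset.card_le_card hsub
    rw [Finset.card_union_of_disjoint, Finset.card_image_of_injOn αinjP] at h1
    · have := Finset.card_pos.2 hPne
      omega
    · rw [Finset.disjoint_right]
      intro i hi hi'
      exact (hαS i hi).2 (mem_NC.1 hi').1

theorem main_thm (n : ℕ) : ∀ (A : Finset ℤ) (a0 : ℤ) (N D : ℕ), 0 < n → a0 ∈ A → 0 < N → n ∣ N →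
    HD A n D → ∀ (x : ℕ → ℤ) (I : Finset ℕ), I.card = N + D - 1 →
      ∃ S ⊆ I, S.card = N ∧ ZS A n x S := by
  classical
  induction n using Nat.strong_induction_on with
  | _ n ih =>
  intro A a0 N D hn ha0 hN hnN hHD x I hI
  have hD := hHD.pos
  by_cases hf : ∀ e : ℕ, e ∣ n → (∀ a ∈ A, (e:ℤ) ∣ a) → e = 1
  swap
  · push Not at hf
    obtain ⟨e, ⟨n', hn'⟩, heA, he1⟩ := hf
    have he0 : e ≠ 0 := by rintro rfl; simp at hn'; omega
    have hn'0 : 0 < n' := by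
      rcases Nat.eq_zero_or_pos n' with rfl | h
      · simp at hn'; omega
      · exact h
    have hlt : n' < n := by
      rw [hn']
      have : 2 ≤ e := by omega
      nlinarith
    have hez : (e:ℤ) ≠ 0 := by exact_mod_cast he0
    have hnz : (n:ℤ) = e * n' := by exact_mod_cast hn'
    have hdivA : ∀ a ∈ A, a = e * (a / e) := fun a ha => (Int.mul_ediv_cancel' (heA a ha)).symm
    let A' := A.image (fun a => a / (e:ℤ))
    have hHD' : HD A' n' D := by
      intro x I hI
      obtain ⟨s, h1, h2, w, hw, hd⟩ := hHD x I hI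
      refine ⟨s, h1, h2, fun i => w i / e, fun i => Finset.mem_image_of_mem _ (hw i), ?_⟩
      have e1 : ∑ i ∈ s, w i * x i = e * ∑ i ∈ s, w i / e * x i := by
        rw [Finset.mul_sum]
        apply Finset.sum_congr rfl
        intro i _
        rw [← mul_assoc, ← hdivA _ (hw i)]
      rw [e1, hnz, mul_dvd_mul_iff_left hez] at hd
      exact hd
    obtain ⟨S, h1, h2, w, hw, hd⟩ := ih n' hlt A' (a0 / e) N D hn'0 (Finset.mem_image_of_mem _ ha0) hN
      (dvd_trans ⟨e, by rw [hn', mul_comm]⟩ hnN) hHD' x I hI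
    have : ∀ i, ∃ a ∈ A, a / (e:ℤ) = w i := fun i => Finset.mem_image.1 (hw i)
    choose v hvA hv using this
    refine ⟨S, h1, h2, v, hvA, ?_⟩
    have e1 : ∑ i ∈ S, v i * x i = e * ∑ i ∈ S, w i * x i := by
      rw [Finset.mul_sum]
      apply Finset.sum_congr rfl
      intro i _
      rw [← mul_assoc, ← hv i, ← hdivA _ (hvA i)]
    rw [e1, hnz]
    exact mul_dvd_mul_left _ hd
  by_cases hA : (∃ g, Cst A n g ∧ D ≤ ((CC A n x I).filter (fun i => (n:ℤ) ∣ x i - g)).card + 1) ∨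
      D + Nat.gcd (dA A) n ≤ (CC A n x I).card + 2
  · exact caseA hn hnN hHD ha0 x I (CC A n x I) hI (fun i => mem_CC) hA
  push Not at hA
  obtain ⟨hA1, hA2⟩ := hA
  have hcc := card_CC_add_NC A n x I
  have hkn : Nat.gcd (dA A) n ≤ n := Nat.le_of_dvd hn (Nat.gcd_dvd_right _ _)
  have hn1 : 1 < n := by
    by_contra hcon
    have : n = 1 := by omega
    subst this
    rw [NC_one] at hcc
    omega
  by_cases hrich : n ≤ (NC A n x I).card + 1
  · exact caseB hn1 hnN hN hHD ha0
      (fun r hr hrn D' hD' x I hI => ih r hr A a0 N D' (Nat.pos_of_dvd_of_pos hrn hn) ha0 hN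
        (hrn.trans hnN) hD' x I hI) x I hI hrich
  have hNn : N = n := by
    obtain ⟨m, hm⟩ := hnN
    have h1 : n * m < n * 2 := by omega
    have h2 : m < 2 := lt_of_mul_lt_mul_left h1 (Nat.zero_le _)
    have h3 : m ≠ 0 := by rintro rfl; simp at hm; omega
    have : m = 1 := by omega
    rw [hm, this, mul_one]
  subst hNn
  obtain ⟨r, hrn, hrlt, hpoor, hrq⟩ := exists_max_poor (A := A) hn1 x I
  rcases Nat.lt_or_ge r 2 with hr | hr
  · have hr1 : r = 1 := by
      have := Nat.pos_of_dvd_of_pos hrn hn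
      omega
    subst hr1
    exact caseC1 hn1 hHD ha0 hf x I hI (fun g hg => by have := hA1 g hg; omega) (by omega) (by omega)
      (fun q hq h1 h2 => hrq q (one_dvd _) hq h1 h2)
  · exact caseC2 hn1 hHD ha0
      (fun r hr hrn D' hD' x I hI => ih r hr A a0 N D' (Nat.pos_of_dvd_of_pos hrn hn) ha0 hN
        hrn hD' x I hI) x I hI (by omega) (by omega) hrn hr hrlt (by omega) hrq

theorem weighted_EGZ_eq (n : ℕ) (hn : 0 < n) (A : Finset ℤ) (hA : A.Nonempty)
    (D E : ℕ)
    (hD : IsLeast {k : ℕ | ∀ x : Fin k → ZMod n, ∃ (s : Finset (Fin k)) (w : Fin k → ℤ),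
      s.Nonempty ∧ (∀ i ∈ s, w i ∈ A) ∧ ∑ i ∈ s, w i • x i = 0} D)
    (hE : IsLeast {k : ℕ | ∀ x : Fin k → ZMod n, ∃ (s : Finset (Fin k)) (w : Fin k → ℤ),
      s.card = n ∧ (∀ i ∈ s, w i ∈ A) ∧ ∑ i ∈ s, w i • x i = 0} E) :
    E = D + n - 1 := by
  classical
  obtain ⟨a0, ha0⟩ := hA
  have hHD : HD A n D := by
    intro x I hI
    let e := I.orderEmbOfFin hI
    obtain ⟨s, w, hne, hw, hsum⟩ := hD.1 (fun i => ((x (e i) : ℤ) : ZMod n))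
    refine ⟨s.map e.toEmbedding, ?_, by simpa using hne,
      Function.extend e (fun i => if i ∈ s then w i else a0) (fun _ => a0), ?_, ?_⟩
    · intro j hj
      obtain ⟨i, hi, rfl⟩ := Finset.mem_map.1 hj
      exact I.orderEmbOfFin_mem hI i
    · intro j
      by_cases hj : ∃ i, e i = j
      · obtain ⟨i, rfl⟩ := hj
        rw [e.injective.extend_apply]
        split_ifs with h
        · exact hw i h
        · exact ha0
      · rw [Function.extend_apply' _ _ _ hj]; exact ha0
    · rw [Finset.sum_map, ← ZMod.intCast_zmod_eq_zero_iff_dvd, ← hsum]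
      push_cast
      apply Finset.sum_congr rfl
      intro i hi
      have : Function.extend e (fun i => if i ∈ s then w i else a0) (fun _ => a0) (e i) = w i := by
        rw [e.injective.extend_apply]; simp [hi]
      simp only [RelEmbedding.coe_toEmbedding, zsmul_eq_mul, this]
  have hDpos := hHD.pos
  apply le_antisymm
  · apply hE.2
    intro x
    have hsurj : ∀ i : Fin (D + n - 1), ∃ z : ℤ, (z : ZMod n) = x i := fun i => ZMod.intCast_surjective _
    choose z hz using hsurj
    obtain ⟨S, hS, hc, w, hw, hd⟩ := main_thm n A a0 n D hn ha0 hn dvd_rfl hHD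
      (fun i => if h : i < D + n - 1 then z ⟨i, h⟩ else 0) (Finset.range (D + n - 1))
      (by rw [Finset.card_range]; omega)
    have hlt : ∀ m ∈ S, m < D + n - 1 := fun m hm => by simpa using hS hm
    refine ⟨S.attachFin hlt, fun i => w i, by rw [Finset.card_attachFin]; exact hc, fun i _ => hw i, ?_⟩
    rw [← ZMod.intCast_zmod_eq_zero_iff_dvd, ← Finset.map_valEmbedding_attachFin hlt, Finset.sum_map] at hd
    rw [← hd]
    push_cast
    apply Finset.sum_congr rfl
    intro i _
    simp [hz]
  · by_contra hcon
    have hnot : D - 1 ∉ {k : ℕ | ∀ x : Fin k → ZMod n, ∃ (s : Finset (Fin k)) (w : Fin k → ℤ),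
      s.Nonempty ∧ (∀ i ∈ s, w i ∈ A) ∧ ∑ i ∈ s, w i • x i = 0} := fun h => by
      have := hD.2 h
      omega
    apply hnot
    intro y
    obtain ⟨s, w, hsc, hw, hsum⟩ := hE.1 (fun i => if h : i.val < D - 1 then y ⟨i.val, h⟩ else 0)
    set s1 := s.filter (fun i => i.val < D - 1) with hs1
    have hs1ne : s1.Nonempty := by
      by_contra h0
      rw [Finset.not_nonempty_iff_eq_empty] at h0
      have hsub : s.map Fin.valEmbedding ⊆ Finset.Ico (D - 1) E := by
        intro j hj
        obtain ⟨i, hi, rfl⟩ := Finset.mem_map.1 hj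
        rw [Finset.mem_Ico]
        refine ⟨?_, i.2⟩
        by_contra hlt
        have : i ∈ s1 := by rw [hs1, Finset.mem_filter]; exact ⟨hi, not_le.1 hlt⟩
        rw [h0] at this; simp at this
      have := Finset.card_le_card hsub
      rw [Finset.card_map, Nat.card_Ico] at this
      omega
    have hlt : ∀ m ∈ s1.map Fin.valEmbedding, m < D - 1 := by
      intro m hm
      obtain ⟨i, hi, rfl⟩ := Finset.mem_map.1 hm
      exact (Finset.mem_filter.1 hi).2
    have hs : ∑ i ∈ s, w i • (if h : i.val < D - 1 then y ⟨i.val, h⟩ else 0) =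
        ∑ i ∈ s1, w i • (if h : i.val < D - 1 then y ⟨i.val, h⟩ else 0) := by
      rw [hs1, Finset.sum_filter]
      apply Finset.sum_congr rfl
      intro i _
      split_ifs <;> simp
    let W : ℕ → ℤ := fun m => if h : m < E then w ⟨m, h⟩ else a0
    let Y : ℕ → ZMod n := fun m => if h : m < D - 1 then y ⟨m, h⟩ else 0
    refine ⟨(s1.map Fin.valEmbedding).attachFin hlt, fun i => W i, ?_, ?_, ?_⟩
    · rw [← Finset.card_pos, Finset.card_attachFin, Finset.card_map]
      exact Finset.card_pos.2 hs1ne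
    · intro i hi
      rw [Finset.mem_attachFin] at hi
      obtain ⟨j, hj, hji⟩ := Finset.mem_map.1 hi
      have hji' : j.val = i.val := hji
      have : W i = w j := by
        simp only [W, ← hji', j.2, dif_pos]
      dsimp only
      rw [this]
      exact hw j (Finset.mem_filter.1 hj).1
    · have e1 : ∑ i ∈ (s1.map Fin.valEmbedding).attachFin hlt, W i • y i =
          ∑ m ∈ s1.map Fin.valEmbedding, W m • Y m := by
        conv_rhs => rw [← Finset.map_valEmbedding_attachFin hlt, Finset.sum_map]
        apply Finset.sum_congr rfl
        intro i _
        simp [Y]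
      rw [e1, Finset.sum_map, ← hsum, hs]
      apply Finset.sum_congr rfl
      intro i _
      simp [W, Y]
end

section
/- Let G be a finite abelian group, A = (A_1,...,A_m) a sequence of finite nonempty subsets of G, and l ≤ m. Let Σ_l(A) be the set of all sums a_{i_1}+...+a_{i_l} with i_1 < ... < i_l and a_{i_j} ∈ A_{i_j}. Let H = stab(Σ_l(A)) be the stabilizer {h ∈ G : h + Σ_l(A) = Σ_l(A)}. If Σ_l(A) is nonempty, then |Σ_l(A)| ≥ |H| · (1 − l + Σ_{Q ∈ G/H} min{l, |{i : A_i ∩ Q ≠ ∅}|}). -/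
set_option linter.unusedSectionVars false

universe u v

namespace DGM
open Finset
open scoped Classical Pointwise

section basics
variable {G : Type*} [AddCommGroup G] [Fintype G]

/-- the finset of elements of a subgroup -/
noncomputable def fs (K : AddSubgroup G) : Finset G := univ.filter (· ∈ K)

@[simp] lemma mem_fs {K : AddSubgroup G} {g : G} : g ∈ fs K ↔ g ∈ K := by simp [fs]

lemma fs_pos (K : AddSubgroup G) : 0 < (fs K).card :=
  card_pos.2 ⟨0, by simp⟩

lemma fs_mono {K M : AddSubgroup G} (h : K ≤ M) : (fs K).card ≤ (fs M).card :=
  card_le_card fun g hg => by simpa using h (by simpa using hg)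

/-- stabilizer -/
def stb (S : Finset G) : AddSubgroup G where
  carrier := {h | ∀ s, h + s ∈ S ↔ s ∈ S}
  zero_mem' := by intro s; simp
  add_mem' := by
    intro a b ha hb s
    rw [add_assoc, ha, hb]
  neg_mem' := by
    intro a ha s
    rw [← ha (-a + s)]; simp

lemma mem_stb {S : Finset G} {h : G} : h ∈ stb S ↔ ∀ s, h + s ∈ S ↔ s ∈ S := Iff.rfl

lemma mem_stb_of_forall {S : Finset G} {h : G} (hh : ∀ s ∈ S, h + s ∈ S) : h ∈ stb S := by
  intro s
  refine ⟨fun hs => ?_, hh s⟩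
  have himg : S.image (h + ·) = S := by
    apply eq_of_subset_of_card_le
    · intro y hy
      obtain ⟨z, hz, rfl⟩ := mem_image.1 hy
      exact hh z hz
    · rw [card_image_of_injective _ (add_right_injective h)]
  rw [← himg] at hs
  obtain ⟨z, hz, hzz⟩ := mem_image.1 hs
  have := add_left_cancel hzz
  rwa [← this]

/-- `K`-hull of a set -/
noncomputable def hull (K : AddSubgroup G) (A : Finset G) : Finset G :=
  univ.filter fun g => ∃ a ∈ A, a - g ∈ K

lemma mem_hull {K : AddSubgroup G} {A : Finset G} {g : G} :
    g ∈ hull K A ↔ ∃ a ∈ A, a - g ∈ K := by simp [hull]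

lemma subset_hull (K : AddSubgroup G) (A : Finset G) : A ⊆ hull K A := fun a ha =>
  mem_hull.2 ⟨a, ha, by simp⟩

lemma hull_nonempty {K : AddSubgroup G} {A : Finset G} : (hull K A).Nonempty ↔ A.Nonempty := by
  constructor
  · rintro ⟨g, hg⟩
    obtain ⟨a, ha, _⟩ := mem_hull.1 hg
    exact ⟨a, ha⟩
  · rintro ⟨a, ha⟩
    exact ⟨a, subset_hull K A ha⟩

lemma hull_mono_left {K M : AddSubgroup G} (h : K ≤ M) (A : Finset G) : hull K A ⊆ hull M A := by
  intro g hg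
  obtain ⟨a, ha, h1⟩ := mem_hull.1 hg
  exact mem_hull.2 ⟨a, ha, h h1⟩

lemma hull_mono_right (K : AddSubgroup G) {A B : Finset G} (h : A ⊆ B) : hull K A ⊆ hull K B := by
  intro g hg
  obtain ⟨a, ha, h1⟩ := mem_hull.1 hg
  exact mem_hull.2 ⟨a, h ha, h1⟩

lemma hull_union (K : AddSubgroup G) (A B : Finset G) : hull K (A ∪ B) = hull K A ∪ hull K B := by
  ext g
  simp only [mem_hull, mem_union, or_and_right, exists_or]

lemma le_stb_hull (K : AddSubgroup G) (A : Finset G) : K ≤ stb (hull K A) := by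
  intro h hh
  apply mem_stb_of_forall
  intro s hs
  obtain ⟨a, ha, h1⟩ := mem_hull.1 hs
  refine mem_hull.2 ⟨a, ha, ?_⟩
  have := K.sub_mem h1 hh
  convert this using 1
  abel

lemma hull_eq {K : AddSubgroup G} {A : Finset G} (h : K ≤ stb A) : hull K A = A := by
  apply Subset.antisymm _ (subset_hull K A)
  intro g hg
  obtain ⟨a, ha, h1⟩ := mem_hull.1 hg
  have := (mem_stb.1 (h (K.neg_mem h1)) a).2 ha
  convert this using 1
  abel

lemma hull_hull {K M : AddSubgroup G} (h : K ≤ M) (A : Finset G) : hull M (hull K A) = hull M A := by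
  apply Subset.antisymm
  · intro g hg
    obtain ⟨a, ha, h1⟩ := mem_hull.1 hg
    obtain ⟨b, hb, h2⟩ := mem_hull.1 ha
    refine mem_hull.2 ⟨b, hb, ?_⟩
    have := M.add_mem (h h2) h1
    convert this using 1
    abel
  · exact hull_mono_right M (subset_hull K A)

lemma hull_bot (A : Finset G) : hull ⊥ A = A := hull_eq bot_le

lemma hull_add (K : AddSubgroup G) (A B : Finset G) : hull K A + B = hull K (A + B) := by
  ext g
  simp only [mem_add, mem_hull]
  constructor
  · rintro ⟨y, ⟨a, ha, h1⟩, b, hb, rfl⟩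
    refine ⟨a + b, ⟨a, ha, b, hb, rfl⟩, ?_⟩
    convert h1 using 1; abel
  · rintro ⟨_, ⟨a, ha, b, hb, rfl⟩, h1⟩
    refine ⟨g - b, ⟨a, ha, ?_⟩, b, hb, by abel⟩
    convert h1 using 1; abel

lemma add_hull (K : AddSubgroup G) (A B : Finset G) : A + hull K B = hull K (A + B) := by
  rw [add_comm, hull_add, add_comm]

lemma hull_add_hull (K : AddSubgroup G) (A B : Finset G) :
    hull K A + hull K B = hull K (A + B) := by
  rw [hull_add, add_hull, hull_hull le_rfl]

lemma stb_le_stb_add (A B : Finset G) : stb A ≤ stb (A + B) := by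
  intro h hh
  apply mem_stb_of_forall
  intro s hs
  obtain ⟨a, ha, b, hb, rfl⟩ := mem_add.1 hs
  refine mem_add.2 ⟨h + a, (hh a).2 ha, b, hb, by abel⟩

lemma stb_le_stb_add' (A B : Finset G) : stb B ≤ stb (A + B) := by
  rw [add_comm]; exact stb_le_stb_add B A

lemma stb_union (A B : Finset G) : stb A ⊓ stb B ≤ stb (A ∪ B) := by
  rintro h ⟨h1, h2⟩ s
  simp only [mem_union]
  rw [h1 s, h2 s]

/-- the coset of `K` through `x` -/
lemma mem_hull_singleton {K : AddSubgroup G} {x g : G} : g ∈ hull K {x} ↔ x - g ∈ K := by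
  simp [mem_hull]

lemma card_hull_singleton (K : AddSubgroup G) (x : G) : (hull K {x}).card = (fs K).card := by
  symm
  apply card_bij (fun g _ => x - g)
  · intro a ha
    rw [mem_hull_singleton]; simpa using ha
  · intro a _ b _ h
    simpa using h
  · intro b hb
    rw [mem_hull_singleton] at hb
    exact ⟨x - b, by simpa using hb, by simp⟩

lemma hull_singleton_subset {K : AddSubgroup G} {C : Finset G} (h : K ≤ stb C) {x : G}
    (hx : x ∈ C) : hull K {x} ⊆ C := by
  rw [← hull_eq h]
  exact hull_mono_right K (by simpa using hx)

lemma stb_le_of_subset {K : AddSubgroup G} {X : Finset G} {x : G} (hX : X ⊆ hull K {x})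
    (hne : X.Nonempty) : stb X ≤ K := by
  intro h hh
  obtain ⟨y, hy⟩ := hne
  have h1 := mem_hull_singleton.1 (hX hy)
  have h2 := mem_hull_singleton.1 (hX ((hh y).2 hy))
  have := K.sub_mem h1 h2
  convert this using 1
  abel

lemma fs_card_le {K : AddSubgroup G} {X : Finset G} (h : K ≤ stb X) (hne : X.Nonempty) :
    (fs K).card ≤ X.card := by
  obtain ⟨y, hy⟩ := hne
  rw [← card_hull_singleton K y]
  exact card_le_card (hull_singleton_subset h hy)

/-! ### Kemperman's lemma -/

lemma kl_half (C1 C2 : Finset G) (x : G) (hx2 : x ∈ C2) (hx1 : x ∉ C1) :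
    (fs (stb C1)).card ≤ (C2 \ C1).card + (fs (stb C1 ⊓ stb C2)).card ∨
    (fs (stb C2)).card ≤ (C1 \ C2).card + (fs (stb C1 ⊓ stb C2)).card ∨
    (fs (stb C2)).card ≤ (C2 \ C1).card := by
  set H1 := stb C1 with hH1
  set H2 := stb C2 with hH2
  set D := H1 ⊓ H2 with hD
  set d := (fs D).card with hd
  set U := (fs H2).filter fun h => x + h ∉ C1 with hU
  set U' := (fs H2).filter fun h => ¬ (x + h ∉ C1) with hU'
  set V := (fs H1).filter fun h => x + h ∈ C2 with hV
  set V' := (fs H1).filter fun h => ¬ (x + h ∈ C2) with hV'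
  have cU : U.card + U'.card = (fs H2).card := card_filter_add_card_filter_not _
  have cV : V.card + V'.card = (fs H1).card := card_filter_add_card_filter_not _
  have s1 : ∀ h ∈ H1, ∀ g, g + h ∈ C1 ↔ g ∈ C1 := fun h hh g => by
    rw [add_comm]; exact hh g
  have s2 : ∀ h ∈ H2, ∀ g, g + h ∈ C2 ↔ g ∈ C2 := fun h hh g => by
    rw [add_comm]; exact hh g
  have fib : ∀ (V U : Finset G), V ⊆ fs H1 → U ⊆ fs H2 → ∀ b : G,
      ((V ×ˢ U).filter fun z => x + z.1 + z.2 = b).card ≤ d := by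
    intro V U hV hU b
    rcases ((V ×ˢ U).filter fun z => x + z.1 + z.2 = b).eq_empty_or_nonempty with he | ⟨z0, hz0⟩
    · rw [he]; simp
    · apply card_le_card_of_injOn (fun z => z.1 - z0.1)
      · intro z hz
        simp only [coe_filter, mem_product, Set.mem_ofPred_eq] at hz
        simp only [mem_filter, mem_product] at hz0
        simp only [mem_coe, mem_fs]
        refine ⟨H1.sub_mem (by simpa using hV hz.1.1) (by simpa using hV hz0.1.1), ?_⟩
        have e : z.1 - z0.1 = z0.2 - z.2 := by
          have := hz.2.trans hz0.2.symm
          rw [add_assoc, add_assoc] at this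
          have := add_left_cancel this
          rw [sub_eq_sub_iff_add_eq_add, this, add_comm]
        rw [e]
        exact H2.sub_mem (by simpa using hU hz0.1.2) (by simpa using hU hz.1.2)
      · intro z hz z' hz' h
        simp only [coe_filter, mem_product, Set.mem_ofPred_eq] at hz hz'
        have h1 : z.1 = z'.1 := by simpa using h
        have h2 := hz.2.trans hz'.2.symm
        rw [h1] at h2
        exact Prod.ext h1 (add_left_cancel h2)
  have b1 : V.card * U.card ≤ d * (C2 \ C1).card := by
    rw [← card_product]
    apply card_le_mul_card_image_of_maps_to (f := fun z : G × G => x + z.1 + z.2)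
    · intro z hz
      simp only [hV, hU, mem_product, mem_filter, mem_fs] at hz
      rw [mem_sdiff]
      constructor
      · exact (s2 _ hz.2.1 _).2 hz.1.2
      · rw [add_right_comm, s1 _ hz.1.1]; exact hz.2.2
    · intro b _
      exact fib V U (filter_subset _ _) (filter_subset _ _) b
  have b2 : V'.card * U'.card ≤ d * (C1 \ C2).card := by
    rw [← card_product]
    apply card_le_mul_card_image_of_maps_to (f := fun z : G × G => x + z.1 + z.2)
    · intro z hz
      simp only [hV', hU', mem_product, mem_filter, mem_fs, not_not] at hz
      rw [mem_sdiff]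
      constructor
      · rw [add_right_comm, s1 _ hz.1.1]; exact hz.2.2
      · rw [s2 _ hz.2.1]; exact hz.1.2
    · intro b _
      exact fib V' U' (filter_subset _ _) (filter_subset _ _) b
  have big : ∀ (W : Finset G) (w : G), (∀ h ∈ D, w + h ∈ W) → d ≤ W.card := by
    intro W w hw
    apply card_le_card_of_injOn (fun h => w + h)
    · intro h hh
      exact hw h (by simpa using hh)
    · intro a _ b _ h
      exact add_left_cancel h
  have dU : d ≤ U.card := big U 0 fun h hh => by
    simp only [hU, mem_filter, mem_fs, zero_add]
    exact ⟨hh.2, by rw [s1 _ hh.1]; exact hx1⟩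
  have dV : d ≤ V.card := big V 0 fun h hh => by
    simp only [hV, mem_filter, mem_fs, zero_add]
    exact ⟨hh.1, by rw [s2 _ hh.2]; exact hx2⟩
  have dU' : U'.card = 0 ∨ d ≤ U'.card := by
    rcases U'.eq_empty_or_nonempty with he | ⟨w, hw⟩
    · left; rw [he]; simp
    · right
      simp only [hU', mem_filter, mem_fs, not_not] at hw
      refine big U' w fun h hh => ?_
      simp only [hU', mem_filter, mem_fs, not_not]
      exact ⟨H2.add_mem hw.1 hh.2, by rw [← add_assoc, s1 _ hh.1]; exact hw.2⟩
  have dV' : V'.card = 0 ∨ d ≤ V'.card := by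
    rcases V'.eq_empty_or_nonempty with he | ⟨w, hw⟩
    · left; rw [he]; simp
    · right
      simp only [hV', mem_filter, mem_fs] at hw
      refine big V' w fun h hh => ?_
      simp only [hV', mem_filter, mem_fs]
      exact ⟨H1.add_mem hw.1 hh.1, by rw [← add_assoc, s2 _ hh.2]; exact hw.2⟩
  have d0 : 0 < d := fs_pos D
  generalize U.card = u at *
  generalize U'.card = u' at *
  generalize V.card = v at *
  generalize V'.card = v' at *
  rw [← cU, ← cV]
  generalize (C2 \ C1).card = a at *
  generalize (C1 \ C2).card = b at *
  clear_value d
  rcases dV' with h0 | hv'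
  · left
    subst h0
    have : d * v ≤ d * a := by nlinarith
    have := Nat.le_of_mul_le_mul_left this d0
    omega
  rcases dU' with h0 | hu'
  · right; right
    subst h0
    have : d * u ≤ d * a := by nlinarith
    have := Nat.le_of_mul_le_mul_left this d0
    omega
  by_contra hcon
  push Not at hcon
  obtain ⟨c1, c2, -⟩ := hcon
  zify at *
  have e1 : (d:ℤ) * (u + v - d) ≤ v * u := by nlinarith
  have e2 : (d:ℤ) * a < d * (v + v' - d) := by nlinarith
  have e3 : (d:ℤ) * (u + v - d) < d * (v + v' - d) := by linarith
  have e4 : (u:ℤ) < v' := by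
    have := lt_of_mul_lt_mul_left e3 d0.le
    linarith
  have e5 : (d:ℤ) * (u + u' - d) ≤ u * u' := by nlinarith
  have e6 : (u:ℤ) * u' ≤ v' * u' := by nlinarith
  have e7 : (d:ℤ) * b < d * (u + u' - d) := by nlinarith
  linarith

lemma kl (C1 C2 : Finset G) (n : ℕ) (h1 : n ≤ C1.card + (fs (stb C1)).card)
    (h2 : n ≤ C2.card + (fs (stb C2)).card) :
    n ≤ (C1 ∪ C2).card + (fs (stb (C1 ∪ C2))).card := by
  by_cases hs : C2 ⊆ C1
  · rw [union_eq_left.2 hs]; exact h1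
  by_cases hs' : C1 ⊆ C2
  · rw [union_eq_right.2 hs']; exact h2
  obtain ⟨x, hx2, hx1⟩ := not_subset.1 hs
  obtain ⟨y, hy1, hy2⟩ := not_subset.1 hs'
  have k1 := kl_half C1 C2 x hx2 hx1
  have k2 := kl_half C2 C1 y hy1 hy2
  rw [inf_comm] at k2
  have hD : (fs (stb C1 ⊓ stb C2)).card ≤ (fs (stb (C1 ∪ C2))).card := fs_mono (stb_union _ _)
  have e1 : (C1 ∪ C2).card = C1.card + (C2 \ C1).card := by
    rw [← card_union_of_disjoint disjoint_sdiff]; simp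
  have e2 : (C1 ∪ C2).card = C2.card + (C1 \ C2).card := by
    rw [← card_union_of_disjoint disjoint_sdiff, union_comm]; simp
  omega

/-! ### Kneser's theorem -/

lemma kneser_point (n : ℕ) : ∀ (A B : Finset G) (a b : G), B.card = n → a ∈ A → b ∈ B →
    ∃ C ⊆ A + B, a + b ∈ C ∧ A.card + B.card ≤ C.card + (fs (stb C)).card := by
  induction n using Nat.strong_induction_on with
  | _ n ih =>
  intro A B a b hn ha hb
  by_cases hall : ∀ e ∈ A, ∀ β ∈ B, β - b + e ∈ A
  · refine ⟨A.image (· + b), ?_, mem_image_of_mem _ ha, ?_⟩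
    · intro y hy
      obtain ⟨z, hz, rfl⟩ := mem_image.1 hy
      exact add_mem_add hz hb
    · rw [card_image_of_injective _ (add_left_injective b)]
      apply Nat.add_le_add_left
      apply card_le_card_of_injOn (fun β => β - b)
      · intro β hβ
        simp only [mem_coe, mem_fs]
        apply mem_stb_of_forall
        intro s hs
        obtain ⟨z, hz, rfl⟩ := mem_image.1 hs
        refine mem_image.2 ⟨β - b + z, hall z hz β hβ, by abel⟩
      · intro x _ y _ h
        simpa using h
  · push Not at hall
    obtain ⟨e, he, β, hβ, hne⟩ := hall
    set B1 := B.image (fun x => x - b + e) with hB1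
    have inj : Function.Injective (fun x : G => x - b + e) := fun x y h => by simpa using h
    set B' := B.filter (fun x => x - b + e ∈ A) with hB'
    have c1 : B'.card = (A ∩ B1).card := by
      rw [← card_image_of_injective B' inj]
      congr 1
      ext y
      simp only [hB', hB1, mem_image, mem_filter, mem_inter]
      constructor
      · rintro ⟨x, ⟨h1, h2⟩, rfl⟩
        exact ⟨h2, x, h1, rfl⟩
      · rintro ⟨h1, x, h2, rfl⟩
        exact ⟨x, ⟨h2, h1⟩, rfl⟩
    have c2 : (A ∪ B1).card + (A ∩ B1).card = A.card + B.card := by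
      rw [card_union_add_card_inter, hB1, card_image_of_injective _ inj]
    have lt : B'.card < n := by
      rw [← hn]
      apply card_lt_card
      refine ⟨filter_subset _ _, fun h => ?_⟩
      have := h hβ
      simp only [hB', mem_filter] at this
      exact hne this.2
    obtain ⟨C, hC, hmem, hcard⟩ := ih _ lt (A ∪ B1) B' a b rfl (mem_union_left _ ha)
      (by simp only [hB', mem_filter]; exact ⟨hb, by simpa using he⟩)
    refine ⟨C, hC.trans ?_, hmem, by omega⟩
    intro y hy
    obtain ⟨u, hu, v, hv, rfl⟩ := mem_add.1 hy
    simp only [hB', mem_filter] at hv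
    rcases mem_union.1 hu with h | h
    · exact add_mem_add h hv.1
    · obtain ⟨w, hw, rfl⟩ := mem_image.1 h
      refine mem_add.2 ⟨_, hv.2, w, hw, by abel⟩

lemma kl_biUnion {α : Type*} (S : Finset α) (hS : S.Nonempty) (C : α → Finset G) (n : ℕ)
    (h : ∀ i ∈ S, n ≤ (C i).card + (fs (stb (C i))).card) :
    n ≤ (S.biUnion C).card + (fs (stb (S.biUnion C))).card := by
  induction hS using Finset.Nonempty.cons_induction with
  | singleton a => simpa using h a (by simp)
  | cons a s ha hs ih =>
    rw [cons_eq_insert, biUnion_insert]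
    exact kl _ _ n (h a (by simp)) (ih fun i hi => h i (by simp [hi]))

theorem kneser (A B : Finset G) (hA : A.Nonempty) (hB : B.Nonempty) :
    A.card + B.card ≤ (A + B).card + (fs (stb (A + B))).card := by
  have key : ∀ z : G × G, ∃ C : Finset G, z ∈ A ×ˢ B → C ⊆ A + B ∧ z.1 + z.2 ∈ C ∧
      A.card + B.card ≤ C.card + (fs (stb C)).card := by
    intro z
    by_cases hz : z ∈ A ×ˢ B
    · rw [mem_product] at hz
      obtain ⟨C, h⟩ := kneser_point B.card A B z.1 z.2 rfl hz.1 hz.2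
      exact ⟨C, fun _ => h⟩
    · exact ⟨∅, fun h => absurd h hz⟩
  choose C hC using key
  have e : (A ×ˢ B).biUnion C = A + B := by
    apply Subset.antisymm
    · intro y hy
      obtain ⟨z, hz, hy⟩ := mem_biUnion.1 hy
      exact (hC z hz).1 hy
    · intro y hy
      obtain ⟨u, hu, v, hv, rfl⟩ := mem_add.1 hy
      have hz : (u, v) ∈ A ×ˢ B := by simp [hu, hv]
      exact mem_biUnion.2 ⟨(u, v), hz, (hC _ hz).2.1⟩
  rw [← e]
  exact kl_biUnion _ (hA.product hB) C _ fun i hi => (hC i hi).2.2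

/-- Kneser for hulls -/
theorem kneser_hull (A B : Finset G) (hA : A.Nonempty) (hB : B.Nonempty) (D : AddSubgroup G)
    (hD : stb (hull D (A + B)) ≤ D) :
    (hull D A).card + (hull D B).card ≤ (hull D (A + B)).card + (fs D).card := by
  have := kneser (hull D A) (hull D B) (hull_nonempty.2 hA) (hull_nonempty.2 hB)
  rw [hull_add_hull] at this
  exact this.trans (Nat.add_le_add_left (fs_mono hD) _)

lemma mem_fsum {ι : Type*} (I : Finset ι) (F : ι → Finset G) (x : G) :
    x ∈ ∑ k ∈ I, F k ↔ ∃ a : ι → G, (∀ k ∈ I, a k ∈ F k) ∧ ∑ k ∈ I, a k = x := by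
  induction I using Finset.induction_on generalizing x with
  | empty =>
    simp only [sum_empty, notMem_empty, false_implies, implies_true, true_and]
    rw [Finset.mem_zero]
    exact ⟨fun h => ⟨0, h.symm⟩, fun ⟨_, h⟩ => h.symm⟩
  | insert i s hi ih =>
    rw [sum_insert hi, mem_add]
    constructor
    · rintro ⟨y, hy, z, hz, rfl⟩
      obtain ⟨a, ha, rfl⟩ := (ih z).1 hz
      refine ⟨Function.update a i y, ?_, ?_⟩
      · intro k hk
        by_cases h : k = i
        · subst h; simpa using hy
        · rw [Function.update_of_ne h]
          exact ha k ((mem_insert.1 hk).resolve_left h)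
      · rw [sum_insert hi, Function.update_self]
        congr 1
        apply sum_congr rfl
        intro k hk
        rw [Function.update_of_ne]
        rintro rfl; exact hi hk
    · rintro ⟨a, ha, rfl⟩
      rw [sum_insert hi]
      exact ⟨_, ha i (mem_insert_self _ _), _,
        (ih _).2 ⟨a, fun k hk => ha k (mem_insert_of_mem hk), rfl⟩, rfl⟩

theorem kneser_multi {ι : Type*} (I : Finset ι) (F : ι → Finset G)
    (hF : ∀ k ∈ I, (F k).Nonempty) (D : AddSubgroup G) (hD : stb (hull D (∑ k ∈ I, F k)) ≤ D) :
    (∑ k ∈ I, (hull D (F k)).card) + (fs D).card ≤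
      (hull D (∑ k ∈ I, F k)).card + I.card * (fs D).card := by
  induction I using Finset.induction_on with
  | empty =>
    simp only [sum_empty, card_empty, zero_add, zero_mul, add_zero]
    rw [← card_hull_singleton D 0]
    rfl
  | insert a s ha ih =>
    rw [sum_insert ha] at hD ⊢
    rw [sum_insert ha, card_insert_of_notMem ha]
    have hs : stb (hull D (∑ k ∈ s, F k)) ≤ D := by
      refine le_trans ?_ hD
      rw [← add_hull]
      exact stb_le_stb_add' _ _
    have i1 := ih (fun k hk => hF k (mem_insert_of_mem hk)) hs
    have ne : (∑ k ∈ s, F k).Nonempty := by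
      choose! f hf using hF
      exact ⟨∑ k ∈ s, f k, (mem_fsum _ _ _).2 ⟨f, fun k hk => hf k (mem_insert_of_mem hk), rfl⟩⟩
    have i2 := kneser_hull (F a) (∑ k ∈ s, F k) (hF a (mem_insert_self _ _)) ne D hD
    rw [add_mul, one_mul]
    omega

lemma pigeon {K : AddSubgroup G} {a b : G} {P P' : Finset G} (hP : P ⊆ hull K {a})
    (hP' : P' ⊆ hull K {b}) (h : (fs K).card < P.card + P'.card) :
    hull K {a + b} ⊆ P + P' := by
  intro z hz
  rw [mem_hull_singleton] at hz
  set P1 := P'.image (fun y => z - y) with hP1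
  have c1 : P1.card = P'.card := card_image_of_injective _ (fun x y h => by simpa using h)
  have s1 : P1 ⊆ hull K {a} := by
    intro y hy
    obtain ⟨w, hw, rfl⟩ := mem_image.1 hy
    have := mem_hull_singleton.1 (hP' hw)
    rw [mem_hull_singleton]
    convert K.sub_mem hz this using 1
    abel
  have : (P ∩ P1).Nonempty := by
    rw [← card_pos]
    have h1 := card_union_add_card_inter P P1
    have h2 : (P ∪ P1).card ≤ (fs K).card := by
      rw [← card_hull_singleton K a]
      exact card_le_card (union_subset hP s1)
    omega
  obtain ⟨y, hy⟩ := this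
  obtain ⟨h1, h2⟩ := mem_inter.1 hy
  obtain ⟨w, hw, rfl⟩ := mem_image.1 h2
  exact mem_add.2 ⟨_, h1, w, hw, by abel⟩

lemma cross {K : AddSubgroup G} {a b : G} {P P' S S' : Finset G} (hP : P ⊆ hull K {a})
    (hP' : P' ⊆ hull K {b}) (hS : S ⊆ hull K {a}) (hS' : S' ⊆ hull K {b})
    (nP : P.Nonempty) (nP' : P'.Nonempty) (nS : S.Nonempty) (nS' : S'.Nonempty)
    (hZ : ¬ hull K {a + b} ⊆ (P + P') ∪ (S + S')) :
    P.card + P'.card + S.card + S'.card ≤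
      ((P + P') ∪ (S + S')).card + (fs (stb ((P + P') ∪ (S + S')))).card + (fs K).card := by
  have p1 : P.card + P'.card ≤ (fs K).card := by
    by_contra h
    exact hZ ((pigeon hP hP' (by omega)).trans subset_union_left)
  have p2 : S.card + S'.card ≤ (fs K).card := by
    by_contra h
    exact hZ ((pigeon hS hS' (by omega)).trans subset_union_right)
  have k1 := kneser P P' nP nP'
  have k2 := kneser S S' nS nS'
  have := kl (P + P') (S + S') (P.card + P'.card + S.card + S'.card - (fs K).card)
    (by omega) (by omega)
  omega

end basics
end DGM

namespace DGM
open Finset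
open scoped Classical Pointwise

lemma fs_lt {G : Type*} [AddCommGroup G] [Fintype G] {K M : AddSubgroup G} (h : K < M) :
    (fs K).card < (fs M).card := by
  apply card_lt_card
  rw [ssubset_iff_subset_ne]
  refine ⟨fun g hg => by simpa using h.le (by simpa using hg), fun e => h.ne ?_⟩
  ext g
  rw [← mem_fs, e, mem_fs]

lemma descent {G : Type*} [AddCommGroup G] [Fintype G] (T C0 : Finset G) (K0 : AddSubgroup G)
    (v : AddSubgroup G → ℤ) (L c : ℤ) (hL : 1 ≤ L) (hC0 : C0 ⊆ T) (hK0 : K0 ≤ stb C0)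
    (hv0 : v K0 ≤ C0.card + (L - 1) * (fs K0).card + c)
    (mono : ∀ K K', K ≤ K' → v K ≤ v K')
    (step : ∀ K ≤ K0, ∀ x ∈ T, ¬ hull K {x} ⊆ T → Disjoint (hull K {x}) C0 →
      ∃ (X : Finset G) (K' : AddSubgroup G), X ⊆ T ∧ X ⊆ hull K {x} ∧ K' < K ∧ K' ≤ stb X ∧
        v K' + (L - 1) * ((fs K).card - (fs K').card) ≤ v K + X.card) :
    v ⊥ ≤ T.card + (L - 1) * (fs (stb T)).card + c := by
  have key : ∀ (n : ℕ) (K : AddSubgroup G) (C : Finset G), (fs K).card = n → K ≤ K0 →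
      C0 ⊆ C → C ⊆ T → K ≤ stb C → v K ≤ C.card + (L - 1) * (fs K).card + c →
      v ⊥ ≤ T.card + (L - 1) * (fs (stb T)).card + c := by
    intro n
    induction n using Nat.strong_induction_on with
    | _ n ih =>
      intro K C hn hK h1 h2 h3 h4
      by_cases hKT : K ≤ stb T
      · have a1 := mono ⊥ K bot_le
        have a2 : (C.card : ℤ) ≤ T.card := by exact_mod_cast card_le_card h2
        have a3 : ((fs K).card : ℤ) ≤ (fs (stb T)).card := by exact_mod_cast fs_mono hKT
        have a4 : 0 ≤ L - 1 := by linarith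
        have := mul_le_mul_of_nonneg_left a3 a4
        linarith
      · have : ∃ x ∈ T, ¬ hull K {x} ⊆ T := by
          by_contra hcon
          push Not at hcon
          apply hKT
          intro h hh
          apply mem_stb_of_forall
          intro s hs
          apply hcon s hs
          rw [mem_hull_singleton]
          simpa using hh
        obtain ⟨x, hx, hxT⟩ := this
        have dC : Disjoint (hull K {x}) C := by
          rw [Finset.disjoint_left]
          intro y hy hyC
          apply hxT
          refine subset_trans ?_ h2
          rw [mem_hull_singleton] at hy
          have : x ∈ C := by
            have := (h3 hy y).2 hyC
            simpa using this
          exact hull_singleton_subset h3 this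
        obtain ⟨X, K', x1, x2, x3, x4, x5⟩ := step K hK x hx hxT (disjoint_of_subset_right h1 dC)
        have dX : Disjoint C X := (disjoint_of_subset_left x2 dC).symm
        refine ih _ (hn ▸ fs_lt x3) K' (C ∪ X) rfl (x3.le.trans hK) (h1.trans subset_union_left)
          (union_subset h2 x1) ((le_inf (x3.le.trans h3) x4).trans (stb_union _ _)) ?_
        rw [card_union_of_disjoint dX]
        push_cast
        linarith
  exact key _ K0 C0 rfl le_rfl subset_rfl hC0 hK0 hv0

section colored
variable {G : Type*} [AddCommGroup G] [Fintype G] {J : Type*} [Fintype J] {ι : Type*} [Fintype ι]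

/-- colored restricted sums -/
noncomputable def Sums (A : J → ι → Finset G) (s : Multiset J) : Finset G :=
  univ.filter fun x => ∃ (I : Finset ι) (χ : ι → J) (a : ι → G),
    I.val.map χ = s ∧ (∀ k ∈ I, a k ∈ A (χ k) k) ∧ ∑ k ∈ I, a k = x

lemma mem_Sums {A : J → ι → Finset G} {s : Multiset J} {x : G} :
    x ∈ Sums A s ↔ ∃ (I : Finset ι) (χ : ι → J) (a : ι → G),
    I.val.map χ = s ∧ (∀ k ∈ I, a k ∈ A (χ k) k) ∧ ∑ k ∈ I, a k = x := by
  simp [Sums]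

lemma mem_Sums_perm {A : J → ι → Finset G} {s : Multiset J} (σ : Equiv.Perm ι)
    (I : Finset ι) (χ : ι → J) (a : ι → G) (h1 : I.val.map χ = s)
    (h2 : ∀ k ∈ I, a k ∈ A (χ k) (σ k)) : ∑ k ∈ I, a k ∈ Sums A s := by
  rw [mem_Sums]
  refine ⟨I.map σ.toEmbedding, χ ∘ σ.symm, a ∘ σ.symm, ?_, ?_, ?_⟩
  · rw [← h1, Finset.map_val, Multiset.map_map]
    apply Multiset.map_congr rfl
    intro k _
    simp
  · intro k hk
    obtain ⟨i, hi, rfl⟩ := Finset.mem_map.1 hk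
    simpa using h2 i hi
  · simp

/-- degree -/
noncomputable def deg (K : AddSubgroup G) (B : ι → Finset G) (g : G) : ℕ :=
  (univ.filter fun k => g ∈ hull K (B k)).card

/-- number of nonempty members -/
noncomputable def nz (B : ι → Finset G) : ℕ := (univ.filter fun k => (B k).Nonempty).card

/-- the weight -/
noncomputable def wt (L : ℕ) (M K : AddSubgroup G) (A : J → ι → Finset G) : ℕ :=
  ∑ j, ∑ g ∈ fs M, min L (deg K (A j) g)

/-- the constant -/
noncomputable def cst (L : ℕ) (A : J → ι → Finset G) : ℕ := ∑ j, min L (nz (A j))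

/-- the bound to be proved -/
def Bound (L : ℕ) (M : AddSubgroup G) (A : J → ι → Finset G) (s : Multiset J) : Prop :=
  (wt L M ⊥ A : ℤ) + L * (fs M).card ≤ (Sums A s).card +
    ((L : ℤ) - 1) * (fs (stb (Sums A s))).card + (fs M).card * cst L A

lemma deg_mono {K K' : AddSubgroup G} (h : K ≤ K') (B : ι → Finset G) (g : G) :
    deg K B g ≤ deg K' B g := by
  apply card_le_card
  intro k
  simp only [mem_filter, mem_univ, true_and]
  exact fun hk => hull_mono_left h _ hk

lemma wt_mono (L : ℕ) (M : AddSubgroup G) {K K' : AddSubgroup G} (h : K ≤ K')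
    (A : J → ι → Finset G) : wt L M K A ≤ wt L M K' A := by
  apply sum_le_sum
  intro j _
  apply sum_le_sum
  intro g _
  exact min_le_min le_rfl (deg_mono h _ _)

lemma deg_hull (D : AddSubgroup G) (B : ι → Finset G) (g : G) :
    deg ⊥ (fun k => hull D (B k)) g = deg D B g := by
  simp [deg, hull_bot]

lemma wt_hull (L : ℕ) (M D : AddSubgroup G) (A : J → ι → Finset G) :
    wt L M ⊥ (fun j k => hull D (A j k)) = wt L M D A := by
  simp [wt, deg_hull]

lemma cst_hull (L : ℕ) (D : AddSubgroup G) (A : J → ι → Finset G) :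
    cst L (fun j k => hull D (A j k)) = cst L A := by
  simp [cst, nz, hull_nonempty]

lemma Sums_hull (D : AddSubgroup G) (A : J → ι → Finset G) (s : Multiset J) (hs : 1 ≤ s.card) :
    Sums (fun j k => hull D (A j k)) s = hull D (Sums A s) := by
  ext x
  constructor
  · rw [mem_Sums, mem_hull]
    rintro ⟨I, χ, a, h1, h2, rfl⟩
    have : ∀ k ∈ I, ∃ b, b ∈ A (χ k) k ∧ b - a k ∈ D := fun k hk => by
      obtain ⟨b, hb⟩ := mem_hull.1 (h2 k hk); exact ⟨b, hb⟩
    choose! b hb hb' using this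
    refine ⟨∑ k ∈ I, b k, mem_Sums.2 ⟨I, χ, b, h1, hb, rfl⟩, ?_⟩
    rw [← sum_sub_distrib]
    exact D.sum_mem hb'
  · rw [mem_Sums, mem_hull]
    rintro ⟨y, hy, hyx⟩
    obtain ⟨I, χ, a, h1, h2, rfl⟩ := mem_Sums.1 hy
    have hI : I.Nonempty := by
      rw [← card_pos]
      have : I.card = s.card := by rw [← h1]; simp
      omega
    obtain ⟨i, hi⟩ := hI
    refine ⟨I, χ, Function.update a i (a i - (∑ k ∈ I, a k - x)), h1, ?_, ?_⟩
    · intro k hk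
      by_cases h : k = i
      · subst h
        rw [Function.update_self, mem_hull]
        exact ⟨a k, h2 k hk, by simpa using hyx⟩
      · rw [Function.update_of_ne h]
        exact subset_hull _ _ (h2 k hk)
    · rw [sum_update_of_mem hi, sdiff_singleton_eq_erase]
      have := add_sum_erase I a hi
      rw [← this]
      abel

lemma hull_subset_fs {D M : AddSubgroup G} (h : D ≤ M) {B : Finset G} (hB : B ⊆ fs M) :
    hull D B ⊆ fs M := by
  intro g hg
  obtain ⟨a, ha, hag⟩ := mem_hull.1 hg
  have h1 := mem_fs.1 (hB ha)
  have h2 := h hag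
  rw [mem_fs]
  convert M.sub_mem h1 h2 using 1
  abel

lemma Sums_subset_fs {M : AddSubgroup G} {A : J → ι → Finset G} {s : Multiset J}
    (hA : ∀ j k, A j k ⊆ fs M) : Sums A s ⊆ fs M := by
  intro x hx
  obtain ⟨I, χ, a, h1, h2, rfl⟩ := mem_Sums.1 hx
  rw [mem_fs]
  exact M.sum_mem fun k hk => mem_fs.1 (hA _ _ (h2 k hk))

lemma hull_zero_eq (M : AddSubgroup G) : hull M {0} = fs M := by
  ext g
  rw [mem_hull_singleton, mem_fs]
  simp

lemma stb_le_of_subset_fs {M : AddSubgroup G} {X : Finset G} (hX : X ⊆ fs M) (hne : X.Nonempty) :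
    stb X ≤ M :=
  stb_le_of_subset (x := 0) (by rwa [hull_zero_eq]) hne

lemma Bound_hull_pos {L : ℕ} {M D : AddSubgroup G} {A : J → ι → Finset G} {s : Multiset J}
    (hs : s.card = L) (hL : 1 ≤ L) (h : Bound L M (fun j k => hull D (A j k)) s) :
    (wt L M D A : ℤ) + L * (fs M).card ≤ (hull D (Sums A s)).card +
    ((L : ℤ) - 1) * (fs (stb (hull D (Sums A s)))).card + (fs M).card * cst L A := by
  unfold Bound at h
  rwa [wt_hull, cst_hull, Sums_hull _ _ _ (by omega)] at h

lemma Sums_zero (A : J → ι → Finset G) (h : (Sums A 0).Nonempty) : Sums A 0 = {0} := by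
  have key : ∀ x ∈ Sums A 0, x = 0 := by
    intro x hx
    obtain ⟨I, χ, a, h1, h2, rfl⟩ := mem_Sums.1 hx
    have : I = ∅ := by
      rw [Multiset.map_eq_zero] at h1
      exact Finset.val_eq_zero.1 h1
    simp [this]
  exact Finset.eq_singleton_iff_nonempty_unique_mem.2 ⟨h, key⟩

lemma hull_form_zero {M D : AddSubgroup G} {A : J → ι → Finset G} (h : (Sums A 0).Nonempty) :
    (wt 0 M D A : ℤ) + (0 : ℕ) * (fs M).card ≤ (hull D (Sums A 0)).card +
    (((0 : ℕ) : ℤ) - 1) * (fs (stb (hull D (Sums A 0)))).card + (fs M).card * cst 0 A := by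
  rw [Sums_zero A h]
  have h1 : stb (hull D {0}) ≤ D := stb_le_of_subset (x := 0) subset_rfl (hull_nonempty.2 (by simp))
  have h2 := fs_mono h1
  have h3 := card_hull_singleton D 0
  simp only [wt, cst, Nat.zero_min, sum_const_zero]
  rw [h3]
  push_cast
  linarith [(by exact_mod_cast h2 : ((fs (stb (hull D {0}))).card : ℤ) ≤ (fs D).card)]

lemma Bound_zero {M : AddSubgroup G} {A : J → ι → Finset G} (h : (Sums A 0).Nonempty) :
    Bound 0 M A 0 := by
  have := hull_form_zero (M := M) (D := ⊥) h
  rwa [hull_bot] at this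

/-! ### Uncrossing -/

/-- uncrossing at `p`, `q` -/
noncomputable def unc (A : J → ι → Finset G) (p q : ι) : J → ι → Finset G := fun j k =>
  if k = p then A j p ∪ A j q else if k = q then A j p ∩ A j q else A j k

lemma unc_p (A : J → ι → Finset G) (p q : ι) (j : J) : unc A p q j p = A j p ∪ A j q := by
  simp [unc]

lemma unc_q (A : J → ι → Finset G) {p q : ι} (h : p ≠ q) (j : J) :
    unc A p q j q = A j p ∩ A j q := by
  simp [unc, h.symm]

lemma unc_ne (A : J → ι → Finset G) {p q k : ι} (h : k ≠ p) (h' : k ≠ q) (j : J) :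
    unc A p q j k = A j k := by
  simp [unc, h, h']

lemma Sums_unc (A : J → ι → Finset G) {p q : ι} (hpq : p ≠ q) (s : Multiset J) :
    Sums (unc A p q) s ⊆ Sums A s := by
  intro x hx
  obtain ⟨I, χ, a, h1, h2, rfl⟩ := mem_Sums.1 hx
  by_cases hp : p ∈ I → a p ∈ A (χ p) p
  · refine mem_Sums.2 ⟨I, χ, a, h1, ?_, rfl⟩
    intro k hk
    have hk2 := h2 k hk
    by_cases e1 : k = p
    · subst e1; exact hp hk
    by_cases e2 : k = q
    · subst e2; rw [unc_q A hpq] at hk2; exact (mem_inter.1 hk2).2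
    rwa [unc_ne A e1 e2] at hk2
  · push Not at hp
    refine mem_Sums_perm (Equiv.swap p q) I χ a h1 ?_
    intro k hk
    have hk2 := h2 k hk
    by_cases e1 : k = p
    · subst e1
      rw [unc_p] at hk2
      rw [Equiv.swap_apply_left]
      exact (mem_union.1 hk2).resolve_left hp.2
    by_cases e2 : k = q
    · subst e2; rw [unc_q A hpq] at hk2
      rw [Equiv.swap_apply_right]
      exact (mem_inter.1 hk2).1
    rw [Equiv.swap_apply_of_ne_of_ne e1 e2]
    rwa [unc_ne A e1 e2] at hk2

lemma card_pq {p q : ι} (hpq : p ≠ q) (P : ι → Prop) [DecidablePred P] :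
    (univ.filter P).card = (if P p then 1 else 0) + (if P q then 1 else 0) +
      (univ.filter fun k => k ≠ p ∧ k ≠ q ∧ P k).card := by
  rw [card_filter, card_filter, ← add_sum_erase _ _ (mem_univ p),
    ← add_sum_erase _ _ (mem_erase.2 ⟨hpq.symm, mem_univ q⟩), add_assoc]
  congr 2
  rw [← add_sum_erase _ (fun k => if k ≠ p ∧ k ≠ q ∧ P k then 1 else 0) (mem_univ p),
    ← add_sum_erase _ _ (mem_erase.2 ⟨hpq.symm, mem_univ q⟩)]
  simp only [ne_eq, not_true_eq_false, false_and, and_false, if_false, zero_add]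
  apply sum_congr rfl
  intro k hk
  simp only [mem_erase, mem_univ, and_true] at hk
  simp [hk.1, hk.2]

lemma deg_unc_bot (A : J → ι → Finset G) {p q : ι} (hpq : p ≠ q) (j : J) (g : G) :
    deg ⊥ (unc A p q j) g = deg ⊥ (A j) g := by
  unfold deg
  simp only [hull_bot]
  rw [card_pq hpq (fun k => g ∈ unc A p q j k), card_pq hpq (fun k => g ∈ A j k)]
  congr 1
  · rw [unc_p, unc_q A hpq]
    by_cases h1 : g ∈ A j p <;> by_cases h2 : g ∈ A j q <;> simp [h1, h2]
  · congr 1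
    apply filter_congr
    intro k _
    constructor
    · rintro ⟨a, b, c⟩; rw [unc_ne A a b] at c; exact ⟨a, b, c⟩
    · rintro ⟨a, b, c⟩; rw [unc_ne A a b]; exact ⟨a, b, c⟩

lemma wt_unc_bot (A : J → ι → Finset G) {p q : ι} (hpq : p ≠ q) (L : ℕ) (M : AddSubgroup G) :
    wt L M ⊥ (unc A p q) = wt L M ⊥ A := by
  simp only [wt, deg_unc_bot A hpq]

lemma nz_unc (A : J → ι → Finset G) {p q : ι} (hpq : p ≠ q) (j : J) :
    nz (unc A p q j) ≤ nz (A j) := by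
  unfold nz
  rw [card_pq hpq (fun k => (unc A p q j k).Nonempty), card_pq hpq (fun k => (A j k).Nonempty)]
  apply Nat.add_le_add
  · rw [unc_p, unc_q A hpq]
    by_cases h1 : (A j p).Nonempty
    · by_cases h2 : (A j q).Nonempty
      · simp only [h1, h2, if_true]; split_ifs <;> simp
      · rw [not_nonempty_iff_eq_empty] at h2
        simp [h1, h2]
    · rw [not_nonempty_iff_eq_empty] at h1
      simp [h1]
  · apply le_of_eq
    congr 1
    apply filter_congr
    intro k _
    constructor
    · rintro ⟨a, b, c⟩; rw [unc_ne A a b] at c; exact ⟨a, b, c⟩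
    · rintro ⟨a, b, c⟩; rw [unc_ne A a b]; exact ⟨a, b, c⟩

lemma cst_unc (A : J → ι → Finset G) {p q : ι} (hpq : p ≠ q) (L : ℕ) :
    cst L (unc A p q) ≤ cst L A :=
  sum_le_sum fun j _ => min_le_min le_rfl (nz_unc A hpq j)

lemma unc_subset_fs {M : AddSubgroup G} {A : J → ι → Finset G} (hA : ∀ j k, A j k ⊆ fs M)
    (p q : ι) (j : J) (k : ι) : unc A p q j k ⊆ fs M := by
  unfold unc
  split_ifs
  · exact union_subset (hA _ _) (hA _ _)
  · exact inter_subset_left.trans (hA _ _)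
  · exact hA _ _

end colored
end DGM

namespace DGM
open Finset
open scoped Classical Pointwise

section base
variable {G : Type*} [AddCommGroup G] [Fintype G] {J : Type*} [Fintype J] {ι : Type*} [Fintype ι]

lemma gain {K' K : AddSubgroup G} (h : K' ≤ K) {B : Finset G} {a : G} (ha : a ∈ B) :
    (hull K' B).card + (fs K).card ≤ (hull K B).card + (hull K' (B ∩ hull K {a})).card := by
  rw [← card_hull_singleton K a, ← card_union_add_card_inter]
  apply Nat.add_le_add
  · apply card_le_card
    apply union_subset (hull_mono_left h _)
    exact hull_mono_right _ (by simpa using ha)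
  · apply card_le_card
    intro g hg
    obtain ⟨h1, h2⟩ := mem_inter.1 hg
    obtain ⟨b, hb, hbg⟩ := mem_hull.1 h1
    refine mem_hull.2 ⟨b, mem_inter.2 ⟨hb, ?_⟩, hbg⟩
    rw [mem_hull_singleton] at h2 ⊢
    convert K.sub_mem h2 (h hbg) using 1
    abel

lemma dom_count {I0 : Finset ι} (P : ι → Prop) [DecidablePred P]
    (h : ∀ p ∈ I0, ∀ q ∉ I0, P q → P p) :
    min I0.card (univ.filter P).card = ∑ k ∈ I0, if P k then 1 else 0 := by
  rw [← card_filter]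
  by_cases hq : ∃ q ∉ I0, P q
  · obtain ⟨q, hq, hPq⟩ := hq
    have h1 : I0.filter P = I0 := filter_true_of_mem fun p hp => h p hp q hq hPq
    have h2 : I0.card ≤ (univ.filter P).card := by
      conv_lhs => rw [← h1]
      exact card_le_card (filter_subset_filter _ (subset_univ _))
    rw [h1, min_eq_left h2]
  · push Not at hq
    have h1 : univ.filter P = I0.filter P := by
      ext k
      simp only [mem_filter, mem_univ, true_and]
      exact ⟨fun hk => ⟨by by_contra hn; exact hq k hn hk, hk⟩, fun hk => hk.2⟩
    rw [h1, min_eq_right (card_filter_le _ _)]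

lemma wt_dom {I0 : Finset ι} {A : J → ι → Finset G} {M K : AddSubgroup G} (hKM : K ≤ M)
    (hA : ∀ j k, A j k ⊆ fs M) (dom : ∀ p ∈ I0, ∀ q ∉ I0, ∀ j, A j q ⊆ A j p) :
    wt I0.card M K A = ∑ k ∈ I0, ∑ j, (hull K (A j k)).card := by
  unfold wt deg
  rw [sum_comm (s := I0)]
  apply sum_congr rfl
  intro j _
  have : ∀ g ∈ fs M, min I0.card (univ.filter fun k => g ∈ hull K (A j k)).card =
      ∑ k ∈ I0, if g ∈ hull K (A j k) then 1 else 0 := fun g _ =>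
    dom_count _ fun p hp q hq hg => hull_mono_right _ (dom p hp q hq j) hg
  rw [sum_congr rfl this, sum_comm]
  apply sum_congr rfl
  intro k _
  rw [← card_filter]
  congr 1
  ext g
  simp only [mem_filter]
  exact ⟨fun h => h.2, fun h => ⟨hull_subset_fs hKM (hA j k) h, h⟩⟩

lemma cst_dom {I0 : Finset ι} {A : J → ι → Finset G}
    (dom : ∀ p ∈ I0, ∀ q ∉ I0, ∀ j, A j q ⊆ A j p) :
    cst I0.card A = ∑ k ∈ I0, ∑ j, if (A j k).Nonempty then 1 else 0 := by
  unfold cst nz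
  rw [sum_comm (s := I0)]
  apply sum_congr rfl
  intro j _
  exact dom_count _ fun p hp q hq hg => hg.mono (dom p hp q hq j)

lemma dom_exchange {I0 : Finset ι} {A : J → ι → Finset G} {s : Multiset J}
    (dom : ∀ p ∈ I0, ∀ q ∉ I0, ∀ j, A j q ⊆ A j p) (hs : I0.card = s.card) {x : G}
    (hx : x ∈ Sums A s) : ∃ (χ : ι → J) (a : ι → G),
    I0.val.map χ = s ∧ (∀ k ∈ I0, a k ∈ A (χ k) k) ∧ ∑ k ∈ I0, a k = x := by
  have key : ∀ (n : ℕ) (I : Finset ι) (χ : ι → J) (a : ι → G), (I \ I0).card = n →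
      I.val.map χ = s → (∀ k ∈ I, a k ∈ A (χ k) k) → ∑ k ∈ I, a k = x →
      ∃ (χ : ι → J) (a : ι → G),
      I0.val.map χ = s ∧ (∀ k ∈ I0, a k ∈ A (χ k) k) ∧ ∑ k ∈ I0, a k = x := by
    intro n
    induction n with
    | zero =>
      intro I χ a hn h1 h2 h3
      have hsub : I ⊆ I0 := by
        rw [card_eq_zero, sdiff_eq_empty_iff_subset] at hn
        exact hn
      have hI : I.card = s.card := by rw [← h1]; simp
      have : I = I0 := eq_of_subset_of_card_le hsub (by omega)
      subst this
      exact ⟨χ, a, h1, h2, h3⟩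
    | succ n ih =>
      intro I χ a hn h1 h2 h3
      have hI : I.card = s.card := by rw [← h1]; simp
      have hc : (I0 \ I).card = (I \ I0).card := card_sdiff_comm (by omega)
      obtain ⟨q, hq⟩ : (I \ I0).Nonempty := by rw [← card_pos]; omega
      obtain ⟨p, hp⟩ : (I0 \ I).Nonempty := by rw [← card_pos]; omega
      rw [mem_sdiff] at hq hp
      have hpq : p ≠ q := by rintro rfl; exact hp.2 hq.1
      set σ : Equiv.Perm ι := Equiv.swap p q with hσ
      have hmap : I.map σ.toEmbedding = insert p (I.erase q) := by
        ext k
        simp only [Finset.mem_map, Equiv.coe_toEmbedding, mem_insert, mem_erase]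
        constructor
        · rintro ⟨i, hi, rfl⟩
          by_cases e : i = q
          · left; rw [e, hσ, Equiv.swap_apply_right]
          · right
            have e2 : i ≠ p := by rintro rfl; exact hp.2 hi
            rw [hσ, Equiv.swap_apply_of_ne_of_ne e2 e]
            exact ⟨e, hi⟩
        · rintro (rfl | ⟨e, hk⟩)
          · exact ⟨q, hq.1, by rw [hσ, Equiv.swap_apply_right]⟩
          · have e2 : k ≠ p := by rintro rfl; exact hp.2 hk
            exact ⟨k, hk, by rw [hσ, Equiv.swap_apply_of_ne_of_ne e2 e]⟩
      refine ih (I.map σ.toEmbedding) (χ ∘ σ.symm) (a ∘ σ.symm) ?_ ?_ ?_ ?_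
      · have : I.map σ.toEmbedding \ I0 = (I \ I0).erase q := by
          rw [hmap]
          ext k
          simp only [mem_sdiff, mem_insert, mem_erase]
          constructor
          · rintro ⟨rfl | h, h'⟩
            · exact absurd hp.1 h'
            · exact ⟨h.1, h.2, h'⟩
          · rintro ⟨e1, e2, e3⟩
            exact ⟨Or.inr ⟨e1, e2⟩, e3⟩
        rw [this, card_erase_of_mem (mem_sdiff.2 hq), hn]
        simp
      · rw [← h1, Finset.map_val, Multiset.map_map]
        apply Multiset.map_congr rfl
        intro k _
        simp
      · intro k hk
        obtain ⟨i, hi, rfl⟩ := Finset.mem_map.1 hk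
        have hi2 := h2 i hi
        simp only [Equiv.coe_toEmbedding, Function.comp_apply, Equiv.symm_apply_apply]
        by_cases e : i = q
        · rw [e, hσ, Equiv.swap_apply_right]
          rw [e] at hi2
          exact dom p hp.1 q hq.2 _ hi2
        · have e2 : i ≠ p := by rintro rfl; exact hp.2 hi
          rwa [hσ, Equiv.swap_apply_of_ne_of_ne e2 e]
      · rw [← h3]; simp
  obtain ⟨I, χ, a, h1, h2, h3⟩ := mem_Sums.1 hx
  exact key _ I χ a rfl h1 h2 h3

lemma dom_case {I0 : Finset ι} {A : J → ι → Finset G} {s : Multiset J} {M : AddSubgroup G}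
    {L : ℕ} (hL : 1 ≤ L) (hI : I0.card = L) (χ0 : ι → J) (a0 : ι → G) (hs : I0.val.map χ0 = s)
    (ha0 : ∀ k ∈ I0, a0 k ∈ A (χ0 k) k)
    (hA : ∀ j k, A j k ⊆ fs M) (dom : ∀ p ∈ I0, ∀ q ∉ I0, ∀ j, A j q ⊆ A j p) :
    Bound L M A s := by
  have hsc : I0.card = s.card := by rw [← hs]; simp
  set T := Sums A s with hT
  have sub : ∀ (χ : ι → J) (F : ι → Finset G), I0.val.map χ = s →
      (∀ k ∈ I0, F k ⊆ A (χ k) k) → ∑ k ∈ I0, F k ⊆ T := by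
    intro χ F h1 h2 x hx
    obtain ⟨a, ha, rfl⟩ := (mem_fsum _ _ _).1 hx
    exact mem_Sums.2 ⟨I0, χ, a, h1, fun k hk => h2 k hk (ha k hk), rfl⟩
  set X0 := ∑ k ∈ I0, A (χ0 k) k with hX0
  have X0T : X0 ⊆ T := sub χ0 _ hs fun k _ => subset_rfl
  have X0n : X0.Nonempty := ⟨_, (mem_fsum _ _ _).2 ⟨a0, ha0, rfl⟩⟩
  have TM : T ⊆ fs M := Sums_subset_fs hA
  have K0M : stb X0 ≤ M := stb_le_of_subset_fs (X0T.trans TM) X0n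
  have main := descent T X0 (stb X0) (fun K => (wt L M K A : ℤ)) L
    ((fs M).card * cst L A - L * (fs M).card) (by exact_mod_cast hL) X0T le_rfl ?_ ?_ ?_
  · unfold Bound
    simp only [← hT]
    linarith
  · have k1 := kneser_multi I0 (fun k => A (χ0 k) k) (fun k hk => ⟨_, ha0 k hk⟩) (stb X0)
      (by rw [← hX0, hull_eq le_rfl])
    rw [← hX0, hull_eq le_rfl] at k1
    have w := wt_dom K0M hA dom
    have c := cst_dom dom
    have per : ∀ k ∈ I0, (∑ j, (hull (stb X0) (A j k)).card) + (fs M).card ≤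
        (hull (stb X0) (A (χ0 k) k)).card +
          (fs M).card * ∑ j, if (A j k).Nonempty then 1 else 0 := by
      intro k hk
      rw [← add_sum_erase _ _ (mem_univ (χ0 k)), ← add_sum_erase _ _ (mem_univ (χ0 k)),
        if_pos ⟨_, ha0 k hk⟩, mul_add, mul_one]
      have : ∑ j ∈ univ.erase (χ0 k), (hull (stb X0) (A j k)).card ≤
          (fs M).card * ∑ j ∈ univ.erase (χ0 k), if (A j k).Nonempty then 1 else 0 := by
        rw [mul_sum]
        apply sum_le_sum
        intro j _
        split_ifs with h
        · rw [mul_one]; exact card_le_card (hull_subset_fs K0M (hA j k))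
        · rw [not_nonempty_iff_eq_empty] at h
          simp [h, hull]
      omega
    have := sum_le_sum per
    rw [sum_add_distrib, sum_add_distrib, ← w, ← mul_sum, ← c, sum_const, smul_eq_mul, hI] at this
    rw [hI] at k1
    zify at this k1
    linarith
  · intro K K' h
    exact_mod_cast wt_mono L M h A
  · intro K hK x hx hxT _
    obtain ⟨χ, a, h1, h2, rfl⟩ := dom_exchange dom hsc hx
    set F : ι → Finset G := fun k => A (χ k) k ∩ hull K {a k} with hF
    have aF : ∀ k ∈ I0, a k ∈ F k := fun k hk =>
      mem_inter.2 ⟨h2 k hk, subset_hull _ _ (by simp)⟩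
    set X := ∑ k ∈ I0, F k with hX
    have xX : ∑ k ∈ I0, a k ∈ X := (mem_fsum _ _ _).2 ⟨a, aF, rfl⟩
    have XT : X ⊆ T := sub χ F h1 fun k _ => inter_subset_left
    have XK : X ⊆ hull K {∑ k ∈ I0, a k} := by
      intro y hy
      obtain ⟨b, hb, rfl⟩ := (mem_fsum _ _ _).1 hy
      rw [mem_hull_singleton, ← sum_sub_distrib]
      exact K.sum_mem fun k hk => mem_hull_singleton.1 (mem_inter.1 (hb k hk)).2
    have sK : stb X ≤ K := stb_le_of_subset XK ⟨_, xX⟩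
    have sKne : stb X ≠ K := by
      intro e
      exact hxT ((hull_singleton_subset e.ge xX).trans XT)
    refine ⟨X, stb X, XT, XK, lt_of_le_of_ne sK sKne, le_rfl, ?_⟩
    have k1 := kneser_multi I0 F (fun k hk => ⟨_, aF k hk⟩) (stb X)
      (by rw [← hX, hull_eq le_rfl])
    rw [← hX, hull_eq le_rfl] at k1
    have w := wt_dom (hK.trans K0M) hA dom
    have w' := wt_dom ((sK.trans hK).trans K0M) hA dom
    have per : ∀ k ∈ I0, (∑ j, (hull (stb X) (A j k)).card) + (fs K).card ≤
        (∑ j, (hull K (A j k)).card) + (hull (stb X) (F k)).card := by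
      intro k hk
      rw [← add_sum_erase _ _ (mem_univ (χ k)),
        ← add_sum_erase _ (fun j => (hull K (A j k)).card) (mem_univ (χ k))]
      have g := gain sK (h2 k hk)
      have : ∑ j ∈ univ.erase (χ k), (hull (stb X) (A j k)).card ≤
          ∑ j ∈ univ.erase (χ k), (hull K (A j k)).card :=
        sum_le_sum fun j _ => card_le_card (hull_mono_left sK _)
      simp only [hF]
      omega
    have := sum_le_sum per
    rw [sum_add_distrib, sum_add_distrib, ← w, ← w', sum_const, smul_eq_mul, hI] at this
    rw [hI] at k1
    zify at this k1
    have p := fs_pos K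
    zify at p
    linarith

end base
end DGM

namespace DGM
open Finset
open scoped Classical Pointwise

section step
variable {G : Type*} [AddCommGroup G] [Fintype G] {J : Type*} [Fintype J] {ι : Type*} [Fintype ι]

lemma sum_cosets (K : AddSubgroup G) (f : G → ℕ) :
    ∑ g, f g = ∑ Q : G ⧸ K, ∑ m ∈ fs K, f (Q.out + m) := by
  rw [← sum_fiberwise univ (fun g : G => (QuotientAddGroup.mk g : G ⧸ K)) f]
  apply sum_congr rfl
  intro Q _
  symm
  refine sum_bij' (fun m _ => Q.out + m) (fun g _ => - Q.out + g) ?_ ?_ ?_ ?_ ?_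
  · intro m hm
    simp only [mem_filter, mem_univ, true_and]
    rw [QuotientAddGroup.mk_add_of_mem _ (mem_fs.1 hm)]
    exact Quotient.out_eq' Q
  · intro g hg
    simp only [mem_filter, mem_univ, true_and] at hg
    rw [mem_fs, ← QuotientAddGroup.eq, hg]
    exact Quotient.out_eq' Q
  · intro m _; abel
  · intro m _; abel
  · intro m _; rfl

lemma wt_split {L : ℕ} {M K E : AddSubgroup G} {A : J → ι → Finset G} (hA : ∀ j k, A j k ⊆ fs M)
    (hE : E ≤ M) : wt L M E A =
      ∑ c : J × (G ⧸ K), ∑ m ∈ fs K, min L (deg E (A c.1) (c.2.out + m)) := by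
  rw [Fintype.sum_prod_type]
  unfold wt
  apply sum_congr rfl
  intro j _
  rw [← sum_cosets K (fun g => min L (deg E (A j) g))]
  apply sum_subset (subset_univ _)
  intro g _ hg
  have : deg E (A j) g = 0 := by
    unfold deg
    rw [card_eq_zero, filter_eq_empty_iff]
    intro k _ hk
    exact hg (hull_subset_fs hE (hA j k) hk)
  simp [this]

lemma glue {A : J → ι → Finset G} {p q : ι} (hpq : p ≠ q) (σ : Equiv.Perm ι) (I : Finset ι)
    (χ : ι → J) (a : ι → G) (hp : p ∉ I) (hq : q ∉ I) (j1 j2 : J) (u w : G)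
    (hI : ∀ k ∈ I, a k ∈ A (χ k) (σ k)) (hu : u ∈ A j1 (σ p)) (hw : w ∈ A j2 (σ q)) :
    u + (w + ∑ k ∈ I, a k) ∈ Sums A (j1 ::ₘ j2 ::ₘ I.val.map χ) := by
  have hp' : p ∉ insert q I := by simp [hpq, hp]
  set χ' := Function.update (Function.update χ q j2) p j1 with hχ
  set a' := Function.update (Function.update a q w) p u with ha
  have cp : χ' p = j1 := by simp [hχ]
  have cq : χ' q = j2 := by simp [hχ, hpq.symm]
  have ck : ∀ k ∈ I, χ' k = χ k := by
    intro k hk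
    rw [hχ, Function.update_of_ne, Function.update_of_ne]
    · rintro rfl; exact hq hk
    · rintro rfl; exact hp hk
  have ap : a' p = u := by simp [ha]
  have aq : a' q = w := by simp [ha, hpq.symm]
  have ak : ∀ k ∈ I, a' k = a k := by
    intro k hk
    rw [ha, Function.update_of_ne, Function.update_of_ne]
    · rintro rfl; exact hq hk
    · rintro rfl; exact hp hk
  have e : u + (w + ∑ k ∈ I, a k) = ∑ k ∈ insert p (insert q I), a' k := by
    rw [sum_insert hp', sum_insert hq, ap, aq, sum_congr rfl ak]
  rw [e]
  apply mem_Sums_perm σ _ χ' a'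
  · rw [insert_val_of_notMem hp', insert_val_of_notMem hq, Multiset.map_cons, Multiset.map_cons,
      cp, cq, Multiset.map_congr rfl (fun k hk => ck k hk)]
  · intro k hk
    rcases mem_insert.1 hk with rfl | hk
    · rw [cp, ap]; exact hu
    rcases mem_insert.1 hk with rfl | hk
    · rw [cq, aq]; exact hw
    rw [ck k hk, ak k hk]; exact hI k hk

/-- residual family -/
noncomputable def res (A : J → ι → Finset G) (p q : ι) (K : AddSubgroup G) :
    J × (G ⧸ K) → ι → Finset G := fun c k =>
  if k = p ∨ k = q then ∅ else (fs K).filter fun m => c.2.out + m ∈ A c.1 k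

lemma res_ne (A : J → ι → Finset G) {p q k : ι} (h : k ≠ p) (h' : k ≠ q) (K : AddSubgroup G)
    (c : J × (G ⧸ K)) (m : G) : m ∈ res A p q K c k ↔ m ∈ K ∧ c.2.out + m ∈ A c.1 k := by
  simp [res, h, h']

lemma res_mem (A : J → ι → Finset G) {p q k : ι} (K : AddSubgroup G)
    (c : J × (G ⧸ K)) (m : G) (h : m ∈ res A p q K c k) :
    k ≠ p ∧ k ≠ q ∧ m ∈ K ∧ c.2.out + m ∈ A c.1 k := by
  by_cases h1 : k = p
  · simp [res, h1] at h
  by_cases h2 : k = q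
  · simp [res, h2] at h
  exact ⟨h1, h2, (res_ne A h1 h2 K c m).1 h⟩

lemma res_subset (A : J → ι → Finset G) (p q k : ι) (K : AddSubgroup G)
    (c : J × (G ⧸ K)) : res A p q K c k ⊆ fs K := fun m hm =>
  mem_fs.2 (res_mem A K c m hm).2.2.1

/-- residual degree -/
noncomputable def rdeg (A : J → ι → Finset G) (p q : ι) (E : AddSubgroup G) (j : J) (g : G) : ℕ :=
  (univ.filter fun k => k ≠ p ∧ k ≠ q ∧ g ∈ hull E (A j k)).card

lemma hull_res (A : J → ι → Finset G) {p q k : ι} {K E : AddSubgroup G} (hE : E ≤ K)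
    (c : J × (G ⧸ K)) {m : G} (hm : m ∈ K) :
    m ∈ hull E (res A p q K c k) ↔ k ≠ p ∧ k ≠ q ∧ c.2.out + m ∈ hull E (A c.1 k) := by
  rw [mem_hull]
  constructor
  · rintro ⟨b, hb, hbm⟩
    obtain ⟨h1, h2, h3, h4⟩ := res_mem A K c b hb
    refine ⟨h1, h2, mem_hull.2 ⟨_, h4, ?_⟩⟩
    rwa [add_sub_add_left_eq_sub]
  · rintro ⟨h1, h2, h3⟩
    obtain ⟨b, hb, hbm⟩ := mem_hull.1 h3
    refine ⟨b - c.2.out, (res_ne A h1 h2 K c _).2 ⟨?_, ?_⟩, ?_⟩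
    · have := K.add_mem (hE hbm) hm
      convert this using 1
      abel
    · rwa [add_sub_cancel]
    · convert hbm using 1
      abel

lemma deg_res (A : J → ι → Finset G) {p q : ι} {K E : AddSubgroup G} (hE : E ≤ K)
    (c : J × (G ⧸ K)) {m : G} (hm : m ∈ K) :
    deg E (res A p q K c) m = rdeg A p q E c.1 (c.2.out + m) := by
  unfold deg rdeg
  congr 1
  apply filter_congr
  intro k _
  exact hull_res A hE c hm

lemma cst_res (L : ℕ) (A : J → ι → Finset G) (p q : ι) (K : AddSubgroup G) :
    (fs K).card * cst L (res A p q K) = wt L K K (res A p q K) := by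
  unfold cst wt
  rw [mul_sum]
  apply sum_congr rfl
  intro c _
  have : ∀ m ∈ fs K, min L (deg K (res A p q K c) m) = min L (nz (res A p q K c)) := by
    intro m hm
    congr 1
    unfold deg nz
    congr 1
    apply filter_congr
    intro k _
    rw [← hull_nonempty (K := K)]
    refine ⟨fun h => ⟨_, h⟩, ?_⟩
    rintro ⟨y, hy⟩
    obtain ⟨b, hb, _⟩ := mem_hull.1 hy
    exact mem_hull.2 ⟨b, hb, K.sub_mem (mem_fs.1 (res_subset A p q k K c hb)) (mem_fs.1 hm)⟩
  rw [sum_congr rfl this, sum_const, smul_eq_mul]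

lemma rdeg_mono (A : J → ι → Finset G) (p q : ι) {E K : AddSubgroup G} (h : E ≤ K) (j : J)
    (g : G) : rdeg A p q E j g ≤ rdeg A p q K j g := by
  apply card_le_card
  intro k
  simp only [mem_filter, mem_univ, true_and]
  exact fun hk => ⟨hk.1, hk.2.1, hull_mono_left h _ hk.2.2⟩

lemma deg_unc_eq (A : J → ι → Finset G) {p q : ι} (hpq : p ≠ q) (E : AddSubgroup G) (j : J)
    (g : G) : deg E (unc A p q j) g =
      (if g ∈ hull E (A j p ∪ A j q) then 1 else 0) +
      (if g ∈ hull E (A j p ∩ A j q) then 1 else 0) + rdeg A p q E j g := by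
  unfold deg rdeg
  rw [card_pq hpq (fun k => g ∈ hull E (unc A p q j k)), unc_p, unc_q A hpq]
  congr 2
  apply filter_congr
  intro k _
  constructor
  · rintro ⟨a, b, c⟩; rw [unc_ne A a b] at c; exact ⟨a, b, c⟩
  · rintro ⟨a, b, c⟩; rw [unc_ne A a b]; exact ⟨a, b, c⟩

lemma deg_eq_pq (A : J → ι → Finset G) {p q : ι} (hpq : p ≠ q) (E : AddSubgroup G) (j : J)
    (g : G) : deg E (A j) g =
      (if g ∈ hull E (A j p) then 1 else 0) +
      (if g ∈ hull E (A j q) then 1 else 0) + rdeg A p q E j g := by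
  unfold deg rdeg
  rw [card_pq hpq (fun k => g ∈ hull E (A j k))]

lemma deg_unc_le (A : J → ι → Finset G) {p q : ι} (hpq : p ≠ q) (E : AddSubgroup G) (j : J)
    (g : G) : deg E (unc A p q j) g ≤ deg E (A j) g := by
  rw [deg_unc_eq A hpq, deg_eq_pq A hpq, hull_union]
  have h1 : g ∈ hull E (A j p ∩ A j q) → g ∈ hull E (A j p) := fun h =>
    hull_mono_right _ inter_subset_left h
  have h2 : g ∈ hull E (A j p ∩ A j q) → g ∈ hull E (A j q) := fun h =>
    hull_mono_right _ inter_subset_right h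
  simp only [mem_union]
  split_ifs <;> first | omega | (exfalso; tauto)

/-- the termwise inequality -/
lemma term_ineq (A : J → ι → Finset G) {p q : ι} (hpq : p ≠ q) {D K : AddSubgroup G} (hD : D ≤ K)
    {L : ℕ} (hL : 2 ≤ L) (j : J) (g : G) :
    min L (deg D (unc A p q j) g) + min (L - 2) (rdeg A p q K j g) ≤
      min L (deg K (unc A p q j) g) + min (L - 2) (rdeg A p q D j g) := by
  rw [deg_unc_eq A hpq, deg_unc_eq A hpq]
  have h0 := rdeg_mono A p q hD j g
  have h1 : g ∈ hull D (A j p ∪ A j q) → g ∈ hull K (A j p ∪ A j q) := fun h =>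
    hull_mono_left hD _ h
  have h2 : g ∈ hull D (A j p ∩ A j q) → g ∈ hull K (A j p ∩ A j q) := fun h =>
    hull_mono_left hD _ h
  have e1 : (if g ∈ hull D (A j p ∪ A j q) then 1 else 0) ≤
    (if g ∈ hull K (A j p ∪ A j q) then 1 else 0) := by split_ifs <;> first | omega | tauto
  have e2 : (if g ∈ hull D (A j p ∩ A j q) then 1 else 0) ≤
    (if g ∈ hull K (A j p ∩ A j q) then 1 else 0) := by split_ifs <;> first | omega | tauto
  have e3 : (if g ∈ hull K (A j p ∩ A j q) then 1 else 0) ≤ 1 := by split_ifs <;> omega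
  have e4 : (if g ∈ hull K (A j p ∪ A j q) then 1 else 0) ≤ 1 := by split_ifs <;> omega
  generalize (if g ∈ hull D (A j p ∪ A j q) then 1 else 0) = x1 at *
  generalize (if g ∈ hull K (A j p ∪ A j q) then 1 else 0) = x2 at *
  generalize (if g ∈ hull D (A j p ∩ A j q) then 1 else 0) = x3 at *
  generalize (if g ∈ hull K (A j p ∩ A j q) then 1 else 0) = x4 at *
  omega

/-- the termwise inequality for a small color -/
lemma term_ineq_small (A : J → ι → Finset G) {p q : ι} (hpq : p ≠ q) {D K : AddSubgroup G}
    (hD : D ≤ K) {L : ℕ} (hL : 2 ≤ L) (j : J) (g : G) (hsm : deg K (A j) g ≤ L)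
    (hK : g ∈ hull K (A j p ∪ A j q)) :
    min L (deg D (unc A p q j) g) + min (L - 2) (rdeg A p q K j g) +
      (if g ∈ hull D (A j p ∪ A j q) then 0 else 1) ≤
      min L (deg K (unc A p q j) g) + min (L - 2) (rdeg A p q D j g) := by
  split_ifs with h
  · exact term_ineq A hpq hD hL j g
  · have h3 := deg_unc_le A hpq K j g
    have h0 := rdeg_mono A p q hD j g
    have h4 : g ∉ hull D (A j p ∩ A j q) := fun h' =>
      h (hull_mono_right _ (inter_subset_left.trans subset_union_left) h')
    rw [deg_unc_eq A hpq] at h3 ⊢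
    rw [deg_unc_eq A hpq, if_neg h, if_neg h4]
    rw [if_pos hK] at h3 ⊢
    omega

end step
end DGM

namespace DGM
open Finset
open scoped Classical Pointwise

section step
variable {G : Type*} [AddCommGroup G] [Fintype G] {J : Type*} [Fintype J] {ι : Type*} [Fintype ι]

lemma sub_out (K : AddSubgroup G) (a : G) : a - (QuotientAddGroup.mk a : G ⧸ K).out ∈ K := by
  have : (QuotientAddGroup.mk ((QuotientAddGroup.mk a : G ⧸ K).out) : G ⧸ K) =
      QuotientAddGroup.mk a := Quotient.out_eq' _
  rw [QuotientAddGroup.eq] at this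
  convert this using 1
  abel

lemma mem_hull_coset {K : AddSubgroup G} {B : Finset G} {g g' : G} (h : g - g' ∈ K) :
    g ∈ hull K B ↔ g' ∈ hull K B := by
  have := le_stb_hull K B h g'
  rwa [sub_add_cancel] at this

lemma deg_coset {K : AddSubgroup G} (B : ι → Finset G) {g g' : G} (h : g - g' ∈ K) :
    deg K B g = deg K B g' := by
  unfold deg
  congr 1
  apply filter_congr
  intro k _
  exact mem_hull_coset h

lemma extras_sum {A : J → ι → Finset G} {p q : ι} (hpq : p ≠ q) {D K M : AddSubgroup G}
    (hD : D ≤ K) (hK : K ≤ M) (hA : ∀ j k, A j k ⊆ fs M) {L : ℕ} (hL : 2 ≤ L)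
    (C : Finset (J × (G ⧸ K)))
    (hC : ∀ c ∈ C, ∀ m ∈ fs K, deg K (A c.1) (c.2.out + m) ≤ L ∧
      c.2.out + m ∈ hull K (A c.1 p ∪ A c.1 q)) :
    wt L M D (unc A p q) + wt (L - 2) K K (res A p q K) +
      ∑ c ∈ C, ∑ m ∈ fs K, (if c.2.out + m ∈ hull D (A c.1 p ∪ A c.1 q) then 0 else 1) ≤
    wt L M K (unc A p q) + wt (L - 2) K D (res A p q K) := by
  rw [wt_split (K := K) (unc_subset_fs hA p q) (hD.trans hK),
    wt_split (K := K) (unc_subset_fs hA p q) hK]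
  have e1 : ∀ E ≤ K, wt (L - 2) K E (res A p q K) = ∑ c : J × (G ⧸ K), ∑ m ∈ fs K,
      min (L - 2) (rdeg A p q E c.1 (c.2.out + m)) := by
    intro E hE
    unfold wt
    apply sum_congr rfl
    intro c _
    apply sum_congr rfl
    intro m hm
    rw [deg_res A hE c (mem_fs.1 hm)]
  rw [e1 K le_rfl, e1 D hD]
  have e2 : ∑ c ∈ C, ∑ m ∈ fs K,
      (if c.2.out + m ∈ hull D (A c.1 p ∪ A c.1 q) then 0 else 1) =
      ∑ c : J × (G ⧸ K), ∑ m ∈ fs K, if c ∈ C then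
        (if c.2.out + m ∈ hull D (A c.1 p ∪ A c.1 q) then 0 else 1) else 0 := by
    rw [← sum_subset (subset_univ C)]
    · apply sum_congr rfl
      intro c hc
      simp only [hc, if_true]
    · intro c _ hc
      simp only [hc, if_false, sum_const_zero]
  rw [e2, ← sum_add_distrib, ← sum_add_distrib, ← sum_add_distrib]
  apply sum_le_sum
  intro c _
  rw [← sum_add_distrib, ← sum_add_distrib, ← sum_add_distrib]
  apply sum_le_sum
  intro m hm
  split_ifs with h1 h2
  · exact term_ineq A hpq hD hL _ _
  · have := term_ineq_small A hpq hD hL c.1 (c.2.out + m) (hC c h1 m hm).1 (hC c h1 m hm).2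
    rwa [if_neg h2] at this
  · exact term_ineq A hpq hD hL _ _

lemma extra_le {K D : AddSubgroup G} (hD : D ≤ K) (B1 B2 : Finset G) (a : G) :
    (fs K).card ≤ (∑ m ∈ fs K, if (QuotientAddGroup.mk a : G ⧸ K).out + m ∈ hull D (B1 ∪ B2)
      then 0 else 1) + (hull D ((B1 ∩ hull K {a}) ∪ (B2 ∩ hull K {a}))).card := by
  set t := (QuotientAddGroup.mk a : G ⧸ K).out with ht
  have hta : a - t ∈ K := sub_out K a
  have h1 : (fs K).card = ((fs K).filter fun m => ¬ t + m ∈ hull D (B1 ∪ B2)).card +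
      ((fs K).filter fun m => t + m ∈ hull D (B1 ∪ B2)).card := by
    rw [add_comm, card_filter_add_card_filter_not]
  have h2 : (∑ m ∈ fs K, if t + m ∈ hull D (B1 ∪ B2) then 0 else 1) =
      ((fs K).filter fun m => ¬ t + m ∈ hull D (B1 ∪ B2)).card := by
    rw [card_filter]
    apply sum_congr rfl
    intro m _
    split_ifs <;> rfl
  rw [h2, h1]
  apply Nat.add_le_add_left
  apply card_le_card_of_injOn (fun m => t + m)
  · intro m hm
    have hm' := mem_filter.1 (mem_coe.1 hm)
    obtain ⟨b, hb, hbm⟩ := mem_hull.1 hm'.2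
    rw [mem_coe]
    refine mem_hull.2 ⟨b, ?_, hbm⟩
    have : b ∈ hull K {a} := by
      rw [mem_hull_singleton]
      have := K.sub_mem (K.sub_mem hta (mem_fs.1 hm'.1)) (hD hbm)
      convert this using 1
      abel
    rw [← union_inter_distrib_right]
    exact mem_inter.2 ⟨hb, this⟩
  · intro m _ m' _ h
    exact add_left_cancel h

end step
end DGM

namespace DGM
open Finset
open scoped Classical Pointwise

section step
variable {G : Type*} [AddCommGroup G] [Fintype G] {J : Type*} [Fintype J] {ι : Type*} [Fintype ι]

lemma pq_struct {A : J → ι → Finset G} {p q : ι} (hpq : p ≠ q) {K : AddSubgroup G}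
    {s : Multiset J} {I : Finset ι} {χ : ι → J} {a : ι → G} (hI : I.val.map χ = s)
    (ha : ∀ k ∈ I, a k ∈ A (χ k) k)
    (hdis : Disjoint (hull K {∑ k ∈ I, a k}) (Sums (unc A p q) s)) :
    p ∈ I ∧ q ∈ I ∧ deg K (A (χ p)) (a p) ≤ s.card ∧ deg K (A (χ q)) (a q) ≤ s.card := by
  have hcard : I.card = s.card := by rw [← hI]; simp
  have no : ∀ y, ∑ k ∈ I, a k - y ∈ K → y ∉ Sums (unc A p q) s := fun y hy hy' =>
    (Finset.disjoint_left.1 hdis) (mem_hull_singleton.2 hy) hy'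
  have hp : p ∈ I := by
    by_contra hp
    apply no (∑ k ∈ I, a k) (by simp)
    apply mem_Sums_perm (Equiv.swap p q) I χ a hI
    intro k hk
    have hk2 := ha k hk
    have e1 : k ≠ p := by rintro rfl; exact hp hk
    by_cases e2 : k = q
    · subst e2
      rw [Equiv.swap_apply_right, unc_p]
      exact mem_union_right _ hk2
    · rwa [Equiv.swap_apply_of_ne_of_ne e1 e2, unc_ne A e1 e2]
  have hq : q ∈ I := by
    by_contra hq
    apply no (∑ k ∈ I, a k) (by simp)
    refine mem_Sums.2 ⟨I, χ, a, hI, ?_, rfl⟩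
    intro k hk
    have hk2 := ha k hk
    have e1 : k ≠ q := by rintro rfl; exact hq hk
    by_cases e2 : k = p
    · subst e2
      rw [unc_p]
      exact mem_union_left _ hk2
    · rwa [unc_ne A e2 e1]
  have ex : ∀ j g, ¬ deg K (A j) g ≤ s.card → ∃ r ∉ I, ∃ b ∈ A j r, b - g ∈ K := by
    intro j g h
    by_contra hcon
    push Not at hcon
    apply h
    rw [← hcard]
    apply card_le_card
    intro r hr
    by_contra hrI
    obtain ⟨b, hb, hbg⟩ := mem_hull.1 (mem_filter.1 hr).2
    exact hcon r hrI b hb hbg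
  refine ⟨hp, hq, ?_, ?_⟩
  · by_contra hdeg
    obtain ⟨r, hr, b, hb, hbg⟩ := ex _ _ hdeg
    have rp : r ≠ p := by rintro rfl; exact hr hp
    have rq : r ≠ q := by rintro rfl; exact hr hq
    refine no (∑ k ∈ I, Function.update a p b k) ?_
      (mem_Sums_perm (Equiv.swap r q * Equiv.swap p q) I χ _ hI ?_)
    · rw [sum_update_of_mem hp, sdiff_singleton_eq_erase, ← add_sum_erase I a hp]
      convert K.neg_mem hbg using 1
      abel
    · intro k hk
      rw [Equiv.Perm.mul_apply]
      by_cases e1 : k = p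
      · subst e1
        rw [Function.update_self, Equiv.swap_apply_left, Equiv.swap_apply_right,
          unc_ne A rp rq]
        exact hb
      rw [Function.update_of_ne e1]
      by_cases e2 : k = q
      · subst e2
        rw [Equiv.swap_apply_right, Equiv.swap_apply_of_ne_of_ne rp.symm hpq, unc_p]
        exact mem_union_right _ (ha k hk)
      have e3 : k ≠ r := by rintro rfl; exact hr hk
      rw [Equiv.swap_apply_of_ne_of_ne e1 e2, Equiv.swap_apply_of_ne_of_ne e3 e2,
        unc_ne A e1 e2]
      exact ha k hk
  · by_contra hdeg
    obtain ⟨r, hr, b, hb, hbg⟩ := ex _ _ hdeg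
    have rp : r ≠ p := by rintro rfl; exact hr hp
    have rq : r ≠ q := by rintro rfl; exact hr hq
    refine no (∑ k ∈ I, Function.update a q b k) ?_
      (mem_Sums_perm (Equiv.swap q r) I χ _ hI ?_)
    · rw [sum_update_of_mem hq, sdiff_singleton_eq_erase, ← add_sum_erase I a hq]
      convert K.neg_mem hbg using 1
      abel
    · intro k hk
      by_cases e1 : k = q
      · subst e1
        rw [Function.update_self, Equiv.swap_apply_left, unc_ne A rp rq]
        exact hb
      rw [Function.update_of_ne e1]
      have e3 : k ≠ r := by rintro rfl; exact hr hk
      rw [Equiv.swap_apply_of_ne_of_ne e1 e3]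
      by_cases e2 : k = p
      · subst e2
        rw [unc_p]
        exact mem_union_left _ (ha k hk)
      rw [unc_ne A e2 e1]
      exact ha k hk

lemma hull_empty (D : AddSubgroup G) : hull D (∅ : Finset G) = ∅ := by
  simp [hull]

lemma hull_subset_coset {D K : AddSubgroup G} (hD : D ≤ K) {a : G} {P : Finset G}
    (hP : P ⊆ hull K {a}) : hull D P ⊆ hull K {a} := by
  have h1 := (hull_mono_left hD P).trans (hull_mono_right K hP)
  rwa [hull_hull le_rfl] at h1

lemma count4 {K D : AddSubgroup G} (hD : D ≤ K) {a b : G} {P P' S S' : Finset G}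
    (hP : P ⊆ hull K {a}) (hP' : P' ⊆ hull K {b}) (hS : S ⊆ hull K {a}) (hS' : S' ⊆ hull K {b})
    (nP : P.Nonempty) (nP' : P'.Nonempty)
    (hst : stb (hull D ((P + P') ∪ (S + S'))) ≤ D)
    (hZ : ¬ hull K {a + b} ⊆ hull D ((P + P') ∪ (S + S'))) :
    (hull D (P ∪ S)).card + (hull D (P' ∪ S')).card ≤
      (fs K).card + (hull D ((P + P') ∪ (S + S'))).card + (fs D).card := by
  set Z := (P + P') ∪ (S + S') with hZdef
  have sub : hull D P + hull D P' ⊆ hull D Z := by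
    rw [hull_add_hull]
    exact hull_mono_right _ subset_union_left
  have c1 : (hull D P).card ≤ (hull D Z).card :=
    (card_le_card_add_right (hull_nonempty.2 nP')).trans (card_le_card sub)
  have c2 : (hull D P').card ≤ (hull D Z).card :=
    (card_le_card_add_left (hull_nonempty.2 nP)).trans (card_le_card sub)
  have b1 : (hull D (P ∪ S)).card ≤ (fs K).card := by
    rw [← card_hull_singleton K a]
    exact card_le_card (hull_subset_coset hD (union_subset hP hS))
  have b2 : (hull D (P' ∪ S')).card ≤ (fs K).card := by
    rw [← card_hull_singleton K b]
    exact card_le_card (hull_subset_coset hD (union_subset hP' hS'))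
  rcases S.eq_empty_or_nonempty with hSe | hSn
  · rw [hSe, union_empty]
    omega
  rcases S'.eq_empty_or_nonempty with hSe | hSn'
  · rw [hSe, union_empty]
    omega
  have hZe : (hull D P + hull D P') ∪ (hull D S + hull D S') = hull D Z := by
    rw [hull_add_hull, hull_add_hull, hZdef, hull_union]
  have := cross (hull_subset_coset hD hP) (hull_subset_coset hD hP') (hull_subset_coset hD hS)
    (hull_subset_coset hD hS') (hull_nonempty.2 nP) (hull_nonempty.2 nP') (hull_nonempty.2 hSn)
    (hull_nonempty.2 hSn') (by rwa [hZe])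
  rw [hZe] at this
  have h3 := fs_mono hst
  rw [hull_union, hull_union]
  have h4 := card_union_le (hull D P) (hull D S)
  have h5 := card_union_le (hull D P') (hull D S')
  omega

end step
end DGM

namespace DGM
open Finset
open scoped Classical Pointwise

section step
variable {G : Type*} [AddCommGroup G] [Fintype G] {J : Type*} [Fintype J] {ι : Type*} [Fintype ι]

lemma hull_form {L : ℕ} {M D : AddSubgroup G} {A : J → ι → Finset G} {s : Multiset J}
    (hs : s.card = L) (hne : (Sums A s).Nonempty)
    (h : (Sums (fun j k => hull D (A j k)) s).Nonempty →
      Bound L M (fun j k => hull D (A j k)) s) :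
    (wt L M D A : ℤ) + L * (fs M).card ≤ (hull D (Sums A s)).card +
    ((L : ℤ) - 1) * (fs (stb (hull D (Sums A s)))).card + (fs M).card * cst L A := by
  rcases Nat.eq_zero_or_pos L with h0 | h0
  · subst h0
    rw [Multiset.card_eq_zero] at hs
    subst hs
    exact hull_form_zero hne
  · apply Bound_hull_pos hs h0
    apply h
    rw [Sums_hull _ _ _ (by omega)]
    exact hull_nonempty.2 hne

lemma pq_step {A : J → ι → Finset G} {p q : ι} (hpq : p ≠ q) {K M : AddSubgroup G}
    {s : Multiset J} {L : ℕ} (hs : s.card = L) (hKM : K ≤ M) (hA : ∀ j k, A j k ⊆ fs M)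
    (hCT : ∀ (B : J × (G ⧸ K) → ι → Finset G) (s' : Multiset (J × (G ⧸ K))), s'.card = L - 2 →
      2 ≤ L → (∀ j k, B j k ⊆ fs K) → (Sums B s').Nonempty → Bound (L - 2) K B s')
    {x : G} (hx : x ∈ Sums A s) (hxT : ¬ hull K {x} ⊆ Sums A s)
    (hdis : Disjoint (hull K {x}) (Sums (unc A p q) s)) :
    ∃ (X : Finset G) (K' : AddSubgroup G), X ⊆ Sums A s ∧ X ⊆ hull K {x} ∧ K' < K ∧
      K' ≤ stb X ∧ (wt L M K' (unc A p q) : ℤ) + ((L : ℤ) - 1) * ((fs K).card - (fs K').card) ≤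
        wt L M K (unc A p q) + X.card := by
  obtain ⟨I, χ, a, hI, ha, rfl⟩ := mem_Sums.1 hx
  obtain ⟨hp, hq, dp, dq⟩ := pq_struct hpq hI ha hdis
  rw [hs] at dp dq
  have hcard : I.card = L := by rw [← hs, ← hI]; simp
  set I1 := (I.erase p).erase q with hI1
  have pI1 : p ∉ I1 := by simp [hI1]
  have qI1 : q ∉ I1 := by simp [hI1]
  have I1I : I1 ⊆ I := (erase_subset _ _).trans (erase_subset _ _)
  have hq' : q ∈ I.erase p := mem_erase.2 ⟨hpq.symm, hq⟩
  have cI1 : I1.card + 2 = L := by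
    have h1 := card_erase_add_one hq'
    have h2 := card_erase_add_one hp
    rw [← hI1] at h1
    omega
  have hL : 2 ≤ L := by omega
  have sumI : ∀ f : ι → G, ∑ k ∈ I, f k = f p + (f q + ∑ k ∈ I1, f k) := by
    intro f
    rw [← add_sum_erase I f hp, ← add_sum_erase _ f hq']
  have hIval : s = χ p ::ₘ χ q ::ₘ I1.val.map χ := by
    rw [← hI, ← insert_erase hp, insert_val_of_notMem (by simp), ← insert_erase hq',
      insert_val_of_notMem (by simp), Multiset.map_cons, Multiset.map_cons]
  set c : ι → J × (G ⧸ K) := fun k => (χ k, QuotientAddGroup.mk (a k)) with hc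
  set s' := I1.val.map c with hs'
  have cs' : s'.card = L - 2 := by
    rw [hs', Multiset.card_map]
    change I1.card = L - 2
    omega
  set B := res A p q K with hB
  set Y := Sums B s' with hY
  set τ := ∑ k ∈ I1, (c k).2.out with hτ
  have hout : ∀ k, a k - (c k).2.out ∈ K := fun k => sub_out K (a k)
  have y0 : ∑ k ∈ I1, (a k - (c k).2.out) ∈ Y := by
    refine mem_Sums.2 ⟨I1, c, _, rfl, ?_, rfl⟩
    intro k hk
    have e1 : k ≠ p := by rintro rfl; exact pI1 hk
    have e2 : k ≠ q := by rintro rfl; exact qI1 hk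
    refine (res_ne A e1 e2 K _ _).2 ⟨hout k, ?_⟩
    rw [add_sub_cancel]
    exact ha k (I1I hk)
  have Yn : Y.Nonempty := ⟨_, y0⟩
  have YK : Y ⊆ fs K := Sums_subset_fs (fun j k => res_subset A p q k K j)
  set P := A (χ p) p ∩ hull K {a p} with hP
  set P' := A (χ q) q ∩ hull K {a q} with hP'
  set S := A (χ p) q ∩ hull K {a p} with hS
  set S' := A (χ q) p ∩ hull K {a q} with hS'
  set Z := (P + P') ∪ (S + S') with hZ
  have apP : a p ∈ P := mem_inter.2 ⟨ha p hp, subset_hull _ _ (by simp)⟩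
  have aqP' : a q ∈ P' := mem_inter.2 ⟨ha q hq, subset_hull _ _ (by simp)⟩
  have z0 : a p + a q ∈ Z := mem_union_left _ (add_mem_add apP aqP')
  have Zn : Z.Nonempty := ⟨_, z0⟩
  have ZK : Z ⊆ hull K {a p + a q} := by
    have e : hull K {a p} + hull K {a q} = hull K {a p + a q} := by
      rw [hull_add_hull, singleton_add_singleton]
    rw [← e]
    exact union_subset (add_subset_add inter_subset_right inter_subset_right)
      (add_subset_add inter_subset_right inter_subset_right)
  set W := Y + Z with hW
  set X := {τ} + W with hX
  have xX : ∑ k ∈ I, a k ∈ X := by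
    have : ∑ k ∈ I, a k = τ + (∑ k ∈ I1, (a k - (c k).2.out) + (a p + a q)) := by
      rw [sumI a, sum_sub_distrib, ← hτ]
      abel
    rw [this]
    exact add_mem_add (mem_singleton_self _) (add_mem_add y0 z0)
  have XT : X ⊆ Sums A s := by
    intro w hw
    obtain ⟨t, ht, w', hw', rfl⟩ := mem_add.1 hw
    rw [mem_singleton] at ht
    subst ht
    obtain ⟨y, hy, z, hz, rfl⟩ := mem_add.1 hw'
    obtain ⟨I', c', b, h1, h2, rfl⟩ := mem_Sums.1 hy
    have h2' := fun k hk => res_mem A K (c' k) (b k) (h2 k hk)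
    have pI' : p ∉ I' := fun h => (h2' p h).1 rfl
    have qI' : q ∉ I' := fun h => (h2' q h).2.1 rfl
    have e1 : I'.val.map (fun k => (c' k).1) = I1.val.map χ := by
      have := congrArg (Multiset.map Prod.fst) h1
      rw [hs', Multiset.map_map, Multiset.map_map] at this
      exact this
    have e2 : ∑ k ∈ I', (c' k).2.out = τ := by
      have := congrArg (fun u => (Multiset.map (fun d : J × (G ⧸ K) => d.2.out) u).sum) h1
      simp only [hs', Multiset.map_map] at this
      exact this
    rw [hIval, ← e1]
    rcases mem_union.1 hz with hz | hz
    · obtain ⟨u, hu, v, hv, rfl⟩ := mem_add.1 hz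
      have := glue (A := A) hpq (Equiv.refl ι) I' (fun k => (c' k).1)
        (fun k => (c' k).2.out + b k) pI' qI' (χ p) (χ q) u v (fun k hk => (h2' k hk).2.2.2)
        (mem_inter.1 hu).1 (mem_inter.1 hv).1
      convert this using 1
      rw [sum_add_distrib, e2]
      abel
    · obtain ⟨u, hu, v, hv, rfl⟩ := mem_add.1 hz
      have := glue (A := A) hpq (Equiv.swap p q) I' (fun k => (c' k).1)
        (fun k => (c' k).2.out + b k) pI' qI' (χ p) (χ q) u v ?_
        (by rw [Equiv.swap_apply_left]; exact (mem_inter.1 hu).1)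
        (by rw [Equiv.swap_apply_right]; exact (mem_inter.1 hv).1)
      · convert this using 1
        rw [sum_add_distrib, e2]
        abel
      · intro k hk
        rw [Equiv.swap_apply_of_ne_of_ne (h2' k hk).1 (h2' k hk).2.1]
        exact (h2' k hk).2.2.2
  have τK : ∑ k ∈ I1, a k - τ ∈ K := by
    rw [hτ, ← sum_sub_distrib]
    exact K.sum_mem fun k _ => hout k
  have XK : X ⊆ hull K {∑ k ∈ I, a k} := by
    intro w hw
    obtain ⟨t, ht, w', hw', rfl⟩ := mem_add.1 hw
    rw [mem_singleton] at ht
    subst ht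
    obtain ⟨y, hy, z, hz, rfl⟩ := mem_add.1 hw'
    rw [mem_hull_singleton, sumI a]
    have h1 := mem_fs.1 (YK hy)
    have h2 := mem_hull_singleton.1 (ZK hz)
    convert K.sub_mem (K.add_mem h2 τK) h1 using 1
    abel
  set D := stb W with hD
  have DX : D ≤ stb X := stb_le_stb_add' _ _
  have DK : D ≤ K := DX.trans (stb_le_of_subset XK ⟨_, xX⟩)
  have DneK : D ≠ K := by
    intro e
    exact hxT ((hull_singleton_subset (e.ge.trans DX) xX).trans XT)
  have cX : X.card = W.card := by rw [hX, card_singleton_add]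
  have hW1 : hull D W = W := hull_eq le_rfl
  have k1 := kneser_hull Y Z Yn Zn D (by rw [← hW, hW1])
  rw [← hW, hW1] at k1
  have E1 : stb (hull D Y) = D := by
    apply le_antisymm
    · calc stb (hull D Y) ≤ stb (hull D Y + Z) := stb_le_stb_add _ _
        _ = D := by rw [hull_add, ← hW, hW1]
    · exact le_stb_hull _ _
  have E2 : stb (hull D Z) ≤ D := by
    calc stb (hull D Z) ≤ stb (Y + hull D Z) := stb_le_stb_add' _ _
        _ = D := by rw [add_hull, ← hW, hW1]
  have k2 := hull_form (M := K) (D := D) cs' Yn (hCT (fun j k => hull D (B j k)) s' cs' hL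
    (fun j k => hull_subset_fs DK (res_subset A p q k K j)))
  rw [← hY, E1] at k2
  have k2' := cst_res (L - 2) A p q K
  rw [← hB] at k2'
  have notfull : ¬ hull K {a p + a q} ⊆ hull D Z := by
    intro hfull
    apply hxT
    refine subset_trans ?_ XT
    intro w hw
    have e : X = {τ} + (Y + hull D Z) := by rw [add_hull, ← hW, hW1]
    rw [e]
    rw [mem_hull_singleton, sumI a] at hw
    have hz : w - τ - ∑ k ∈ I1, (a k - (c k).2.out) ∈ hull K {a p + a q} := by
      rw [mem_hull_singleton, sum_sub_distrib, ← hτ]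
      convert hw using 1
      abel
    have := add_mem_add (mem_singleton_self τ) (add_mem_add y0 (hfull hz))
    convert this using 1
    abel
  have small : ∀ k, a k ∈ A (χ k) p ∪ A (χ k) q → deg K (A (χ k)) (a k) ≤ L →
      ∀ m ∈ fs K, deg K (A (c k).1) ((c k).2.out + m) ≤ L ∧
      (c k).2.out + m ∈ hull K (A (c k).1 p ∪ A (c k).1 q) := by
    intro k hk hd m hm
    have h1 : a k - ((c k).2.out + m) ∈ K := by
      convert K.sub_mem (hout k) (mem_fs.1 hm) using 1
      abel
    refine ⟨?_, mem_hull.2 ⟨a k, hk, h1⟩⟩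
    rw [← deg_coset _ h1]
    exact hd
  have smp := small p (mem_union_left _ (ha p hp)) dp
  have smq := small q (mem_union_right _ (ha q hq)) dq
  have xp := extra_le DK (A (χ p) p) (A (χ p) q) (a p)
  have xq := extra_le DK (A (χ q) q) (A (χ q) p) (a q)
  rw [← hP, ← hS] at xp
  rw [← hP', ← hS', union_comm (A (χ q) q)] at xq
  set ex : J × (G ⧸ K) → ℕ := fun c => ∑ m ∈ fs K,
    (if c.2.out + m ∈ hull D (A c.1 p ∪ A c.1 q) then 0 else 1) with hex
  change _ ≤ ex (c p) + _ at xp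
  change _ ≤ ex (c q) + _ at xq
  have k3 := extras_sum hpq DK hKM hA hL {c p, c q} (by
    intro d hd
    rcases mem_insert.1 hd with rfl | hd
    · exact smp
    · rw [mem_singleton.1 hd]; exact smq)
  change _ + ∑ d ∈ {c p, c q}, ex d ≤ _ at k3
  rw [← hB] at k3
  have k4 : (fs K).card ≤ ∑ d ∈ {c p, c q}, ex d + (hull D Z).card + (fs D).card := by
    by_cases hcc : c p = c q
    · rw [← hcc, pair_eq_singleton, sum_singleton]
      have h1 : χ p = χ q := congrArg Prod.fst hcc
      have h2 : (QuotientAddGroup.mk (a p) : G ⧸ K) = QuotientAddGroup.mk (a q) :=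
        congrArg Prod.snd hcc
      have h3 : hull K {a p} = hull K {a q} := by
        rw [QuotientAddGroup.eq] at h2
        ext g
        rw [mem_hull_singleton, mem_hull_singleton]
        constructor
        · intro h
          convert K.add_mem h h2 using 1
          abel
        · intro h
          convert K.sub_mem h h2 using 1
          abel
      have hSP : S = P' := by rw [hS, hP', h1, h3]
      have hSP' : S' = P := by rw [hS', hP, h1, h3]
      have hZP : Z = P + P' := by rw [hZ, hSP, hSP', add_comm P' P, union_self]
      have := kneser_hull P P' ⟨_, apP⟩ ⟨_, aqP'⟩ D (by rw [← hZP]; exact E2)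
      rw [← hZP] at this
      rw [hSP, hull_union] at xp
      have h5 := card_union_le (hull D P) (hull D P')
      omega
    · rw [sum_pair hcc]
      have := count4 DK (P := P) (P' := P') (S := S) (S' := S') (a := a p) (b := a q)
        inter_subset_right inter_subset_right inter_subset_right
        inter_subset_right ⟨_, apP⟩ ⟨_, aqP'⟩ E2 notfull
      rw [← hZ] at this
      omega
  refine ⟨X, D, XT, XK, lt_of_le_of_ne DK DneK, DX, ?_⟩
  rw [cX]
  obtain ⟨L', rfl⟩ : ∃ L', L = L' + 2 := ⟨L - 2, by omega⟩
  simp only [Nat.add_sub_cancel] at k2 k2' k3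
  zify at k1 k2' k3 k4
  rw [k2'] at k2
  push_cast
  nlinarith

end step
end DGM

namespace DGM
open Finset
open scoped Classical Pointwise

theorem CT {G : Type u} [AddCommGroup G] [Fintype G] {ι : Type v} [Fintype ι] (n : ℕ) :
    ∀ (J : Type u) [Fintype J] (M : AddSubgroup G) (A : J → ι → Finset G) (s : Multiset J),
      s.card = n → (∀ j k, A j k ⊆ fs M) → (Sums A s).Nonempty → Bound n M A s := by
  induction n using Nat.strong_induction_on with
  | _ n IH =>
  intro J _ M A0 s hs hA0 hne0
  rcases Nat.eq_zero_or_pos n with h0 | hn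
  · subst h0
    rw [Multiset.card_eq_zero] at hs
    subst hs
    exact Bound_zero hne0
  obtain ⟨x0, hx0⟩ := hne0
  obtain ⟨I0, χ0, a0, hI0, ha0, -⟩ := mem_Sums.1 hx0
  have cI0 : I0.card = n := by rw [← hs, ← hI0]; simp
  set pot : (J → ι → Finset G) → ℕ := fun A => ∑ k ∈ I0, ∑ j, (A j k).card with hpot
  set b0 : ℕ := ∑ k ∈ I0, ∑ j : J, Fintype.card G with hb0
  have pot_le : ∀ A, pot A ≤ b0 := fun A =>
    sum_le_sum fun k _ => sum_le_sum fun j _ => card_le_univ _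
  have key : ∀ (t N : ℕ) (A : J → ι → Finset G), (∀ j k, A j k ⊆ fs M) →
      (∀ k ∈ I0, a0 k ∈ A (χ0 k) k) → (Sums A s).card = t → b0 - pot A = N → Bound n M A s := by
    intro t
    induction t using Nat.strong_induction_on with
    | _ t iht =>
    intro N
    induction N using Nat.strong_induction_on with
    | _ N ihN =>
    intro A hA ha ht hN
    by_cases dom : ∀ p ∈ I0, ∀ q ∉ I0, ∀ j, A j q ⊆ A j p
    · exact dom_case hn cI0 χ0 a0 hI0 ha hA dom
    push Not at dom
    obtain ⟨p, hp, q, hq, j0, hj0⟩ := dom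
    have hpq : p ≠ q := by rintro rfl; exact hq hp
    set A' := unc A p q with hA'
    have grow : ∀ k ∈ I0, ∀ j, A j k ⊆ A' j k := by
      intro k hk j
      have e1 : k ≠ q := by rintro rfl; exact hq hk
      by_cases e2 : k = p
      · subst e2; rw [hA', unc_p]; exact subset_union_left
      · rw [hA', unc_ne A e2 e1]
    have hA'M := unc_subset_fs hA p q
    rw [← hA'] at hA'M
    have ha' : ∀ k ∈ I0, a0 k ∈ A' (χ0 k) k := fun k hk => grow k hk _ (ha k hk)
    have sub : Sums A' s ⊆ Sums A s := Sums_unc A hpq s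
    have ne' : (Sums A' s).Nonempty := ⟨_, mem_Sums.2 ⟨I0, χ0, a0, hI0, ha', rfl⟩⟩
    have w0 : wt n M ⊥ A' = wt n M ⊥ A := wt_unc_bot A hpq n M
    have c0 : cst n A' ≤ cst n A := cst_unc A hpq n
    have c1 : ((fs M).card : ℤ) * cst n A' ≤ (fs M).card * cst n A := by
      exact_mod_cast Nat.mul_le_mul_left _ c0
    by_cases hT : Sums A' s = Sums A s
    · have plt : pot A < pot A' := by
        apply sum_lt_sum
        · intro k hk
          exact sum_le_sum fun j _ => card_le_card (grow k hk j)
        · refine ⟨p, hp, sum_lt_sum (fun j _ => card_le_card (grow p hp j)) ⟨j0, mem_univ _, ?_⟩⟩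
          apply card_lt_card
          refine ⟨grow p hp j0, fun h => hj0 ?_⟩
          rw [hA', unc_p] at h
          exact subset_union_right.trans h
      have := pot_le A'
      have b := ihN (b0 - pot A') (by omega) A' hA'M ha' (by rw [hT, ht]) rfl
      unfold Bound at b ⊢
      rw [hT, w0] at b
      linarith
    · have lt : (Sums A' s).card < t := by
        rw [← ht]
        exact card_lt_card (Finset.ssubset_iff_subset_ne.2 ⟨sub, hT⟩)
      set K0 := stb (Sums A' s) with hK0
      have K0M : K0 ≤ M := stb_le_of_subset_fs (Sums_subset_fs hA'M) ne'
      have hSum : Sums (fun j k => hull K0 (A' j k)) s = Sums A' s := by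
        rw [Sums_hull _ _ _ (by omega), hull_eq le_rfl]
      have b := iht _ lt _ (fun j k => hull K0 (A' j k))
        (fun j k => hull_subset_fs K0M (hA'M j k)) (fun k hk => subset_hull _ _ (ha' k hk))
        (by rw [hSum]) rfl
      have b' := Bound_hull_pos hs hn b
      rw [hull_eq le_rfl, ← hK0] at b'
      have main := descent (Sums A s) (Sums A' s) K0 (fun K => (wt n M K A' : ℤ)) n
        ((fs M).card * cst n A - n * (fs M).card) (by exact_mod_cast hn) sub le_rfl
        (by linarith) (fun K K' h => by exact_mod_cast wt_mono n M h A') ?_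
      · unfold Bound
        simp only [w0] at main
        linarith
      · intro K hK x hx hxT hdis
        exact pq_step hpq hs (hK.trans K0M) hA
          (fun B s' h1 h2 h3 h4 => IH (n - 2) (by omega) _ K B s' h1 h3 h4) hx hxT hdis
  exact key _ _ A0 hA0 ha0 rfl rfl

theorem final {G : Type*} [AddCommGroup G] [Fintype G]
    (m l : ℕ) (hlm : l ≤ m) (A : Fin m → Finset G) (hA : ∀ i, (A i).Nonempty)
    (T : Set G)
    (hT : T = {g | ∃ (s : Finset (Fin m)) (f : Fin m → G),
      s.card = l ∧ (∀ i ∈ s, f i ∈ A i) ∧ ∑ i ∈ s, f i = g})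
    (H : AddSubgroup G)
    (hH : ∀ h : G, h ∈ H ↔ (h + ·) '' T = T)
    (hne : T.Nonempty) :
    (Nat.card T : ℤ) ≥ (Nat.card H : ℤ) *
      (1 - l + ∑ Q : G ⧸ H, min (l : ℤ)
        (Nat.card {i : Fin m // ∃ a ∈ A i, (QuotientAddGroup.mk a : G ⧸ H) = Q})) := by
  set B : PUnit → Fin m → Finset G := fun _ i => A i with hB
  set s : Multiset PUnit := Multiset.replicate l PUnit.unit with hs
  have cs : s.card = l := by simp [hs]
  have hF : ∀ x, x ∈ Sums B s ↔ x ∈ T := by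
    intro x
    rw [mem_Sums, hT]
    constructor
    · rintro ⟨I, χ, a, h1, h2, h3⟩
      refine ⟨I, a, ?_, h2, h3⟩
      rw [← cs, ← h1]; simp
    · rintro ⟨I, a, h1, h2, h3⟩
      refine ⟨I, fun _ => PUnit.unit, a, ?_, h2, h3⟩
      rw [Multiset.map_const', hs, ← h1]
      rfl
  have Fne : (Sums B s).Nonempty := by
    obtain ⟨x, hx⟩ := hne
    exact ⟨x, (hF x).2 hx⟩
  have hstb : stb (Sums B s) = H := by
    ext h
    rw [hH, mem_stb]
    simp only [hF]
    constructor
    · intro hh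
      ext y
      constructor
      · rintro ⟨z, hz, rfl⟩
        exact (hh z).2 hz
      · intro hy
        refine ⟨-h + y, (hh _).1 ?_, ?_⟩
        · simpa using hy
        · simp
    · intro hh z
      constructor
      · intro hz
        rw [← hh] at hz
        obtain ⟨w, hw, e⟩ := hz
        have := add_left_cancel e
        rwa [← this]
      · intro hz
        rw [← hh]
        exact ⟨z, hz, rfl⟩
  have b := hull_form (M := ⊤) (D := H) cs Fne (fun h => CT l PUnit ⊤ _ s cs
    (fun j k x _ => by simp) h)
  rw [hull_eq hstb.ge, hstb] at b
  have hcst : cst l B = l := by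
    have : nz (A) = m := by
      unfold nz
      rw [filter_true_of_mem fun i _ => hA i]
      simp
    simp [cst, hB, this, hlm]
  rw [hcst] at b
  have hwt : wt l ⊤ H B = (fs H).card * ∑ Q : G ⧸ H, min l
      (Nat.card {i : Fin m // ∃ a ∈ A i, (QuotientAddGroup.mk a : G ⧸ H) = Q}) := by
    rw [wt_split (K := H) (fun j k x _ => by simp) le_top, Fintype.sum_prod_type,
      Fintype.sum_unique, mul_sum]
    apply sum_congr rfl
    intro Q _
    rw [← smul_eq_mul, ← sum_const]
    apply sum_congr rfl
    intro g hg
    congr 1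
    rw [Nat.card_eq_fintype_card, Fintype.card_subtype]
    unfold deg
    congr 1
    apply filter_congr
    intro i _
    rw [mem_hull]
    refine exists_congr fun a => and_congr_right fun _ => ?_
    have e : (QuotientAddGroup.mk (Q.out + g) : G ⧸ H) = Q := by
      rw [QuotientAddGroup.mk_add_of_mem _ (mem_fs.1 hg)]
      exact Quotient.out_eq' Q
    conv_rhs => rw [← e]
    rw [eq_comm, QuotientAddGroup.eq, neg_add_eq_sub]
  have cT : Nat.card T = (Sums B s).card := by
    exact Nat.subtype_card _ hF
  have cH : Nat.card H = (fs H).card := by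
    exact Nat.subtype_card _ (fun x => mem_fs)
  rw [cT, cH]
  zify at hwt
  rw [hwt] at b
  nlinarith

end DGM

theorem devos_goddyn_mohar {G : Type*} [AddCommGroup G] [Fintype G] [DecidableEq G]
    (m l : ℕ) (hlm : l ≤ m) (A : Fin m → Finset G) (hA : ∀ i, (A i).Nonempty)
    (T : Set G)
    (hT : T = {g | ∃ (s : Finset (Fin m)) (f : Fin m → G),
      s.card = l ∧ (∀ i ∈ s, f i ∈ A i) ∧ ∑ i ∈ s, f i = g})
    (H : AddSubgroup G) [DecidablePred (· ∈ H)]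
    (hH : ∀ h : G, h ∈ H ↔ (h + ·) '' T = T)
    (hne : T.Nonempty) :
    (Nat.card T : ℤ) ≥ (Nat.card H : ℤ) *
      (1 - l + ∑ Q : G ⧸ H, min (l : ℤ)
        (Nat.card {i : Fin m // ∃ a ∈ A i, (QuotientAddGroup.mk a : G ⧸ H) = Q})) := by
  have := DGM.final m l hlm A hA T hT H hH hne
  convert this
end
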